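/- arXiv:1801.02856 — 3 statements merged into one kernel-verified Lean document; each statement's English description precedes it below -/
import Mathlib

section
/- Let a > 0, p ∈ ℝ, and C₀ > 0 be fixed. There exist constants M₁ > 0 and ω > 0 such that for every function c : [0,1]×[0,∞) → ℝ that is twice continuously differentiable with all partial derivatives up to order 2 bounded in absolute value by C₀, and every twice continuously differentiable function w : [0,1]×[0,∞) → ℝ satisfying ∂²_t w − a² ∂²_x w + c·w = 0 on (0,1)×(0,∞), w(0,t) = p·(∂_t w + a ∂_x w)(0,t) and (∂_t w + a ∂_x w)(1,t) = 0 for all t > 0, one has for every pair of nonnegative integers α, β with α + β ≤ 2 and every t ≥ 6/a: sup_{x∈[0,1]} |∂_x^α ∂_t^β w(x,t)| ≤ M₁ e^{ω t} · max{ (∫_0^1 [w(x,0)² + (∂_x w(x,0))²] dx)^{1/2}, (∫_0^1 (∂_t w(x,0))² dx)^{1/2} }. The constants M₁ and ω do not depend on t, on w, or on its initial data. -/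
/-- `∂ₓ^α ∂ₜ^β w` evaluated at `(x, t)`. -/
noncomputable def pdxt (w : ℝ → ℝ → ℝ) (α β : ℕ) (x t : ℝ) : ℝ :=
  iteratedDeriv α (fun y => iteratedDeriv β (w y) t) x

/-- partial derivative in the first variable -/
noncomputable def dX (F : ℝ × ℝ → ℝ) (z : ℝ × ℝ) : ℝ := fderiv ℝ F z (1, 0)

/-- partial derivative in the second variable -/
noncomputable def dT (F : ℝ × ℝ → ℝ) (z : ℝ × ℝ) : ℝ := fderiv ℝ F z (0, 1)

lemma contDiff_dX {F : ℝ × ℝ → ℝ} (hF : ContDiff ℝ 2 F) : ContDiff ℝ 1 (dX F) := by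
  have h := hF.fderiv_right (m := 1) (by norm_num)
  exact h.clm_apply contDiff_const

lemma contDiff_dT {F : ℝ × ℝ → ℝ} (hF : ContDiff ℝ 2 F) : ContDiff ℝ 1 (dT F) := by
  have h := hF.fderiv_right (m := 1) (by norm_num)
  exact h.clm_apply contDiff_const

lemma continuous_dX {F : ℝ × ℝ → ℝ} (hF : ContDiff ℝ 1 F) : Continuous (dX F) := by
  have h := hF.continuous_fderiv (by norm_num)
  exact h.clm_apply continuous_const

lemma continuous_dT {F : ℝ × ℝ → ℝ} (hF : ContDiff ℝ 1 F) : Continuous (dT F) := by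
  have h := hF.continuous_fderiv (by norm_num)
  exact h.clm_apply continuous_const

lemma cd_diff {F : ℝ × ℝ → ℝ} (hF : ContDiff ℝ 1 F) : Differentiable ℝ F :=
  hF.differentiable (by norm_num)

lemma cd_21 {F : ℝ × ℝ → ℝ} (hF : ContDiff ℝ 2 F) : ContDiff ℝ 1 F :=
  hF.of_le (by norm_num)

/-- chain rule along a curve -/
lemma hasDerivAt_curve {F : ℝ × ℝ → ℝ} (hF : ContDiff ℝ 1 F) {f g : ℝ → ℝ} {f' g' x : ℝ}
    (hf : HasDerivAt f f' x) (hg : HasDerivAt g g' x) :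
    HasDerivAt (fun y => F (f y, g y)) (f' * dX F (f x, g x) + g' * dT F (f x, g x)) x := by
  have h1 := ((cd_diff hF) (f x, g x)).hasFDerivAt
  have h2 := h1.comp_hasDerivAt x (hf.prodMk hg)
  have e : ((f', g') : ℝ × ℝ) = f' • ((1:ℝ), (0:ℝ)) + g' • ((0:ℝ), (1:ℝ)) := by ext <;> simp
  rw [e, map_add, map_smul, map_smul] at h2
  exact h2

lemma hasDerivAt_x {F : ℝ × ℝ → ℝ} (hF : ContDiff ℝ 1 F) (x t : ℝ) :
    HasDerivAt (fun y => F (y, t)) (dX F (x, t)) x := by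
  have h := hasDerivAt_curve hF (hasDerivAt_id x) (hasDerivAt_const x t)
  simpa using h

lemma hasDerivAt_t {F : ℝ × ℝ → ℝ} (hF : ContDiff ℝ 1 F) (x t : ℝ) :
    HasDerivAt (fun y => F (x, y)) (dT F (x, t)) t := by
  have h := hasDerivAt_curve hF (hasDerivAt_const t x) (hasDerivAt_id t)
  simpa using h

lemma hasDerivAt_line {F : ℝ × ℝ → ℝ} (hF : ContDiff ℝ 1 F) (s k x : ℝ) :
    HasDerivAt (fun y => F (y, s + k * y)) (dX F (x, s + k * x) + k * dT F (x, s + k * x)) x := by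
  have h := hasDerivAt_curve hF (hasDerivAt_id x)
    ((hasDerivAt_const x s).add ((hasDerivAt_id x).const_mul k))
  simpa using h

lemma dX_dT_comm {F : ℝ × ℝ → ℝ} (hF : ContDiff ℝ 2 F) (z : ℝ × ℝ) :
    dX (dT F) z = dT (dX F) z := by
  have hs : IsSymmSndFDerivAt ℝ F z :=
    hF.contDiffAt.isSymmSndFDerivAt (by simp [minSmoothness_of_isRCLikeNormedField])
  have hd : DifferentiableAt ℝ (fderiv ℝ F) z :=
    (hF.fderiv_right (m := 1) (by norm_num)).differentiable (by norm_num) z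
  have key : ∀ v e : ℝ × ℝ, fderiv ℝ (fun y => fderiv ℝ F y v) z e = fderiv ℝ (fderiv ℝ F) z e v := by
    intro v e
    have := (hd.hasFDerivAt.clm_apply (hasFDerivAt_const v z)).fderiv
    rw [this]; simp
  unfold dX dT
  rw [key, key]
  exact hs _ _

/-- uniqueness helpers for partial derivatives of combinations -/
lemma dX_add {F G : ℝ × ℝ → ℝ} (hF : ContDiff ℝ 1 F) (hG : ContDiff ℝ 1 G) (k : ℝ) (z : ℝ × ℝ) :
    dX (fun y => F y + k * G y) z = dX F z + k * dX G z := by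
  unfold dX
  rw [fderiv_fun_add ((cd_diff hF) z) (((cd_diff hG) z).const_mul k),
    fderiv_const_mul ((cd_diff hG) z)]
  simp

lemma dT_add {F G : ℝ × ℝ → ℝ} (hF : ContDiff ℝ 1 F) (hG : ContDiff ℝ 1 G) (k : ℝ) (z : ℝ × ℝ) :
    dT (fun y => F y + k * G y) z = dT F z + k * dT G z := by
  unfold dT
  rw [fderiv_fun_add ((cd_diff hF) z) (((cd_diff hG) z).const_mul k),
    fderiv_const_mul ((cd_diff hG) z)]
  simp

lemma dX_mul {F G : ℝ × ℝ → ℝ} (hF : ContDiff ℝ 1 F) (hG : ContDiff ℝ 1 G) (z : ℝ × ℝ) :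
    dX (fun y => F y * G y) z = dX F z * G z + F z * dX G z := by
  unfold dX
  rw [fderiv_fun_mul ((cd_diff hF) z) ((cd_diff hG) z)]
  simp; ring

lemma dT_mul {F G : ℝ × ℝ → ℝ} (hF : ContDiff ℝ 1 F) (hG : ContDiff ℝ 1 G) (z : ℝ × ℝ) :
    dT (fun y => F y * G y) z = dT F z * G z + F z * dT G z := by
  unfold dT
  rw [fderiv_fun_mul ((cd_diff hF) z) ((cd_diff hG) z)]
  simp; ring

/-- fundamental theorem of calculus along a line -/
lemma ftc_line {F : ℝ × ℝ → ℝ} (hF : ContDiff ℝ 1 F) (s k α β : ℝ) :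
    ∫ ξ in α..β, (dX F (ξ, s + k * ξ) + k * dT F (ξ, s + k * ξ)) =
      F (β, s + k * β) - F (α, s + k * α) := by
  apply intervalIntegral.integral_eq_sub_of_hasDerivAt
  · intro x _
    exact hasDerivAt_line hF s k x
  · apply Continuous.intervalIntegrable
    have := continuous_dX hF
    have := continuous_dT hF
    fun_prop

/-- Leibniz rule for a fixed interval -/
lemma leibniz_fixed {G : ℝ × ℝ → ℝ} (hG : ContDiff ℝ 1 G) (α β x : ℝ) :
    HasDerivAt (fun y => ∫ θ in α..β, G (y, θ)) (∫ θ in α..β, dX G (x, θ)) x := by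
  have hc := continuous_dX hG
  have hGc := hG.continuous
  obtain ⟨C, hC⟩ := ((isCompact_Icc (a := x - 1) (b := x + 1)).prod
    (isCompact_uIcc (a := α) (b := β))).exists_bound_of_continuousOn hc.continuousOn
  refine (intervalIntegral.hasDerivAt_integral_of_dominated_loc_of_deriv_le
    (F := fun y θ => G (y, θ)) (F' := fun y θ => dX G (y, θ)) (bound := fun _ => C)
    (s := Set.Icc (x - 1) (x + 1)) (Icc_mem_nhds (by linarith) (by linarith)) ?_ ?_ ?_ ?_ ?_ ?_).2
  · refine Filter.Eventually.of_forall fun y => ?_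
    exact (by fun_prop : Continuous fun θ => G (y, θ)).aestronglyMeasurable
  · exact (by fun_prop : Continuous fun θ => G (x, θ)).intervalIntegrable _ _
  · exact (by fun_prop : Continuous fun θ => dX G (x, θ)).aestronglyMeasurable
  · refine Filter.Eventually.of_forall fun θ hθ y hy => ?_
    exact hC (y, θ) ⟨hy, Set.uIoc_subset_uIcc hθ⟩
  · exact intervalIntegrable_const
  · refine Filter.Eventually.of_forall fun θ hθ y hy => ?_
    exact hasDerivAt_x hG y θ

lemma sq_integral_le {f : ℝ → ℝ} (hf : Continuous f) :
    (∫ x in (0:ℝ)..1, f x) ^ 2 ≤ ∫ x in (0:ℝ)..1, f x ^ 2 := by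
  set m := ∫ x in (0:ℝ)..1, f x with hm
  have h0 : 0 ≤ ∫ x in (0:ℝ)..1, (f x - m) ^ 2 :=
    intervalIntegral.integral_nonneg (by norm_num) fun x _ => sq_nonneg _
  have h1 : ∫ x in (0:ℝ)..1, (f x - m) ^ 2 = (∫ x in (0:ℝ)..1, f x ^ 2) - 2 * m * m + m ^ 2 := by
    have e : ∀ x, (f x - m) ^ 2 = f x ^ 2 - 2 * m * f x + m ^ 2 := fun x => by ring
    simp_rw [e]
    rw [intervalIntegral.integral_add, intervalIntegral.integral_sub,
      intervalIntegral.integral_const_mul, ← hm]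
    · simp
    all_goals exact Continuous.intervalIntegrable (by fun_prop) _ _
  nlinarith

/-- energy estimate on a trapezoid -/
lemma energy_char {b P Q μ : ℝ} (hb : 0 < b)
    (hμ : 1 + (1 + P ^ 2) * Q ≤ 2 * μ * b) {W U q : ℝ × ℝ → ℝ}
    (hW : ContDiff ℝ 1 W) (hU : ContDiff ℝ 1 U)
    (hq : ∀ z, |q z| ≤ Q)
    (hWU : ∀ z, dX W z + b * dT W z = U z)
    (heq : ∀ x ∈ Set.Icc (0:ℝ) 1, ∀ t ≥ (0:ℝ), dX U (x, t) - b * dT U (x, t) = q (x, t) * W (x, t))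
    (h0 : ∀ t ≥ (0:ℝ), W (0, t) = P * U (0, t))
    (h1 : ∀ t ≥ (0:ℝ), U (1, t) = 0) (s : ℝ) (hs : b ≤ s) :
    ∫ x in (0:ℝ)..1, W (x, s + (-b) * x) ^ 2 ≤
      Real.exp (2 * μ * s) * ∫ x in (0:ℝ)..1, (W (x, 0) ^ 2 + (1 + P ^ 2) * U (x, 0) ^ 2) := by
  have hQ : 0 ≤ Q := le_trans (abs_nonneg _) (hq (0, 0))
  have hk : (1:ℝ) ≤ 1 + P ^ 2 := by nlinarith [sq_nonneg P]
  have hμ0 : 0 ≤ μ := by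
    by_contra h
    push Not at h
    have : 0 ≤ (1 + P ^ 2) * Q := by positivity
    nlinarith [mul_pos_of_neg_of_neg h (neg_lt_zero.mpr hb)]
  set k := 1 + P ^ 2 with hkdef
  set F : ℝ × ℝ → ℝ := fun z => Real.exp (-(2 * μ) * z.2) * (W z ^ 2 - k * U z ^ 2) with hF
  set S : ℝ × ℝ → ℝ := fun z => Real.exp (-(2 * μ) * z.2) * (W z ^ 2 + k * U z ^ 2) with hS
  have hFc : ContDiff ℝ 1 F := by fun_prop
  have hSc : ContDiff ℝ 1 S := by fun_prop
  set G : ℝ × ℝ → ℝ := fun z => (s + (-b) * z.1) * F (z.1, (s + (-b) * z.1) * z.2) with hG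
  have hGc : ContDiff ℝ 1 G := by fun_prop
  -- derivative of G in x
  have hGx : ∀ x θ, dX G (x, θ) = -b * F (x, (s + (-b) * x) * θ) +
      (s + (-b) * x) * (dX F (x, (s + (-b) * x) * θ) + (-b * θ) * dT F (x, (s + (-b) * x) * θ)) := by
    intro x θ
    refine (hasDerivAt_x hGc x θ).unique ?_
    have hl : HasDerivAt (fun y : ℝ => s + (-b) * y) (-b) x := by
      simpa using ((hasDerivAt_id x).const_mul (-b)).const_add s
    have h2 := hasDerivAt_curve hFc (hasDerivAt_id x) (hl.mul_const θ)
    have h3 := hl.mul h2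
    refine HasDerivAt.congr_deriv (f := fun y => G (y, θ)) h3 ?_
    simp
  -- pointwise inequality
  have hpt : ∀ x ∈ Set.Icc (0:ℝ) 1, ∀ t ≥ (0:ℝ), dX F (x, t) ≤ -b * dT S (x, t) := by
    intro x hx t ht
    have e1 : dX F (x, t) = Real.exp (-(2 * μ) * t) *
        (2 * W (x, t) * dX W (x, t) - k * (2 * U (x, t) * dX U (x, t))) := by
      refine (hasDerivAt_x hFc x t).unique ?_
      have h3 := (((hasDerivAt_x hW x t).pow 2).sub
        (((hasDerivAt_x hU x t).pow 2).const_mul k)).const_mul (Real.exp (-(2 * μ) * t))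
      refine HasDerivAt.congr_deriv (f := fun y => F (y, t)) h3 ?_
      simp
    have e2 : dT S (x, t) = -(2 * μ) * S (x, t) + Real.exp (-(2 * μ) * t) *
        (2 * W (x, t) * dT W (x, t) + k * (2 * U (x, t) * dT U (x, t))) := by
      refine (hasDerivAt_t hSc x t).unique ?_
      have h3 := (((hasDerivAt_t hW x t).pow 2).add
        (((hasDerivAt_t hU x t).pow 2).const_mul k))
      have h4 : HasDerivAt (fun y : ℝ => Real.exp (-(2 * μ) * y))
          (Real.exp (-(2 * μ) * t) * (-(2 * μ))) t := by
        simpa using ((hasDerivAt_id t).const_mul (-(2 * μ))).exp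
      have h5 := h4.mul h3
      refine HasDerivAt.congr_deriv (f := fun y => S (x, y)) h5 ?_
      simp [hS]; ring
    rw [e1, e2]
    have hw := hWU (x, t)
    have hu := heq x hx t ht
    have hq' := hq (x, t)
    have e3 : dX W (x, t) = U (x, t) - b * dT W (x, t) := by linarith
    have e4 : dX U (x, t) = b * dT U (x, t) + q (x, t) * W (x, t) := by linarith
    rw [e3, e4]
    have key : 2 * W (x, t) * U (x, t) * (1 - k * q (x, t)) ≤
        2 * μ * b * (W (x, t) ^ 2 + k * U (x, t) ^ 2) := by
      have a1 : |1 - k * q (x, t)| ≤ 1 + k * Q := by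
        calc |1 - k * q (x, t)| ≤ |1| + |k * q (x, t)| := abs_sub _ _
          _ = 1 + k * |q (x, t)| := by rw [abs_one, abs_mul, abs_of_nonneg (by linarith : 0 ≤ k)]
          _ ≤ _ := by gcongr
      have a2 : |2 * W (x, t) * U (x, t)| ≤ W (x, t) ^ 2 + k * U (x, t) ^ 2 := by
        rw [abs_le]
        constructor <;>
        nlinarith [sq_nonneg (W (x, t) + U (x, t)), sq_nonneg (W (x, t) - U (x, t)),
          sq_nonneg (U (x, t))]
      calc 2 * W (x, t) * U (x, t) * (1 - k * q (x, t))
          ≤ |2 * W (x, t) * U (x, t) * (1 - k * q (x, t))| := le_abs_self _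
        _ = |2 * W (x, t) * U (x, t)| * |1 - k * q (x, t)| := abs_mul _ _
        _ ≤ (W (x, t) ^ 2 + k * U (x, t) ^ 2) * (2 * μ * b) :=
            mul_le_mul a2 (a1.trans hμ) (abs_nonneg _) (by positivity)
        _ = _ := by ring
    have key2 := mul_le_mul_of_nonneg_left key (Real.exp_pos (-(2 * μ) * t)).le
    simp only [hS]
    nlinarith [key2]
  -- bound for the derivative
  have hder : ∀ x ∈ Set.Icc (0:ℝ) 1, (∫ θ in (0:ℝ)..1, dX G (x, θ)) ≤
      b * S (x, 0) - b * S (x, s + (-b) * x) - b * F (x, s + (-b) * x) := by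
    intro x hx
    set h := s + (-b) * x with hh
    have hh0 : 0 ≤ h := by rw [hh]; nlinarith [hx.2]
    have hd : ∀ θ ∈ Set.uIcc (0:ℝ) 1, HasDerivAt (fun θ => -b * (θ * F (x, h * θ)) - b * S (x, h * θ))
        (-b * (F (x, h * θ) + θ * (h * dT F (x, h * θ))) - b * (h * dT S (x, h * θ))) θ := by
      intro θ _
      have hl : HasDerivAt (fun y : ℝ => h * y) h θ := by
        simpa using (hasDerivAt_id θ).const_mul h
      have h1 := hasDerivAt_curve hFc (hasDerivAt_const θ x) hl
      have h2 := hasDerivAt_curve hSc (hasDerivAt_const θ x) hl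
      have h3 := (((hasDerivAt_id θ).mul h1).const_mul (-b)).sub (h2.const_mul b)
      refine HasDerivAt.congr_deriv
        (f := fun θ => -b * (θ * F (x, h * θ)) - b * S (x, h * θ)) h3 ?_
      simp
    have c1 := continuous_dT hFc
    have c2 := continuous_dT hSc
    have c3 := continuous_dX hGc
    have c4 := hFc.continuous
    have hint := intervalIntegral.integral_eq_sub_of_hasDerivAt hd
      (Continuous.intervalIntegrable (by fun_prop) _ _)
    have hle : (∫ θ in (0:ℝ)..1, dX G (x, θ)) ≤ ∫ θ in (0:ℝ)..1,
        (-b * (F (x, h * θ) + θ * (h * dT F (x, h * θ))) - b * (h * dT S (x, h * θ))) := by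
      apply intervalIntegral.integral_mono_on (by norm_num)
        (Continuous.intervalIntegrable (by fun_prop) _ _)
        (Continuous.intervalIntegrable (by fun_prop) _ _)
      intro θ hθ
      rw [hGx]
      have := mul_le_mul_of_nonneg_left (hpt x hx (h * θ) (mul_nonneg hh0 hθ.1)) hh0
      nlinarith [this]
    rw [hint] at hle
    simp only [mul_zero, zero_mul, mul_one, one_mul] at hle
    linarith
  have c3 := continuous_dX hGc
  have c4 := hFc.continuous
  have c5 := hSc.continuous
  have c6 := hW.continuous
  have c7 := hU.continuous
  have hΦ : ∫ x in (0:ℝ)..1, (∫ θ in (0:ℝ)..1, dX G (x, θ)) =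
      (∫ θ in (0:ℝ)..1, G (1, θ)) - (∫ θ in (0:ℝ)..1, G (0, θ)) := by
    apply intervalIntegral.integral_eq_sub_of_hasDerivAt (f := fun x => ∫ θ in (0:ℝ)..1, G (x, θ))
    · intro x _
      exact leibniz_fixed hGc 0 1 x
    · apply Continuous.intervalIntegrable
      exact intervalIntegral.continuous_parametric_intervalIntegral_of_continuous'
        (f := fun x θ => dX G (x, θ)) (by simpa [Function.uncurry_def] using c3) 0 1
  have hΦ1 : 0 ≤ ∫ θ in (0:ℝ)..1, G (1, θ) := by
    apply intervalIntegral.integral_nonneg (by norm_num)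
    intro θ hθ
    have p1 : 0 ≤ s + (-b) * 1 := by linarith
    simp only [hG, hF]
    rw [h1 _ (mul_nonneg p1 hθ.1)]
    apply mul_nonneg p1
    apply mul_nonneg (Real.exp_pos _).le
    nlinarith [sq_nonneg (W (1, (s + (-b) * 1) * θ))]
  have hΦ0 : ∫ θ in (0:ℝ)..1, G (0, θ) ≤ 0 := by
    rw [← neg_nonneg, ← intervalIntegral.integral_neg]
    apply intervalIntegral.integral_nonneg (by norm_num)
    intro θ hθ
    rw [neg_nonneg]
    have p1 : 0 ≤ s + (-b) * 0 := by linarith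
    simp only [hG, hF]
    rw [h0 _ (mul_nonneg p1 hθ.1)]
    apply mul_nonpos_of_nonneg_of_nonpos p1
    apply mul_nonpos_of_nonneg_of_nonpos (Real.exp_pos _).le
    rw [hkdef]
    nlinarith [sq_nonneg (U (0, (s + (-b) * 0) * θ))]
  have hmono : (∫ x in (0:ℝ)..1, (∫ θ in (0:ℝ)..1, dX G (x, θ))) ≤ ∫ x in (0:ℝ)..1,
      (b * (W (x, 0) ^ 2 + k * U (x, 0) ^ 2) -
        b * Real.exp (-(2 * μ) * s) * W (x, s + (-b) * x) ^ 2) := by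
    apply intervalIntegral.integral_mono_on (by norm_num)
    · apply Continuous.intervalIntegrable
      exact intervalIntegral.continuous_parametric_intervalIntegral_of_continuous'
        (f := fun x θ => dX G (x, θ)) (by simpa [Function.uncurry_def] using c3) 0 1
    · exact Continuous.intervalIntegrable (by fun_prop) _ _
    · intro x hx
      refine (hder x hx).trans ?_
      simp only [hS, hF, mul_zero, Real.exp_zero, one_mul]
      have he : Real.exp (-(2 * μ) * s) ≤ Real.exp (-(2 * μ) * (s + (-b) * x)) := by
        apply Real.exp_le_exp.mpr
        nlinarith [mul_nonneg (mul_nonneg hμ0 hb.le) hx.1]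
      have he2 := mul_le_mul_of_nonneg_right he (mul_nonneg hb.le (sq_nonneg (W (x, s + (-b) * x))))
      have he3 := mul_nonneg (Real.exp_pos (-(2 * μ) * (s + (-b) * x))).le
        (mul_nonneg hb.le (sq_nonneg (W (x, s + (-b) * x))))
      nlinarith [he2, he3]
  rw [intervalIntegral.integral_sub (Continuous.intervalIntegrable (by fun_prop) _ _)
    (Continuous.intervalIntegrable (by fun_prop) _ _), intervalIntegral.integral_const_mul,
    intervalIntegral.integral_const_mul] at hmono
  have hfin : Real.exp (-(2 * μ) * s) * ∫ x in (0:ℝ)..1, W (x, s + (-b) * x) ^ 2 ≤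
      ∫ x in (0:ℝ)..1, (W (x, 0) ^ 2 + k * U (x, 0) ^ 2) := by
    refine le_of_mul_le_mul_left ?_ hb
    linarith
  have hexp : Real.exp (2 * μ * s) * Real.exp (-(2 * μ) * s) = 1 := by
    rw [← Real.exp_add, ← Real.exp_zero]; congr 1; ring
  calc ∫ x in (0:ℝ)..1, W (x, s + (-b) * x) ^ 2
      = Real.exp (2 * μ * s) * (Real.exp (-(2 * μ) * s) * ∫ x in (0:ℝ)..1, W (x, s + (-b) * x) ^ 2) := by
        rw [← mul_assoc, hexp, one_mul]
    _ ≤ _ := mul_le_mul_of_nonneg_left hfin (Real.exp_pos _).le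

/-- representation of `U` along left-going characteristics -/
lemma u_formula {b : ℝ} (hb : 0 < b) {W U q : ℝ × ℝ → ℝ} (hU : ContDiff ℝ 1 U)
    (heq : ∀ x ∈ Set.Icc (0:ℝ) 1, ∀ t ≥ (0:ℝ), dX U (x, t) - b * dT U (x, t) = q (x, t) * W (x, t))
    (h1 : ∀ t ≥ (0:ℝ), U (1, t) = 0) (s : ℝ) (hs : b ≤ s) (x : ℝ) (hx : x ∈ Set.Icc (0:ℝ) 1) :
    U (x, s + (-b) * x) = -∫ ξ in x..1, q (ξ, s + (-b) * ξ) * W (ξ, s + (-b) * ξ) := by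
  have h := ftc_line hU s (-b) x 1
  rw [h1 _ (by linarith)] at h
  have h2 : ∫ ξ in x..1, (dX U (ξ, s + (-b) * ξ) + (-b) * dT U (ξ, s + (-b) * ξ)) =
      ∫ ξ in x..1, q (ξ, s + (-b) * ξ) * W (ξ, s + (-b) * ξ) := by
    apply intervalIntegral.integral_congr
    intro ξ hξ
    rw [Set.uIcc_of_le hx.2] at hξ
    have := heq ξ ⟨hx.1.trans hξ.1, hξ.2⟩ (s + (-b) * ξ) (by nlinarith [hξ.2])
    simp only
    linarith
  rw [h2] at h
  linarith

lemma u_sup {b Q : ℝ} (hb : 0 < b) {W U q : ℝ × ℝ → ℝ}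
    (hW : Continuous W) (hU : ContDiff ℝ 1 U) (hqc : Continuous q)
    (hq : ∀ z, |q z| ≤ Q)
    (heq : ∀ x ∈ Set.Icc (0:ℝ) 1, ∀ t ≥ (0:ℝ), dX U (x, t) - b * dT U (x, t) = q (x, t) * W (x, t))
    (h1 : ∀ t ≥ (0:ℝ), U (1, t) = 0) (E : ℝ) (x : ℝ) (hx : x ∈ Set.Icc (0:ℝ) 1)
    (t : ℝ) (ht : b ≤ t)
    (hE : ∫ ξ in (0:ℝ)..1, W (ξ, (t + b * x) + (-b) * ξ) ^ 2 ≤ E) :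
    |U (x, t)| ≤ Q * Real.sqrt E := by
  have hQ : 0 ≤ Q := le_trans (abs_nonneg _) (hq (0, 0))
  have h := u_formula hb hU heq h1 (t + b * x) (by nlinarith [hx.1]) x hx
  have e : t + b * x + (-b) * x = t := by ring
  rw [e] at h
  rw [h, abs_neg]
  set s := t + b * x
  have hc : Continuous fun ξ => |W (ξ, s + (-b) * ξ)| := by fun_prop
  have a1 : |∫ ξ in x..1, q (ξ, s + (-b) * ξ) * W (ξ, s + (-b) * ξ)| ≤
      ∫ ξ in x..1, Q * |W (ξ, s + (-b) * ξ)| := by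
    refine (intervalIntegral.abs_integral_le_integral_abs hx.2).trans ?_
    apply intervalIntegral.integral_mono_on hx.2
      (Continuous.intervalIntegrable (by fun_prop) _ _)
      (Continuous.intervalIntegrable (by fun_prop) _ _)
    intro ξ _
    rw [abs_mul]
    gcongr
    exact hq _
  have a2 : (∫ ξ in x..1, |W (ξ, s + (-b) * ξ)|) ≤ ∫ ξ in (0:ℝ)..1, |W (ξ, s + (-b) * ξ)| := by
    rw [← intervalIntegral.integral_add_adjacent_intervals (a := 0) (b := x) (c := 1)
      (hc.intervalIntegrable _ _) (hc.intervalIntegrable _ _)]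
    have := intervalIntegral.integral_nonneg (μ := MeasureTheory.volume) hx.1
      (f := fun ξ => |W (ξ, s + (-b) * ξ)|) (fun ξ _ => abs_nonneg _)
    linarith
  have a3 : (∫ ξ in (0:ℝ)..1, |W (ξ, s + (-b) * ξ)|) ≤ Real.sqrt E := by
    apply Real.le_sqrt_of_sq_le
    refine (sq_integral_le hc).trans ?_
    simpa only [sq_abs] using hE
  rw [intervalIntegral.integral_const_mul] at a1
  exact a1.trans (mul_le_mul_of_nonneg_left (a2.trans a3) hQ)

/-- bounds for right-going transport -/
lemma transport_bound {b P N t0 T : ℝ} (hb : 0 < b) {Z Y : ℝ × ℝ → ℝ}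
    (hline : ∀ s x, Z (x, s + b * x) - Z (0, s) = ∫ ξ in (0:ℝ)..x, Y (ξ, s + b * ξ))
    (hY : ∀ x ∈ Set.Icc (0:ℝ) 1, ∀ t, t0 ≤ t → t ≤ T → |Y (x, t)| ≤ N)
    (hZ : ∀ t, t0 ≤ t → t ≤ T → Z (0, t) = P * Y (0, t)) :
    ∀ x ∈ Set.Icc (0:ℝ) 1, ∀ t, t0 + b ≤ t → t ≤ T → |Z (x, t)| ≤ (|P| + 1) * N := by
  intro x hx t ht htT
  have hbx : b * x ≤ b := by nlinarith [hx.2]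
  have hbx0 : 0 ≤ b * x := mul_nonneg hb.le hx.1
  have h := hline (t - b * x) x
  have e : t - b * x + b * x = t := by ring
  rw [e, hZ (t - b * x) (by linarith) (by linarith)] at h
  have y0 := hY 0 ⟨le_rfl, zero_le_one⟩ (t - b * x) (by linarith) (by linarith)
  have hN : 0 ≤ N := (abs_nonneg _).trans y0
  have hi : |∫ ξ in (0:ℝ)..x, Y (ξ, t - b * x + b * ξ)| ≤ N * |x - 0| := by
    rw [← Real.norm_eq_abs (∫ ξ in (0:ℝ)..x, Y (ξ, t - b * x + b * ξ))]
    apply intervalIntegral.norm_integral_le_of_norm_le_const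
    intro ξ hξ
    rw [Set.uIoc_of_le hx.1] at hξ
    have m1 : 0 ≤ b * ξ := mul_nonneg hb.le hξ.1.le
    have m2 : b * ξ ≤ b * x := mul_le_mul_of_nonneg_left hξ.2 hb.le
    exact hY ξ ⟨hξ.1.le, hξ.2.trans hx.2⟩ _ (by linarith) (by linarith)
  have hi2 : N * |x - 0| ≤ N := by
    rw [sub_zero, abs_of_nonneg hx.1]; nlinarith [hx.2]
  have e2 : Z (x, t) = P * Y (0, t - b * x) + ∫ ξ in (0:ℝ)..x, Y (ξ, t - b * x + b * ξ) := by
    linarith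
  rw [e2]
  calc |P * Y (0, t - b * x) + ∫ ξ in (0:ℝ)..x, Y (ξ, t - b * x + b * ξ)|
      ≤ |P * Y (0, t - b * x)| + |∫ ξ in (0:ℝ)..x, Y (ξ, t - b * x + b * ξ)| := abs_add_le _ _
    _ ≤ |P| * N + N := by
        rw [abs_mul]
        exact add_le_add (mul_le_mul_of_nonneg_left y0 (abs_nonneg _)) (hi.trans hi2)
    _ = _ := by ring

/-- formula for the time derivative of `U` without derivatives of `W`, `U` -/
lemma ut_formula {b : ℝ} (hb : 0 < b) {W U q : ℝ × ℝ → ℝ}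
    (hW : ContDiff ℝ 1 W) (hU : ContDiff ℝ 1 U) (hqc : ContDiff ℝ 1 q)
    (hWU : ∀ z, dX W z + b * dT W z = U z)
    (heq : ∀ x ∈ Set.Icc (0:ℝ) 1, ∀ t ≥ (0:ℝ), dX U (x, t) - b * dT U (x, t) = q (x, t) * W (x, t))
    (h1 : ∀ t ≥ (0:ℝ), U (1, t) = 0) (x : ℝ) (hx : x ∈ Set.Icc (0:ℝ) 1) (t : ℝ) (ht : b < t) :
    2 * b * dT U (x, t) = q (1, t + b * x + (-b) * 1) * W (1, t + b * x + (-b) * 1)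
      - q (x, t) * W (x, t)
      - ∫ ξ in x..1, ((dX q (ξ, t + b * x + (-b) * ξ) + b * dT q (ξ, t + b * x + (-b) * ξ))
          * W (ξ, t + b * x + (-b) * ξ)
          + q (ξ, t + b * x + (-b) * ξ) * U (ξ, t + b * x + (-b) * ξ)) := by
  set f : ℝ × ℝ → ℝ := fun z => q z * W z with hf
  have hfc : ContDiff ℝ 1 f := by fun_prop
  set G : ℝ × ℝ → ℝ := fun z => f (z.2, z.1 + b * x + (-b) * z.2) with hG
  have hGc : ContDiff ℝ 1 G := by fun_prop
  have hd := leibniz_fixed hGc x 1 t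
  have hGx : ∀ ξ, dX G (t, ξ) = dT f (ξ, t + b * x + (-b) * ξ) := by
    intro ξ
    refine (hasDerivAt_x hGc t ξ).unique ?_
    have hl : HasDerivAt (fun y : ℝ => y + b * x + (-b) * ξ) 1 t :=
      ((hasDerivAt_id t).add_const _).add_const _
    have h2 := hasDerivAt_curve hfc (hasDerivAt_const t ξ) hl
    refine HasDerivAt.congr_deriv (f := fun y => G (y, ξ)) h2 ?_
    simp
  have hut : dT U (x, t) = -∫ ξ in x..1, dT f (ξ, t + b * x + (-b) * ξ) := by
    refine (hasDerivAt_t hU x t).unique ?_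
    have h3 : HasDerivAt (fun y => -∫ ξ in x..1, G (y, ξ)) (-∫ ξ in x..1, dX G (t, ξ)) t := hd.neg
    simp_rw [hGx] at h3
    refine h3.congr_of_eventuallyEq ?_
    filter_upwards [lt_mem_nhds ht] with y hy
    have h := u_formula hb hU heq h1 (y + b * x) (by nlinarith [hx.1]) x hx
    have e : y + b * x + (-b) * x = y := by ring
    rw [e] at h
    exact h
  have hftc := ftc_line hfc (t + b * x) (-b) x 1
  have e : t + b * x + (-b) * x = t := by ring
  rw [e] at hftc
  have c1 := continuous_dX hfc
  have c2 := continuous_dT hfc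
  have c3 := continuous_dX hqc
  have c4 := continuous_dT hqc
  have c5 := hW.continuous
  have c6 := hU.continuous
  have c7 := hqc.continuous
  have hg : ∀ z, (dX q z + b * dT q z) * W z + q z * U z = (dX f z + (-b) * dT f z) + 2 * b * dT f z := by
    intro z
    rw [hf, dX_mul hqc hW, dT_mul hqc hW, ← hWU z]
    ring
  simp_rw [hg]
  rw [intervalIntegral.integral_add (Continuous.intervalIntegrable (by fun_prop) _ _)
    (Continuous.intervalIntegrable (by fun_prop) _ _), hftc, intervalIntegral.integral_const_mul, hut]
  ring

lemma abs_int_le {f : ℝ → ℝ} {C x : ℝ} (hx : x ∈ Set.Icc (0:ℝ) 1)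
    (hf : ∀ ξ ∈ Set.Icc x 1, |f ξ| ≤ C) : |∫ ξ in x..1, f ξ| ≤ C := by
  have hC : 0 ≤ C := (abs_nonneg _).trans (hf 1 ⟨hx.2, le_rfl⟩)
  have h : ‖∫ ξ in x..1, f ξ‖ ≤ C * |1 - x| := by
    apply intervalIntegral.norm_integral_le_of_norm_le_const
    intro ξ hξ
    rw [Set.uIoc_of_le hx.2] at hξ
    exact hf ξ ⟨hξ.1.le, hξ.2⟩
  rw [Real.norm_eq_abs, abs_of_nonneg (by linarith [hx.2] : 0 ≤ 1 - x)] at h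
  nlinarith [hx.1]

lemma abs_mul_le' {x y A B : ℝ} (h1 : |x| ≤ A) (h2 : |y| ≤ B) : |x * y| ≤ A * B := by
  rw [abs_mul]
  exact mul_le_mul h1 h2 (abs_nonneg _) ((abs_nonneg _).trans h1)

/-- mean value inequality in time -/
lemma mvt_t {F : ℝ × ℝ → ℝ} (hF : ContDiff ℝ 1 F) {x t h C : ℝ} (hh : 0 ≤ h)
    (hC : ∀ τ ∈ Set.Icc t (t + h), |dT F (x, τ)| ≤ C) : |F (x, t + h) - F (x, t)| ≤ C * h := by
  have := Convex.norm_image_sub_le_of_norm_hasDerivWithin_le (f := fun y => F (x, y))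
    (f' := fun y => dT F (x, y)) (s := Set.Icc t (t + h)) (x := t) (y := t + h) (C := C)
    (fun y _ => (hasDerivAt_t hF x y).hasDerivWithinAt) (fun y hy => hC y hy) (convex_Icc _ _)
    ⟨le_rfl, by linarith⟩ ⟨by linarith, le_rfl⟩
  simpa [abs_of_nonneg hh] using this

set_option maxHeartbeats 1600000 in
/-- smoothing chain -/
lemma chain_bound {b P Q N T : ℝ} (hb : 0 < b) {W U q : ℝ × ℝ → ℝ}
    (hW : ContDiff ℝ 2 W) (hU : ContDiff ℝ 1 U) (hqc : ContDiff ℝ 2 q)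
    (hUd : U = fun z => dX W z + b * dT W z)
    (hq : ∀ z, |q z| ≤ Q) (hqt : ∀ z, |dT q z| ≤ Q)
    (hr : ∀ z, |dX q z + b * dT q z| ≤ Q)
    (hrt : ∀ z, |dT (fun y => dX q y + b * dT q y) z| ≤ Q)
    (heq : ∀ x ∈ Set.Icc (0:ℝ) 1, ∀ t ≥ (0:ℝ), dX U (x, t) - b * dT U (x, t) = q (x, t) * W (x, t))
    (h0 : ∀ t ≥ (0:ℝ), W (0, t) = P * U (0, t))
    (h1 : ∀ t ≥ (0:ℝ), U (1, t) = 0)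
    (hN : ∀ x ∈ Set.Icc (0:ℝ) 1, ∀ t, b ≤ t → t ≤ T → |U (x, t)| ≤ N)
    (x : ℝ) (hx : x ∈ Set.Icc (0:ℝ) 1) (t : ℝ) (ht : 6 * b ≤ t) (htT : t < T) :
    |U (x, t)| ≤ (|P| + 1) ^ 3 * (1 + 4 * Q / b) ^ 2 * N ∧
    |W (x, t)| ≤ (|P| + 1) ^ 3 * (1 + 4 * Q / b) ^ 2 * N ∧
    |dT U (x, t)| ≤ (|P| + 1) ^ 3 * (1 + 4 * Q / b) ^ 2 * N ∧
    |dT W (x, t)| ≤ (|P| + 1) ^ 3 * (1 + 4 * Q / b) ^ 2 * N ∧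
    |dT (dT W) (x, t)| ≤ (|P| + 1) ^ 3 * (1 + 4 * Q / b) ^ 2 * N := by
  have hQ : 0 ≤ Q := le_trans (abs_nonneg _) (hq (0, 0))
  have hN0 : 0 ≤ N := le_trans (abs_nonneg _) (hN x hx t (by linarith) htT.le)
  have hW1 := cd_21 hW
  have hq1 := cd_21 hqc
  have hWt := contDiff_dT hW
  have hWx := contDiff_dX hW
  have hWU : ∀ z, dX W z + b * dT W z = U z := fun z => by rw [hUd]
  set A := |P| + 1 with hA
  have hA1 : 1 ≤ A := by rw [hA]; linarith [abs_nonneg P]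
  set B := 1 + 4 * Q / b with hB
  have hB1 : 1 ≤ B := by rw [hB]; have : 0 ≤ 4 * Q / b := by positivity
                         linarith
  have hBb : 4 * Q ≤ b * B := by
    rw [hB]; have : b * (1 + 4 * Q / b) = b + 4 * Q := by field_simp
    rw [this]; linarith
  -- U, W on [2b, T]
  have stW : ∀ x ∈ Set.Icc (0:ℝ) 1, ∀ t, b + b ≤ t → t ≤ T → |W (x, t)| ≤ A * N := by
    refine transport_bound (P := P) (Y := U) hb ?_ hN (fun t ht _ => h0 t (by linarith))
    intro s x
    have := ftc_line hW1 s b 0 x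
    simp_rw [hWU] at this
    rw [this]; simp
  have stU : ∀ x ∈ Set.Icc (0:ℝ) 1, ∀ t, b ≤ t → t ≤ T → |U (x, t)| ≤ A * N := by
    intro x hx t h1 h2
    refine (hN x hx t h1 h2).trans ?_
    nlinarith
  -- dT U on [3b, T]
  have stUt : ∀ x ∈ Set.Icc (0:ℝ) 1, ∀ t, 3 * b ≤ t → t ≤ T → |dT U (x, t)| ≤ B * (A * N) := by
    intro x hx t ht htT
    have hf := ut_formula hb hW1 hU hq1 hWU heq h1 x hx t (by linarith)
    have m0 : 0 ≤ b * x := mul_nonneg hb.le hx.1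
    have m1 : b * x ≤ b := by nlinarith [hx.2]
    have b1 := abs_mul_le' (hq (1, t + b * x + (-b) * 1))
      (stW 1 ⟨zero_le_one, le_rfl⟩ (t + b * x + (-b) * 1) (by linarith) (by linarith))
    have b2 := abs_mul_le' (hq (x, t)) (stW x hx t (by linarith) htT)
    have b3 : |∫ ξ in x..1, ((dX q (ξ, t + b * x + (-b) * ξ) + b * dT q (ξ, t + b * x + (-b) * ξ))
          * W (ξ, t + b * x + (-b) * ξ)
          + q (ξ, t + b * x + (-b) * ξ) * U (ξ, t + b * x + (-b) * ξ))| ≤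
        Q * (A * N) + Q * (A * N) := by
      apply abs_int_le hx
      intro ξ hξ
      have m2 : b * x ≤ b * ξ := mul_le_mul_of_nonneg_left hξ.1 hb.le
      have m3 : b * ξ ≤ b := by nlinarith [hξ.2]
      have hξ' : ξ ∈ Set.Icc (0:ℝ) 1 := ⟨hx.1.trans hξ.1, hξ.2⟩
      refine (abs_add_le _ _).trans (add_le_add ?_ ?_)
      · exact abs_mul_le' (hr _) (stW ξ hξ' _ (by linarith) (by linarith))
      · exact abs_mul_le' (hq _) (stU ξ hξ' _ (by linarith) (by linarith))
    have b4 : |2 * b * dT U (x, t)| ≤ 4 * (Q * (A * N)) := by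
      rw [hf]
      rw [abs_le] at *
      constructor <;> linarith [b1.1, b1.2, b2.1, b2.2, b3.1, b3.2]
    rw [abs_mul, abs_of_pos (by linarith : 0 < 2 * b)] at b4
    have hAN : 0 ≤ A * N := by positivity
    have b5 := mul_le_mul_of_nonneg_right hBb hAN
    have b6 : 0 ≤ b * (B * (A * N)) := by positivity
    refine le_of_mul_le_mul_left ?_ hb
    nlinarith [abs_nonneg (dT U (x, t))]
  -- dT W on [4b, T]
  have hlineWt : ∀ s x, dT W (x, s + b * x) - dT W (0, s) = ∫ ξ in (0:ℝ)..x, dT U (ξ, s + b * ξ) := by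
    intro s x
    have := ftc_line hWt s b 0 x
    have e : ∀ z, dX (dT W) z + b * dT (dT W) z = dT U z := by
      intro z
      rw [dX_dT_comm hW, hUd, dT_add hWx hWt]
    simp_rw [e] at this
    rw [this]; simp
  have hbc : ∀ t, 0 < t → dT W (0, t) = P * dT U (0, t) := by
    intro t ht
    refine (hasDerivAt_t hW1 0 t).unique ?_
    refine ((hasDerivAt_t hU 0 t).const_mul P).congr_of_eventuallyEq ?_
    filter_upwards [lt_mem_nhds ht] with y hy
    exact h0 y hy.le
  have stWt : ∀ x ∈ Set.Icc (0:ℝ) 1, ∀ t, 3 * b + b ≤ t → t ≤ T →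
      |dT W (x, t)| ≤ A * (B * (A * N)) :=
    transport_bound (P := P) (Y := dT U) hb hlineWt stUt (fun t ht _ => hbc t (by linarith))
  set M := A * (B * (A * N)) with hM
  have hAN : 0 ≤ A * N := by positivity
  have hBAN : A * N ≤ B * (A * N) := by nlinarith
  have hM1 : B * (A * N) ≤ M := by rw [hM]; nlinarith
  have hM0 : 0 ≤ M := by linarith
  have gW : ∀ x ∈ Set.Icc (0:ℝ) 1, ∀ t, 4 * b ≤ t → t ≤ T → |W (x, t)| ≤ M :=
    fun x hx t h1 h2 => (stW x hx t (by linarith) h2).trans (by linarith)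
  have gU : ∀ x ∈ Set.Icc (0:ℝ) 1, ∀ t, 4 * b ≤ t → t ≤ T → |U (x, t)| ≤ M :=
    fun x hx t h1 h2 => (stU x hx t (by linarith) h2).trans (by linarith)
  have gUt : ∀ x ∈ Set.Icc (0:ℝ) 1, ∀ t, 4 * b ≤ t → t ≤ T → |dT U (x, t)| ≤ M :=
    fun x hx t h1 h2 => (stUt x hx t (by linarith) h2).trans (by linarith)
  have gWt : ∀ x ∈ Set.Icc (0:ℝ) 1, ∀ t, 4 * b ≤ t → t ≤ T → |dT W (x, t)| ≤ M :=
    fun x hx t h1 h2 => stWt x hx t (by linarith) h2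
  -- Lipschitz bounds for f = q W and g = r W + q U
  set r : ℝ × ℝ → ℝ := fun y => dX q y + b * dT q y with hrdef
  have hqx := contDiff_dX hqc
  have hqtc := contDiff_dT hqc
  have hrc : ContDiff ℝ 1 r := by fun_prop
  have hfl : ∀ x ∈ Set.Icc (0:ℝ) 1, ∀ t h, 4 * b ≤ t → 0 ≤ h → t + h ≤ T →
      |q (x, t + h) * W (x, t + h) - q (x, t) * W (x, t)| ≤ (2 * (Q * M)) * h := by
    intro x hx t h ht hh htT
    refine mvt_t (F := fun z => q z * W z) (by fun_prop) hh ?_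
    intro τ hτ
    rw [dT_mul hq1 hW1]
    have i1 := abs_mul_le' (hqt (x, τ)) (gW x hx τ (by linarith [hτ.1]) (by linarith [hτ.2]))
    have i2 := abs_mul_le' (hq (x, τ)) (gWt x hx τ (by linarith [hτ.1]) (by linarith [hτ.2]))
    refine (abs_add_le _ _).trans (by linarith)
  have hgl : ∀ x ∈ Set.Icc (0:ℝ) 1, ∀ t h, 4 * b ≤ t → 0 ≤ h → t + h ≤ T →
      |(r (x, t + h) * W (x, t + h) + q (x, t + h) * U (x, t + h)) -
        (r (x, t) * W (x, t) + q (x, t) * U (x, t))| ≤ (4 * (Q * M)) * h := by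
    intro x hx t h ht hh htT
    have j1 : |r (x, t + h) * W (x, t + h) - r (x, t) * W (x, t)| ≤ (2 * (Q * M)) * h := by
      refine mvt_t (F := fun z => r z * W z) (by fun_prop) hh ?_
      intro τ hτ
      rw [dT_mul hrc hW1]
      have i1 := abs_mul_le' (hrt (x, τ)) (gW x hx τ (by linarith [hτ.1]) (by linarith [hτ.2]))
      have i2 := abs_mul_le' (hr (x, τ)) (gWt x hx τ (by linarith [hτ.1]) (by linarith [hτ.2]))
      refine (abs_add_le _ _).trans (by linarith)
    have j2 : |q (x, t + h) * U (x, t + h) - q (x, t) * U (x, t)| ≤ (2 * (Q * M)) * h := by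
      refine mvt_t (F := fun z => q z * U z) (by fun_prop) hh ?_
      intro τ hτ
      rw [dT_mul hq1 hU]
      have i1 := abs_mul_le' (hqt (x, τ)) (gU x hx τ (by linarith [hτ.1]) (by linarith [hτ.2]))
      have i2 := abs_mul_le' (hq (x, τ)) (gUt x hx τ (by linarith [hτ.1]) (by linarith [hτ.2]))
      refine (abs_add_le _ _).trans (by linarith)
    rw [abs_le] at *
    constructor <;> linarith [j1.1, j1.2, j2.1, j2.2]
  have cW := hW1.continuous
  have cU := hU.continuous
  have cq := hq1.continuous
  have cr := hrc.continuous
  -- Lipschitz bound for dT U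
  have hUtl : ∀ x ∈ Set.Icc (0:ℝ) 1, ∀ t h, 5 * b ≤ t → 0 ≤ h → t + h ≤ T →
      |dT U (x, t + h) - dT U (x, t)| ≤ B * M * h := by
    intro x hx t h ht hh htT
    have f1 := ut_formula hb hW1 hU hq1 hWU heq h1 x hx t (by linarith)
    have f2 := ut_formula hb hW1 hU hq1 hWU heq h1 x hx (t + h) (by linarith)
    have m0 : 0 ≤ b * x := mul_nonneg hb.le hx.1
    have m1 : b * x ≤ b := by nlinarith [hx.2]
    have es : ∀ ξ, t + h + b * x + (-b) * ξ = (t + b * x + (-b) * ξ) + h := fun ξ => by ring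
    simp_rw [es] at f2
    set g : ℝ × ℝ → ℝ := fun z => r z * W z + q z * U z with hg
    have cg : Continuous g := by fun_prop
    change _ = _ - ∫ ξ in x..1, g (ξ, t + b * x + (-b) * ξ) at f1
    change _ = _ - ∫ ξ in x..1, g (ξ, t + b * x + (-b) * ξ + h) at f2
    have b1 := hfl 1 ⟨zero_le_one, le_rfl⟩ (t + b * x + (-b) * 1) h (by linarith) hh (by linarith)
    have b2 := hfl x hx t h (by linarith) hh htT
    have b3 : |(∫ ξ in x..1, g (ξ, t + b * x + (-b) * ξ + h)) -
        ∫ ξ in x..1, g (ξ, t + b * x + (-b) * ξ)| ≤ (4 * (Q * M)) * h := by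
      rw [← intervalIntegral.integral_sub (Continuous.intervalIntegrable (by fun_prop) _ _)
        (Continuous.intervalIntegrable (by fun_prop) _ _)]
      apply abs_int_le hx
      intro ξ hξ
      have m2 : b * x ≤ b * ξ := mul_le_mul_of_nonneg_left hξ.1 hb.le
      have m3 : b * ξ ≤ b := by nlinarith [hξ.2]
      exact hgl ξ ⟨hx.1.trans hξ.1, hξ.2⟩ _ h (by linarith) hh (by linarith)
    have b4 : |2 * b * (dT U (x, t + h) - dT U (x, t))| ≤ 8 * (Q * M) * h := by
      rw [mul_sub, f1, f2]
      rw [abs_le] at *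
      constructor <;> linarith [b1.1, b1.2, b2.1, b2.2, b3.1, b3.2]
    rw [abs_mul, abs_of_pos (by linarith : 0 < 2 * b)] at b4
    have b5 := mul_le_mul_of_nonneg_right hBb (mul_nonneg hM0 hh)
    refine le_of_mul_le_mul_left ?_ hb
    nlinarith
  -- Lipschitz bound for dT W
  have hWtl : ∀ h, 0 ≤ h → ∀ x ∈ Set.Icc (0:ℝ) 1, ∀ t, 5 * b + b ≤ t → t ≤ T - h →
      |dT W (x, t + h) - dT W (x, t)| ≤ A * (B * M * h) := by
    intro h hh
    have cUt := continuous_dT hU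
    refine transport_bound (P := P) (Z := fun z => dT W (z.1, z.2 + h) - dT W z)
      (Y := fun z => dT U (z.1, z.2 + h) - dT U z) hb ?_ ?_ ?_
    · intro s x
      have l1 := hlineWt (s + h) x
      have l2 := hlineWt s x
      have es : ∀ ξ, s + h + b * ξ = s + b * ξ + h := fun ξ => by ring
      simp_rw [es] at l1
      simp only
      rw [intervalIntegral.integral_sub (Continuous.intervalIntegrable (by fun_prop) _ _)
        (Continuous.intervalIntegrable (by fun_prop) _ _)]
      linarith
    · intro x hx t h1 h2
      exact hUtl x hx t h h1 hh (by linarith)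
    · intro t h1 h2
      simp only
      rw [hbc _ (by linarith), hbc _ (by linarith)]
      ring
  -- second derivative, open range
  have hWtt : ∀ t, 6 * b < t → t < T → |dT (dT W) (x, t)| ≤ A * (B * M) := by
    intro t ht htT
    have hd := hasDerivAt_t hWt x t
    refine hd.le_of_lip' (by positivity) ?_
    filter_upwards [lt_mem_nhds ht, gt_mem_nhds htT] with y hy1 hy2
    rcases le_total t y with hty | hty
    · have := hWtl (y - t) (by linarith) x hx t (by linarith) (by linarith)
      rw [add_sub_cancel] at this
      rw [Real.norm_eq_abs, Real.norm_eq_abs, abs_of_nonneg (by linarith : 0 ≤ y - t)]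
      linarith
    · have := hWtl (t - y) (by linarith) x hx y (by linarith) (by linarith)
      rw [add_sub_cancel] at this
      rw [Real.norm_eq_abs, Real.norm_eq_abs, abs_sub_comm, abs_sub_comm y t,
        abs_of_nonneg (by linarith : 0 ≤ t - y)]
      linarith
  have hWtt' : |dT (dT W) (x, t)| ≤ A * (B * M) := by
    have cWtt := continuous_dT hWt
    have hcl : IsClosed {τ : ℝ | |dT (dT W) (x, τ)| ≤ A * (B * M)} :=
      isClosed_le (by fun_prop) continuous_const
    have hsub : Set.Ioo (6 * b) T ⊆ {τ : ℝ | |dT (dT W) (x, τ)| ≤ A * (B * M)} :=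
      fun τ hτ => hWtt τ hτ.1 hτ.2
    have := closure_minimal hsub hcl
    rw [closure_Ioo (by linarith : 6 * b ≠ T)] at this
    exact this ⟨ht, htT.le⟩
  have eK : A ^ 3 * B ^ 2 * N = A * (B * M) := by rw [hM]; ring
  have hBM : M ≤ B * M := by nlinarith
  have hMK : M ≤ A * (B * M) := by nlinarith
  rw [eK]
  exact ⟨(gU x hx t (by linarith) htT.le).trans hMK, (gW x hx t (by linarith) htT.le).trans hMK,
    (gUt x hx t (by linarith) htT.le).trans hMK, (gWt x hx t (by linarith) htT.le).trans hMK, hWtt'⟩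

/-- bounds on the partial derivatives of the coefficient -/
lemma coeff_bounds {C₀ : ℝ} {c : ℝ × ℝ → ℝ} (hc : ContDiff ℝ 2 c)
    (hC : ∀ k : ℕ, k ≤ 2 → ∀ q : ℝ × ℝ, ‖iteratedFDeriv ℝ k c q‖ ≤ C₀) (z : ℝ × ℝ) :
    |c z| ≤ C₀ ∧ |dX c z| ≤ C₀ ∧ |dT c z| ≤ C₀ ∧ |dT (dX c) z| ≤ C₀ ∧ |dT (dT c) z| ≤ C₀ := by
  have hd : DifferentiableAt ℝ (fderiv ℝ c) z :=
    (hc.fderiv_right (m := 1) (by norm_num)).differentiable (by norm_num) z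
  have key : ∀ v e : ℝ × ℝ, fderiv ℝ (fun y => fderiv ℝ c y v) z e = fderiv ℝ (fderiv ℝ c) z e v := by
    intro v e
    have := (hd.hasFDerivAt.clm_apply (hasFDerivAt_const v z)).fderiv
    rw [this]; simp
  have n1 : ‖((1:ℝ), (0:ℝ))‖ = 1 := by simp
  have n2 : ‖((0:ℝ), (1:ℝ))‖ = 1 := by simp
  have f0 := hC 0 (by norm_num) z
  rw [norm_iteratedFDeriv_zero] at f0
  have f1 := hC 1 (by norm_num) z
  rw [norm_iteratedFDeriv_one] at f1
  have f2 := hC 2 le_rfl z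
  have g1 : ∀ v : ℝ × ℝ, ‖v‖ = 1 → |fderiv ℝ c z v| ≤ C₀ := by
    intro v hv
    have := (fderiv ℝ c z).le_opNorm v
    rw [hv, mul_one] at this
    exact this.trans f1
  have g2 : ∀ v e : ℝ × ℝ, ‖v‖ = 1 → ‖e‖ = 1 → |fderiv ℝ (fderiv ℝ c) z e v| ≤ C₀ := by
    intro v e hv he
    have h := (iteratedFDeriv ℝ 2 c z).le_opNorm ![e, v]
    rw [iteratedFDeriv_two_apply] at h
    simp [hv, he] at h
    exact h.trans f2
  refine ⟨f0, g1 _ n1, g1 _ n2, ?_, ?_⟩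
  · unfold dT dX; rw [key]; exact g2 _ _ n1 n2
  · unfold dT; rw [key]; exact g2 _ _ n2 n2

set_option maxHeartbeats 1600000 in
/-- the estimate in terms of `dX`, `dT` -/
lemma main_bound {b P Q μ : ℝ} (hb : 0 < b) (hμ : 1 + (1 + P ^ 2) * Q ≤ 2 * μ * b) (hμ0 : 0 ≤ μ)
    {W U q : ℝ × ℝ → ℝ}
    (hW : ContDiff ℝ 2 W) (hU : ContDiff ℝ 1 U) (hqc : ContDiff ℝ 2 q)
    (hUd : U = fun z => dX W z + b * dT W z)
    (hq : ∀ z, |q z| ≤ Q) (hqt : ∀ z, |dT q z| ≤ Q)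
    (hr : ∀ z, |dX q z + b * dT q z| ≤ Q)
    (hrt : ∀ z, |dT (fun y => dX q y + b * dT q y) z| ≤ Q)
    (heq : ∀ x ∈ Set.Icc (0:ℝ) 1, ∀ t ≥ (0:ℝ), dX U (x, t) - b * dT U (x, t) = q (x, t) * W (x, t))
    (h0 : ∀ t ≥ (0:ℝ), W (0, t) = P * U (0, t))
    (h1 : ∀ t ≥ (0:ℝ), U (1, t) = 0) (m : ℝ)
    (hm0 : 0 ≤ m)
    (hm1 : ∫ x in (0:ℝ)..1, (W (x, 0) ^ 2 + dX W (x, 0) ^ 2) ≤ m ^ 2)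
    (hm2 : ∫ x in (0:ℝ)..1, dT W (x, 0) ^ 2 ≤ m ^ 2)
    (x : ℝ) (hx : x ∈ Set.Icc (0:ℝ) 1) (t : ℝ) (ht : 6 * b ≤ t) (R : ℝ)
    (hR : R = (1 + 3 * b + b ^ 2 + Q) * ((|P| + 1) ^ 3 * (1 + 4 * Q / b) ^ 2 *
      (Q * (Real.exp (μ * (1 + b)) * Real.sqrt (2 * (1 + P ^ 2) * (1 + b ^ 2))))) *
      Real.exp (μ * t) * m) :
    |W (x, t)| ≤ R ∧ |dT W (x, t)| ≤ R ∧ |dX W (x, t)| ≤ R ∧ |dT (dT W) (x, t)| ≤ R ∧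
      |dX (dT W) (x, t)| ≤ R ∧ |dX (dX W) (x, t)| ≤ R := by
  have hQ : 0 ≤ Q := le_trans (abs_nonneg _) (hq (0, 0))
  have hW1 := cd_21 hW
  have hWt := contDiff_dT hW
  have hWx := contDiff_dX hW
  have hWU : ∀ z, dX W z + b * dT W z = U z := fun z => by rw [hUd]
  have cW := hW1.continuous
  have cU := hU.continuous
  have cWx := hWx.continuous
  have cWt := hWt.continuous
  set κ := Real.sqrt (2 * (1 + P ^ 2) * (1 + b ^ 2)) with hκ
  have hκ2 : κ ^ 2 = 2 * (1 + P ^ 2) * (1 + b ^ 2) := Real.sq_sqrt (by positivity)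
  have hκ0 : 0 ≤ κ := Real.sqrt_nonneg _
  -- initial energy
  have hI : ∫ x in (0:ℝ)..1, (W (x, 0) ^ 2 + (1 + P ^ 2) * U (x, 0) ^ 2) ≤ (κ * m) ^ 2 := by
    have hle : ∫ x in (0:ℝ)..1, (W (x, 0) ^ 2 + (1 + P ^ 2) * U (x, 0) ^ 2) ≤
        ∫ x in (0:ℝ)..1, (2 * (1 + P ^ 2) * (W (x, 0) ^ 2 + dX W (x, 0) ^ 2) +
          2 * (1 + P ^ 2) * b ^ 2 * dT W (x, 0) ^ 2) := by
      apply intervalIntegral.integral_mono_on (by norm_num)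
        (Continuous.intervalIntegrable (by fun_prop) _ _)
        (Continuous.intervalIntegrable (by fun_prop) _ _)
      intro y _
      rw [← hWU]
      have s1 : (dX W (y, 0) + b * dT W (y, 0)) ^ 2 ≤
          2 * dX W (y, 0) ^ 2 + 2 * (b ^ 2 * dT W (y, 0) ^ 2) := by
        nlinarith [sq_nonneg (dX W (y, 0) - b * dT W (y, 0))]
      have s2 := mul_le_mul_of_nonneg_left s1 (by positivity : 0 ≤ 1 + P ^ 2)
      have s3 : 0 ≤ P ^ 2 * W (y, 0) ^ 2 := by positivity
      nlinarith [sq_nonneg (W (y, 0))]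
    refine hle.trans ?_
    rw [intervalIntegral.integral_add (Continuous.intervalIntegrable (by fun_prop) _ _)
      (Continuous.intervalIntegrable (by fun_prop) _ _), intervalIntegral.integral_const_mul,
      intervalIntegral.integral_const_mul]
    have s1 := mul_le_mul_of_nonneg_left hm1 (by positivity : 0 ≤ 2 * (1 + P ^ 2))
    have s2 := mul_le_mul_of_nonneg_left hm2 (by positivity : 0 ≤ 2 * (1 + P ^ 2) * b ^ 2)
    rw [mul_pow, hκ2]
    linarith
  set N := Q * (Real.exp (μ * (1 + b)) * κ) * Real.exp (μ * t) * m with hNdef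
  have hN : ∀ x ∈ Set.Icc (0:ℝ) 1, ∀ τ, b ≤ τ → τ ≤ t + 1 → |U (x, τ)| ≤ N := by
    intro x hx τ h2 h3
    have m0 : 0 ≤ b * x := mul_nonneg hb.le hx.1
    have m1 : b * x ≤ b := by nlinarith [hx.2]
    have he := energy_char hb hμ hW1 hU hq hWU heq h0 h1 (τ + b * x) (by linarith)
    have he2 : Real.exp (2 * μ * (τ + b * x)) *
        (∫ x in (0:ℝ)..1, (W (x, 0) ^ 2 + (1 + P ^ 2) * U (x, 0) ^ 2)) ≤
        (Real.exp (μ * (t + 1 + b)) * (κ * m)) ^ 2 := by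
      rw [mul_pow, ← Real.exp_nat_mul]
      refine mul_le_mul ?_ hI ?_ (Real.exp_pos _).le
      · apply Real.exp_le_exp.mpr
        push_cast
        have : μ * (τ + b * x) ≤ μ * (t + 1 + b) := mul_le_mul_of_nonneg_left (by linarith) hμ0
        linarith
      · apply intervalIntegral.integral_nonneg (by norm_num)
        intro y _
        positivity
    have hu := u_sup hb cW hU hqc.continuous hq heq h1 _ x hx τ h2 (he.trans he2)
    rw [Real.sqrt_sq (by positivity)] at hu
    have ex : Real.exp (μ * (t + 1 + b)) = Real.exp (μ * (1 + b)) * Real.exp (μ * t) := by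
      rw [← Real.exp_add]; congr 1; ring
    rw [ex] at hu
    refine hu.trans (le_of_eq ?_)
    rw [hNdef]; ring
  obtain ⟨bU, bW, bUt, bWt, bWtt⟩ := chain_bound (T := t + 1) hb hW hU hqc hUd hq hqt hr hrt heq h0 h1 hN
    x hx t ht (by linarith)
  set L := (|P| + 1) ^ 3 * (1 + 4 * Q / b) ^ 2 * N with hL
  have hRL : R = (1 + 3 * b + b ^ 2 + Q) * L := by rw [hR, hL, hNdef]; ring
  have hL0 : 0 ≤ L := (abs_nonneg _).trans bU
  have hbL : 0 ≤ b * L := by positivity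
  have hbbL : 0 ≤ b ^ 2 * L := by positivity
  have hQL : 0 ≤ Q * L := by positivity
  have e1 : dX W (x, t) = U (x, t) - b * dT W (x, t) := by rw [← hWU]; ring
  have e2 : dX (dT W) (x, t) = dT U (x, t) - b * dT (dT W) (x, t) := by
    rw [dX_dT_comm hW, hUd, dT_add hWx hWt]; ring
  have e3 : dX (dX W) (x, t) = b * dT U (x, t) + q (x, t) * W (x, t) - b * dX (dT W) (x, t) := by
    have := heq x hx t (by linarith)
    have h5 : dX U (x, t) = dX (dX W) (x, t) + b * dX (dT W) (x, t) := by
      rw [hUd, dX_add hWx hWt]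
    linarith
  have ab : |b| ≤ b := (abs_of_pos hb).le
  have c1 := abs_mul_le' ab bWt
  have c2 := abs_mul_le' ab bWtt
  have c3 := abs_mul_le' ab bUt
  have c4 := abs_mul_le' (hq (x, t)) bW
  have d2 : |dX (dT W) (x, t)| ≤ L + b * L := by
    rw [e2]; exact (abs_sub _ _).trans (by linarith)
  have c5 := abs_mul_le' ab d2
  have d3 : |dX (dX W) (x, t)| ≤ b * L + Q * L + b * (L + b * L) := by
    rw [e3]
    refine (abs_sub _ _).trans (add_le_add ((abs_add_le _ _).trans (by linarith)) c5)
  have d1 : |dX W (x, t)| ≤ L + b * L := by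
    rw [e1]; exact (abs_sub _ _).trans (by linarith)
  have hR2 : R = L + 3 * (b * L) + b ^ 2 * L + Q * L := by rw [hRL]; ring
  have d4 : b * L + Q * L + b * (L + b * L) = 2 * (b * L) + b ^ 2 * L + Q * L := by ring
  rw [d4] at d3
  clear_value L
  clear hRL hR
  rw [hR2]
  refine ⟨?_, ?_, ?_, ?_, ?_, ?_⟩ <;> linarith

set_option maxHeartbeats 1600000 in
/-- estimate (bound2) of Theorem 2 of the paper, for classical solutions.
Let `a > 0`, `p ∈ ℝ`, `C₀ > 0`. There exist `M₁ > 0` and `ω > 0` such that for every `C²`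
coefficient `c` with all partial derivatives up to order 2 bounded by `C₀`, and every `C²`
solution `w` of the perturbed wave problem, for all `α + β ≤ 2` and all `t ≥ 6/a`,
`sup_x |∂ₓ^α ∂ₜ^β w(x,t)| ≤ M₁ e^{ωt} max(‖w(·,0)‖_{H¹}, ‖wₜ(·,0)‖_{L²})`. -/
theorem perturbed_wave_C2_smoothing_bound
    (a p C₀ : ℝ) (ha : 0 < a) (hC₀ : 0 < C₀) :
    ∃ M₁ > (0:ℝ), ∃ ω > (0:ℝ),
      ∀ c : ℝ → ℝ → ℝ,
        ContDiff ℝ 2 (fun q : ℝ × ℝ => c q.1 q.2) →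
        (∀ k : ℕ, k ≤ 2 → ∀ q : ℝ × ℝ,
          ‖iteratedFDeriv ℝ k (fun q : ℝ × ℝ => c q.1 q.2) q‖ ≤ C₀) →
      ∀ w : ℝ → ℝ → ℝ,
        ContDiff ℝ 2 (fun q : ℝ × ℝ => w q.1 q.2) →
        -- the perturbed wave equation ∂ₜ²w − a²∂ₓ²w + c·w = 0 on (0,1)×(0,∞)
        (∀ x ∈ Set.Ioo (0:ℝ) 1, ∀ t > (0:ℝ),
          deriv (deriv (w x)) t
            - a ^ 2 * deriv (fun y => deriv (fun z => w z t) y) x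
            + c x t * w x t = 0) →
        -- boundary condition at x = 0 : w(0,t) = p (wₜ + a wₓ)(0,t)
        (∀ t > (0:ℝ),
          w 0 t = p * (deriv (w 0) t + a * deriv (fun y => w y t) 0)) →
        -- boundary condition at x = 1 : (wₜ + a wₓ)(1,t) = 0
        (∀ t > (0:ℝ),
          deriv (w 1) t + a * deriv (fun y => w y t) 1 = 0) →
      ∀ α β : ℕ, α + β ≤ 2 → ∀ t ≥ 6 / a, ∀ x ∈ Set.Icc (0:ℝ) 1,
        |pdxt w α β x t| ≤
          M₁ * Real.exp (ω * t) *
            max (Real.sqrt (∫ x in (0:ℝ)..1,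
                  ((w x 0) ^ 2 + (deriv (fun y => w y 0) x) ^ 2)))
                (Real.sqrt (∫ x in (0:ℝ)..1, (deriv (w x) 0) ^ 2)) := by
  have hb : 0 < 1 / a := by positivity
  set b := 1 / a with hbdef
  have hab : a * b = 1 := by rw [hbdef]; field_simp
  set P := p * a with hP
  set Q := b ^ 2 * (1 + b) * C₀ with hQdef
  have hQ : 0 < Q := by positivity
  set μ := (1 + (1 + P ^ 2) * Q) / (2 * b) with hμdef
  have hμ0 : 0 < μ := by positivity
  have hμ : 1 + (1 + P ^ 2) * Q ≤ 2 * μ * b := by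
    apply le_of_eq; rw [hμdef]; field_simp
  refine ⟨(1 + 3 * b + b ^ 2 + Q) * ((|P| + 1) ^ 3 * (1 + 4 * Q / b) ^ 2 *
      (Q * (Real.exp (μ * (1 + b)) * Real.sqrt (2 * (1 + P ^ 2) * (1 + b ^ 2))))), ?_, μ, hμ0, ?_⟩
  · have : 0 < Real.sqrt (2 * (1 + P ^ 2) * (1 + b ^ 2)) := Real.sqrt_pos.mpr (by positivity)
    positivity
  intro c hc hcC w hw hpde hbc0 hbc1 α β hαβ t ht x hx
  set W : ℝ × ℝ → ℝ := fun q => w q.1 q.2 with hWdef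
  set C : ℝ × ℝ → ℝ := fun q => c q.1 q.2 with hCdef
  have hW1 := cd_21 hw
  have hWt := contDiff_dT hw
  have hWx := contDiff_dX hw
  set U : ℝ × ℝ → ℝ := fun z => dX W z + b * dT W z with hU
  have hUc : ContDiff ℝ 1 U := by fun_prop
  set q : ℝ × ℝ → ℝ := fun z => b ^ 2 * C z with hq
  have hqc : ContDiff ℝ 2 q := by fun_prop
  have hC1 := cd_21 hc
  have hcb := coeff_bounds hc hcC
  -- translation of derivatives
  have tT : ∀ x, deriv (w x) = fun t => dT W (x, t) := fun x => funext fun t =>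
    (hasDerivAt_t hW1 x t).deriv
  have tX : ∀ t x, deriv (fun z => w z t) x = dX W (x, t) := fun t x => (hasDerivAt_x hW1 x t).deriv
  have tTT : ∀ x t, deriv (deriv (w x)) t = dT (dT W) (x, t) := fun x t => by
    rw [tT]; exact (hasDerivAt_t hWt x t).deriv
  have tXX : ∀ x t, deriv (fun y => deriv (fun z => w z t) y) x = dX (dX W) (x, t) := fun x t => by
    simp_rw [tX]; exact (hasDerivAt_x hWx x t).deriv
  have tXT : ∀ x t, deriv (fun y => deriv (w y) t) x = dX (dT W) (x, t) := fun x t => by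
    simp_rw [tT]; exact (hasDerivAt_x hWt x t).deriv
  -- the equation on the closed strip
  have heq : ∀ x ∈ Set.Icc (0:ℝ) 1, ∀ t ≥ (0:ℝ),
      dX U (x, t) - b * dT U (x, t) = q (x, t) * W (x, t) := by
    have hcl : IsClosed {z : ℝ × ℝ | dX U z - b * dT U z = q z * W z} := by
      have k1 := continuous_dX hUc
      have k2 := continuous_dT hUc
      have k3 := hqc.continuous
      have k4 := hW1.continuous
      exact isClosed_eq (by fun_prop) (by fun_prop)
    have hsub : Set.Ioo (0:ℝ) 1 ×ˢ Set.Ioi (0:ℝ) ⊆ {z : ℝ × ℝ | dX U z - b * dT U z = q z * W z} := by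
      rintro ⟨y, τ⟩ ⟨hy, hτ⟩
      have h := hpde y hy τ hτ
      rw [tTT, tXX] at h
      simp only [Set.mem_ofPred_eq]
      rw [hU, dX_add hWx hWt, dT_add hWx hWt, dX_dT_comm hw]
      have e : dX (dX W) (y, τ) = b ^ 2 * (a ^ 2 * dX (dX W) (y, τ)) := by
        have : b ^ 2 * a ^ 2 = 1 := by rw [← mul_pow, mul_comm b a, hab, one_pow]
        rw [← mul_assoc, this, one_mul]
      have h2 : a ^ 2 * dX (dX W) (y, τ) = dT (dT W) (y, τ) + C (y, τ) * W (y, τ) := by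
        simp only [hCdef, hWdef] at *
        linarith
      rw [h2] at e
      rw [e, hq]
      ring
    have := closure_minimal hsub hcl
    rw [closure_prod_eq, closure_Ioo (by norm_num), closure_Ioi] at this
    intro x hx t ht
    exact this (Set.mk_mem_prod hx ht)
  have h0 : ∀ t ≥ (0:ℝ), W (0, t) = P * U (0, t) := by
    have k3 := hUc.continuous
    have k4 := hW1.continuous
    have hcl : IsClosed {τ : ℝ | W (0, τ) = P * U (0, τ)} :=
      isClosed_eq (by fun_prop) (by fun_prop)
    have hsub : Set.Ioi (0:ℝ) ⊆ {τ : ℝ | W (0, τ) = P * U (0, τ)} := by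
      intro τ hτ
      have h := hbc0 τ hτ
      rw [tT, tX] at h
      simp only [Set.mem_ofPred_eq]
      have e : P * U (0, τ) = p * (dT W (0, τ) * (a * b) + a * dX W (0, τ)) := by
        rw [hP, hU]; ring
      rw [e, hab, mul_one]
      exact h
    have := closure_minimal hsub hcl
    rw [closure_Ioi] at this
    exact fun t ht => this ht
  have h1 : ∀ t ≥ (0:ℝ), U (1, t) = 0 := by
    have k3 := hUc.continuous
    have hcl : IsClosed {τ : ℝ | U (1, τ) = 0} :=
      isClosed_eq (by fun_prop) (by fun_prop)
    have hsub : Set.Ioi (0:ℝ) ⊆ {τ : ℝ | U (1, τ) = 0} := by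
      intro τ hτ
      have h := hbc1 τ hτ
      rw [tT, tX] at h
      simp only [Set.mem_ofPred_eq]
      have e : U (1, τ) = b * (dT W (1, τ) + a * dX W (1, τ)) + (1 - a * b) * dX W (1, τ) := by
        rw [hU]; ring
      rw [e, hab]
      simp only at h
      rw [h]; ring
    have := closure_minimal hsub hcl
    rw [closure_Ioi] at this
    exact fun t ht => this ht
  -- coefficient bounds
  have hbb : 0 < b ^ 2 := by positivity
  have qT : ∀ z, dT q z = b ^ 2 * dT C z := by
    intro z
    have := ((cd_diff hC1) z).hasFDerivAt.const_mul (b ^ 2)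
    unfold dT
    rw [hq, this.fderiv]; simp
  have qX : ∀ z, dX q z = b ^ 2 * dX C z := by
    intro z
    have := ((cd_diff hC1) z).hasFDerivAt.const_mul (b ^ 2)
    unfold dX
    rw [hq, this.fderiv]; simp
  have hbC : 0 ≤ b * C₀ := by positivity
  have absb : ∀ y : ℝ, |y| ≤ (1 + b) * C₀ → |b ^ 2 * y| ≤ Q := by
    intro y hy
    rw [abs_mul, abs_of_pos hbb, hQdef, mul_assoc]
    exact mul_le_mul_of_nonneg_left hy hbb.le
  have absr : ∀ y z : ℝ, |y| ≤ C₀ → |z| ≤ C₀ → |y + b * z| ≤ (1 + b) * C₀ := by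
    intro y z hy hz
    refine (abs_add_le _ _).trans ?_
    rw [abs_mul, abs_of_pos hb]
    nlinarith
  have bq : ∀ z, |q z| ≤ Q := fun z => absb _ ((hcb z).1.trans (by linarith))
  have bqt : ∀ z, |dT q z| ≤ Q := fun z => by
    rw [qT]; exact absb _ ((hcb z).2.2.1.trans (by linarith))
  have br : ∀ z, |dX q z + b * dT q z| ≤ Q := fun z => by
    have e : dX q z + b * dT q z = b ^ 2 * (dX C z + b * dT C z) := by rw [qX, qT]; ring
    rw [e]; exact absb _ (absr _ _ (hcb z).2.1 (hcb z).2.2.1)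
  have brt : ∀ z, |dT (fun y => dX q y + b * dT q y) z| ≤ Q := fun z => by
    have hCx := contDiff_dX hc
    have hCt := contDiff_dT hc
    have e : (fun y => dX q y + b * dT q y) = fun y => b ^ 2 * (dX C y + b * dT C y) := by
      funext y; rw [qX, qT]; ring
    have e2 : dT (fun y => b ^ 2 * (dX C y + b * dT C y)) z =
        b ^ 2 * dT (fun y => dX C y + b * dT C y) z := by
      have hr : ContDiff ℝ 1 (fun y => dX C y + b * dT C y) := by fun_prop
      have := ((cd_diff hr) z).hasFDerivAt.const_mul (b ^ 2)
      unfold dT at this ⊢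
      rw [this.fderiv]; simp
    rw [e, e2, dT_add hCx hCt]
    exact absb _ (absr _ _ (hcb z).2.2.2.1 (hcb z).2.2.2.2)
  -- initial data
  set m := max (Real.sqrt (∫ x in (0:ℝ)..1,
                  ((w x 0) ^ 2 + (deriv (fun y => w y 0) x) ^ 2)))
                (Real.sqrt (∫ x in (0:ℝ)..1, (deriv (w x) 0) ^ 2)) with hm
  have hm0 : 0 ≤ m := (Real.sqrt_nonneg _).trans (le_max_left _ _)
  have hm1 : ∫ x in (0:ℝ)..1, (W (x, 0) ^ 2 + dX W (x, 0) ^ 2) ≤ m ^ 2 := by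
    have h := le_max_left (Real.sqrt (∫ x in (0:ℝ)..1,
                  ((w x 0) ^ 2 + (deriv (fun y => w y 0) x) ^ 2)))
                (Real.sqrt (∫ x in (0:ℝ)..1, (deriv (w x) 0) ^ 2))
    rw [← hm] at h
    simp_rw [tX] at h
    exact (Real.sqrt_le_left hm0).mp h
  have hm2 : ∫ x in (0:ℝ)..1, dT W (x, 0) ^ 2 ≤ m ^ 2 := by
    have h := le_max_right (Real.sqrt (∫ x in (0:ℝ)..1,
                  ((w x 0) ^ 2 + (deriv (fun y => w y 0) x) ^ 2)))
                (Real.sqrt (∫ x in (0:ℝ)..1, (deriv (w x) 0) ^ 2))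
    rw [← hm] at h
    simp_rw [tT] at h
    exact (Real.sqrt_le_left hm0).mp h
  have ht6 : 6 * b ≤ t := by
    rw [hbdef]; have : 6 * (1 / a) = 6 / a := by ring
    rw [this]; exact ht
  obtain ⟨r1, r2, r3, r4, r5, r6⟩ := main_bound hb hμ hμ0.le hw hUc hqc hU bq bqt br brt heq h0 h1 m hm0
    hm1 hm2 x hx t ht6 _ rfl
  have cases : (α = 0 ∧ β = 0) ∨ (α = 0 ∧ β = 1) ∨ (α = 1 ∧ β = 0) ∨ (α = 0 ∧ β = 2) ∨
      (α = 1 ∧ β = 1) ∨ (α = 2 ∧ β = 0) := by omega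
  unfold pdxt
  rcases cases with ⟨rfl, rfl⟩ | ⟨rfl, rfl⟩ | ⟨rfl, rfl⟩ | ⟨rfl, rfl⟩ | ⟨rfl, rfl⟩ | ⟨rfl, rfl⟩
  · simp only [iteratedDeriv_zero]; exact r1
  · simp only [iteratedDeriv_zero, iteratedDeriv_one, tT]; exact r2
  · simp only [iteratedDeriv_zero, iteratedDeriv_one, tX]; exact r3
  · simp only [iteratedDeriv_succ, iteratedDeriv_zero, tTT]; exact r4
  · simp only [iteratedDeriv_one, tXT]; exact r5
  · have e : iteratedDeriv 2 (fun y => iteratedDeriv 0 (w y) t) x = dX (dX W) (x, t) := by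
      rw [← tXX]
      simp only [iteratedDeriv_succ, iteratedDeriv_zero]
    rw [e]; exact r6
end

section
/- Let a > 0 and p ∈ ℝ be fixed, and set T = 6/a. For every γ > 0 there exist ε > 0 and M₂ > 0 such that the following holds: for every function c : [0,1]×[0,∞) → ℝ that is twice continuously differentiable with all partial derivatives up to order 2 bounded in absolute value by ε, and every twice continuously differentiable function w : [0,1]×[0,∞) → ℝ satisfying ∂²_t w − a² ∂²_x w + c·w = 0 on (0,1)×(0,∞), w(0,t) = p·(∂_t w + a ∂_x w)(0,t) and (∂_t w + a ∂_x w)(1,t) = 0 for all t > 0, one has for every pair of nonnegative integers α, β with α + β ≤ 2 and every t > T: sup_{x∈[0,1]} |∂_x^α ∂_t^β w(x,t)| ≤ M₂ e^{−γ t} · max{ (∫_0^1 [w(x,0)² + (∂_x w(x,0))²] dx)^{1/2}, (∫_0^1 (∂_t w(x,0))² dx)^{1/2} }. -/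
namespace PW

/-- `g` is `C¹` with partial derivatives `gx`, `gt`. -/
structure C1 (g gx gt : ℝ → ℝ → ℝ) : Prop where
  cx : Continuous (fun q : ℝ × ℝ => gx q.1 q.2)
  ct : Continuous (fun q : ℝ × ℝ => gt q.1 q.2)
  hd : ∀ x t, HasFDerivAt (fun q : ℝ × ℝ => g q.1 q.2)
    (gx x t • ContinuousLinearMap.fst ℝ ℝ ℝ + gt x t • ContinuousLinearMap.snd ℝ ℝ ℝ) (x, t)

variable {g gx gt f fx ft : ℝ → ℝ → ℝ}

lemma C1.cont (h : C1 g gx gt) : Continuous (fun q : ℝ × ℝ => g q.1 q.2) :=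
  continuous_iff_continuousAt.2 fun q => (h.hd q.1 q.2).continuousAt

lemma C1.line (h : C1 g gx gt) (x t k l s : ℝ) :
    HasDerivAt (fun σ => g (x + k * σ) (t + l * σ))
      (k * gx (x + k * s) (t + l * s) + l * gt (x + k * s) (t + l * s)) s := by
  have h1 : HasDerivAt (fun σ : ℝ => (x + k * σ, t + l * σ)) (k, l) s := by
    have e1 : HasDerivAt (fun σ : ℝ => x + k * σ) k s := by
      simpa using ((hasDerivAt_id s).const_mul k).const_add x
    have e2 : HasDerivAt (fun σ : ℝ => t + l * σ) l s := by
      simpa using ((hasDerivAt_id s).const_mul l).const_add t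
    exact e1.prodMk e2
  have h2 := (h.hd (x + k * s) (t + l * s)).comp_hasDerivAt s h1
  refine h2.congr_deriv ?_
  simp; ring

lemma C1.dx (h : C1 g gx gt) (x t : ℝ) : HasDerivAt (fun y => g y t) (gx x t) x := by
  simpa using h.line 0 t 1 0 x

lemma C1.dt (h : C1 g gx gt) (x t : ℝ) : HasDerivAt (g x) (gt x t) t := by
  simpa using h.line x 0 0 1 t

lemma C1.add (h : C1 g gx gt) (h' : C1 f fx ft) :
    C1 (fun x t => g x t + f x t) (fun x t => gx x t + fx x t) (fun x t => gt x t + ft x t) where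
  cx := h.cx.add h'.cx
  ct := h.ct.add h'.ct
  hd x t := by
    refine HasFDerivAt.congr_fderiv ((h.hd x t).add (h'.hd x t)) ?_
    ext <;> simp

lemma C1.sub (h : C1 g gx gt) (h' : C1 f fx ft) :
    C1 (fun x t => g x t - f x t) (fun x t => gx x t - fx x t) (fun x t => gt x t - ft x t) where
  cx := h.cx.sub h'.cx
  ct := h.ct.sub h'.ct
  hd x t := by
    refine HasFDerivAt.congr_fderiv ((h.hd x t).sub (h'.hd x t)) ?_
    ext <;> simp

lemma C1.mul (h : C1 g gx gt) (h' : C1 f fx ft) :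
    C1 (fun x t => g x t * f x t) (fun x t => gx x t * f x t + g x t * fx x t)
      (fun x t => gt x t * f x t + g x t * ft x t) where
  cx := (h.cx.mul h'.cont).add (h.cont.mul h'.cx)
  ct := (h.ct.mul h'.cont).add (h.cont.mul h'.ct)
  hd x t := by
    refine HasFDerivAt.congr_fderiv ((h.hd x t).mul (h'.hd x t)) ?_
    ext <;> simp <;> ring

lemma C1.smul (h : C1 g gx gt) (k : ℝ) :
    C1 (fun x t => k * g x t) (fun x t => k * gx x t) (fun x t => k * gt x t) where
  cx := h.cx.const_mul k
  ct := h.ct.const_mul k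
  hd x t := by
    refine HasFDerivAt.congr_fderiv ((h.hd x t).const_mul k) ?_
    ext <;> simp

lemma C1.shift (h : C1 g gx gt) (k : ℝ) :
    C1 (fun x t => g x (t + k)) (fun x t => gx x (t + k)) (fun x t => gt x (t + k)) where
  cx := h.cx.comp (continuous_fst.prodMk (continuous_snd.add continuous_const))
  ct := h.ct.comp (continuous_fst.prodMk (continuous_snd.add continuous_const))
  hd x t := by
    have h1 : HasFDerivAt (fun q : ℝ × ℝ => (q.1, q.2 + k)) (ContinuousLinearMap.id ℝ (ℝ × ℝ)) (x, t) := by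
      have := (hasFDerivAt_id (𝕜 := ℝ) (x, t)).add_const ((0 : ℝ), k)
      exact this.congr_of_eventuallyEq (Filter.Eventually.of_forall fun q => by ext <;> simp)
    have h2 := (h.hd x (t + k)).comp (x, t) h1
    simpa [Function.comp_def] using h2

lemma C1.of_contDiff {G : ℝ × ℝ → ℝ} (h : ContDiff ℝ 1 G) :
    C1 (fun x t => G (x, t)) (fun x t => fderiv ℝ G (x, t) (1, 0))
      (fun x t => fderiv ℝ G (x, t) (0, 1)) where
  cx := (h.continuous_fderiv (by norm_num)).clm_apply continuous_const
  ct := (h.continuous_fderiv (by norm_num)).clm_apply continuous_const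
  hd x t := by
    refine HasFDerivAt.congr_fderiv ((h.differentiable (by norm_num) (x, t)).hasFDerivAt) ?_
    ext <;> simp

lemma C2_data (g : ℝ → ℝ → ℝ) (h : ContDiff ℝ 2 (fun q : ℝ × ℝ => g q.1 q.2)) :
    ∃ gx gt gxx gxt gtt : ℝ → ℝ → ℝ, C1 g gx gt ∧ C1 gx gxx gxt ∧ C1 gt gxt gtt ∧
      ∀ ε : ℝ, (∀ k : ℕ, k ≤ 2 → ∀ q : ℝ × ℝ,
          ‖iteratedFDeriv ℝ k (fun q : ℝ × ℝ => g q.1 q.2) q‖ ≤ ε) →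
        ∀ x t, |g x t| ≤ ε ∧ |gx x t| ≤ ε ∧ |gt x t| ≤ ε ∧ |gxx x t| ≤ ε ∧ |gxt x t| ≤ ε
          ∧ |gtt x t| ≤ ε := by
  set G : ℝ × ℝ → ℝ := fun q => g q.1 q.2 with hG
  have hf : ContDiff ℝ 1 (fderiv ℝ G) := h.fderiv_right (by norm_num)
  have h10 : ContDiff ℝ 1 (fun q => fderiv ℝ G q (1, 0)) := hf.clm_apply contDiff_const
  have h01 : ContDiff ℝ 1 (fun q => fderiv ℝ G q (0, 1)) := hf.clm_apply contDiff_const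
  have key : ∀ (v : ℝ × ℝ) q u, fderiv ℝ (fun q => fderiv ℝ G q v) q u
      = fderiv ℝ (fderiv ℝ G) q u v := by
    intro v q u
    have := ((hf.differentiable (by norm_num) q).hasFDerivAt.clm_apply
      (hasFDerivAt_const v q)).fderiv
    rw [this]; simp
  have sym : ∀ q, fderiv ℝ (fderiv ℝ G) q (1, 0) (0, 1) = fderiv ℝ (fderiv ℝ G) q (0, 1) (1, 0) :=
    fun q => (h.contDiffAt.isSymmSndFDerivAt (by simp)) _ _
  refine ⟨_, _, _, _, fun x t => fderiv ℝ (fun q => fderiv ℝ G q (0, 1)) (x, t) (0, 1),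
    C1.of_contDiff (h.of_le (by norm_num)), C1.of_contDiff h10, ?_, ?_⟩
  · convert C1.of_contDiff h01 using 1
    ext x t
    rw [key, key, sym]
  · intro ε hε x t
    have n10 : ‖((1 : ℝ), (0 : ℝ))‖ = 1 := by simp
    have n01 : ‖((0 : ℝ), (1 : ℝ))‖ = 1 := by simp
    have b0 : |g x t| ≤ ε := by simpa using hε 0 (by norm_num) (x, t)
    have b1 : ‖fderiv ℝ G (x, t)‖ ≤ ε := by
      have := hε 1 (by norm_num) (x, t)
      rwa [norm_iteratedFDeriv_one] at this
    have b2 : ‖fderiv ℝ (fderiv ℝ G) (x, t)‖ ≤ ε := by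
      have := hε 2 (by norm_num) (x, t)
      rwa [← norm_iteratedFDeriv_fderiv, norm_iteratedFDeriv_one] at this
    have B1 : ∀ v : ℝ × ℝ, ‖v‖ = 1 → |fderiv ℝ G (x, t) v| ≤ ε := by
      intro v hv
      have := (fderiv ℝ G (x, t)).le_opNorm v
      rw [hv, mul_one] at this
      exact this.trans b1
    have B2 : ∀ u v : ℝ × ℝ, ‖u‖ = 1 → ‖v‖ = 1 → |fderiv ℝ (fderiv ℝ G) (x, t) u v| ≤ ε := by
      intro u v hu hv
      have := (fderiv ℝ (fderiv ℝ G) (x, t)).le_opNorm₂ u v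
      rw [hv, hu, mul_one, mul_one] at this
      exact this.trans b2
    refine ⟨b0, B1 _ n10, B1 _ n01, ?_, ?_, ?_⟩
    all_goals
      beta_reduce
      rw [key]
      apply B2 <;> assumption

end PW
namespace PW

lemma C1.ftc {g gx gt : ℝ → ℝ → ℝ} (h : C1 g gx gt) (x t k ρ : ℝ) :
    ∫ σ in (0:ℝ)..ρ, (k * gx (x + k * σ) (t - σ) - gt (x + k * σ) (t - σ))
      = g (x + k * ρ) (t - ρ) - g x t := by
  have hl : ∀ s, HasDerivAt (fun σ => g (x + k * σ) (t - σ))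
      (k * gx (x + k * s) (t - s) - gt (x + k * s) (t - s)) s := by
    intro s
    simpa [sub_eq_add_neg] using h.line x t k (-1) s
  have hp : Continuous (fun σ : ℝ => (x + k * σ, t - σ)) := by fun_prop
  have hc : Continuous (fun σ => k * gx (x + k * σ) (t - σ) - gt (x + k * σ) (t - σ)) :=
    ((h.cx.comp hp).const_mul k).sub (h.ct.comp hp)
  rw [intervalIntegral.integral_eq_sub_of_hasDerivAt (fun s _ => hl s) (hc.intervalIntegrable _ _)]
  simp

lemma abs_int_le {f : ℝ → ℝ} {ρ A : ℝ} (hρ : 0 ≤ ρ) (h : ∀ s ∈ Set.Icc 0 ρ, |f s| ≤ A) :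
    |∫ σ in (0:ℝ)..ρ, f σ| ≤ A * ρ := by
  have := intervalIntegral.norm_integral_le_of_norm_le_const (a := 0) (b := ρ) (f := f) (C := A)
    (fun s hs => by
      rw [Set.uIoc_of_le hρ] at hs
      exact h s ⟨hs.1.le, hs.2⟩)
  simpa [abs_of_nonneg hρ] using this

lemma param_deriv {F Fx Ft : ℝ → ℝ → ℝ} (h : C1 F Fx Ft) (x a t L : ℝ) :
    HasDerivAt (fun s => ∫ σ in (0:ℝ)..L, F (x + a * σ) (s - σ))
      (∫ σ in (0:ℝ)..L, Ft (x + a * σ) (t - σ)) t := by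
  have hc2 : Continuous (fun q : ℝ × ℝ => Ft (x + a * q.1) (q.2 - q.1)) :=
    h.ct.comp (f := fun q : ℝ × ℝ => (x + a * q.1, q.2 - q.1)) (by fun_prop)
  obtain ⟨C, hC⟩ := (isCompact_uIcc.prod (isCompact_Icc (a := t - 1) (b := t + 1))).exists_bound_of_continuousOn
    (s := (Set.uIcc 0 L) ×ˢ (Set.Icc (t - 1) (t + 1))) hc2.continuousOn
  have hF : ∀ s, Continuous (fun σ => F (x + a * σ) (s - σ)) := fun s =>
    h.cont.comp (f := fun σ : ℝ => (x + a * σ, s - σ)) (by fun_prop)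
  have hFt : ∀ s, Continuous (fun σ => Ft (x + a * σ) (s - σ)) := fun s =>
    h.ct.comp (f := fun σ : ℝ => (x + a * σ, s - σ)) (by fun_prop)
  refine (intervalIntegral.hasDerivAt_integral_of_dominated_loc_of_deriv_le
    (F := fun s σ => F (x + a * σ) (s - σ)) (F' := fun s σ => Ft (x + a * σ) (s - σ))
    (bound := fun _ => C)
    (s := Set.Icc (t - 1) (t + 1)) (Icc_mem_nhds (by linarith) (by linarith)) ?_ ?_ ?_ ?_ ?_ ?_).2
  · exact Filter.Eventually.of_forall fun s => (hF s).aestronglyMeasurable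
  · exact (hF t).intervalIntegrable _ _
  · exact (hFt t).aestronglyMeasurable
  · refine Filter.Eventually.of_forall fun σ hσ s hs => ?_
    exact hC (σ, s) ⟨Set.uIoc_subset_uIcc hσ, hs⟩
  · exact intervalIntegrable_const
  · refine Filter.Eventually.of_forall fun σ hσ s hs => ?_
    have := h.line (x + a * σ) (-σ) 0 1 s
    simpa [sub_eq_add_neg, add_comm] using this

/-- A solution of the inhomogeneous wave problem, with all its derivatives. -/
structure Sol (a p : ℝ) (w wx wt wxx wxt wtt F Fx Ft : ℝ → ℝ → ℝ) : Prop where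
  hw : C1 w wx wt
  hwx : C1 wx wxx wxt
  hwt : C1 wt wxt wtt
  hF : C1 F Fx Ft
  pde : ∀ x ∈ Set.Icc (0:ℝ) 1, ∀ t ≥ (0:ℝ), wtt x t - a ^ 2 * wxx x t = F x t
  bc0 : ∀ t ≥ (0:ℝ), w 0 t = p * (wt 0 t + a * wx 0 t)
  bc1 : ∀ t ≥ (0:ℝ), wt 1 t + a * wx 1 t = 0

variable {a p : ℝ} {w wx wt wxx wxt wtt F Fx Ft : ℝ → ℝ → ℝ}

lemma Sol.hu (S : Sol a p w wx wt wxx wxt wtt F Fx Ft) :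
    C1 (fun x t => wt x t + a * wx x t) (fun x t => wxt x t + a * wxx x t)
      (fun x t => wtt x t + a * wxt x t) := S.hwt.add (S.hwx.smul a)

lemma Sol.hv (S : Sol a p w wx wt wxx wxt wtt F Fx Ft) :
    C1 (fun x t => wt x t - a * wx x t) (fun x t => wxt x t - a * wxx x t)
      (fun x t => wtt x t - a * wxt x t) := S.hwt.sub (S.hwx.smul a)

lemma Sol.u_formula (S : Sol a p w wx wt wxx wxt wtt F Fx Ft) (ha : 0 < a) {x t ρ : ℝ}
    (hx : x ∈ Set.Icc (0:ℝ) 1) (h0 : 0 ≤ ρ) (h1 : x + a * ρ ≤ 1) (h2 : ρ ≤ t) :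
    wt x t + a * wx x t = wt (x + a * ρ) (t - ρ) + a * wx (x + a * ρ) (t - ρ)
      + ∫ σ in (0:ℝ)..ρ, F (x + a * σ) (t - σ) := by
  have h := S.hu.ftc x t a ρ
  have e : ∫ σ in (0:ℝ)..ρ, F (x + a * σ) (t - σ) = - ∫ σ in (0:ℝ)..ρ,
      (a * (wxt (x + a * σ) (t - σ) + a * wxx (x + a * σ) (t - σ))
        - (wtt (x + a * σ) (t - σ) + a * wxt (x + a * σ) (t - σ))) := by
    rw [← intervalIntegral.integral_neg]
    apply intervalIntegral.integral_congr
    intro σ hσ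
    rw [Set.uIcc_of_le h0] at hσ
    have := S.pde (x + a * σ) ⟨by nlinarith [hx.1, hσ.1], by nlinarith [hσ.2]⟩ (t - σ)
      (by linarith [hσ.2])
    beta_reduce
    rw [← this]; ring
  rw [e, h]; ring

lemma Sol.v_formula (S : Sol a p w wx wt wxx wxt wtt F Fx Ft) (ha : 0 < a) {x t ρ : ℝ}
    (hx : x ∈ Set.Icc (0:ℝ) 1) (h0 : 0 ≤ ρ) (h1 : 0 ≤ x - a * ρ) (h2 : ρ ≤ t) :
    wt x t - a * wx x t = wt (x - a * ρ) (t - ρ) - a * wx (x - a * ρ) (t - ρ)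
      + ∫ σ in (0:ℝ)..ρ, F (x - a * σ) (t - σ) := by
  have h := S.hv.ftc x t (-a) ρ
  simp only [neg_mul, ← sub_eq_add_neg] at h
  have e : ∫ σ in (0:ℝ)..ρ, F (x - a * σ) (t - σ) = - ∫ σ in (0:ℝ)..ρ,
      (-(a * (wxt (x - a * σ) (t - σ) - a * wxx (x - a * σ) (t - σ)))
        - (wtt (x - a * σ) (t - σ) - a * wxt (x - a * σ) (t - σ))) := by
    rw [← intervalIntegral.integral_neg]
    apply intervalIntegral.integral_congr
    intro σ hσ
    rw [Set.uIcc_of_le h0] at hσ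
    have := S.pde (x - a * σ) ⟨by nlinarith [hσ.2], by nlinarith [hx.2, hσ.1]⟩ (t - σ)
      (by linarith [hσ.2])
    beta_reduce
    rw [← this]; ring
  rw [e, h]; ring

lemma Sol.w_formula (S : Sol a p w wx wt wxx wxt wtt F Fx Ft) (x t ρ : ℝ) :
    w x t = w (x - a * ρ) (t - ρ)
      + ∫ σ in (0:ℝ)..ρ, (wt (x - a * σ) (t - σ) + a * wx (x - a * σ) (t - σ)) := by
  have h := S.hw.ftc x t (-a) ρ
  simp only [neg_mul, ← sub_eq_add_neg] at h
  have e : ∫ σ in (0:ℝ)..ρ, (wt (x - a * σ) (t - σ) + a * wx (x - a * σ) (t - σ))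
      = - ∫ σ in (0:ℝ)..ρ, (-(a * wx (x - a * σ) (t - σ)) - wt (x - a * σ) (t - σ)) := by
    rw [← intervalIntegral.integral_neg]
    congr 1; ext σ; ring
  rw [e, h]; ring

/-- Zeroth order bounds for `u`. -/
lemma Sol.u_bound (S : Sol a p w wx wt wxx wxt wtt F Fx Ft) (ha : 0 < a) {x t A : ℝ}
    (hx : x ∈ Set.Icc (0:ℝ) 1) (ht : 1 / a ≤ t)
    (hA : ∀ y ∈ Set.Icc (0:ℝ) 1, ∀ s ∈ Set.Icc (t - 1 / a) t, |F y s| ≤ A) :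
    |wt x t + a * wx x t| ≤ A / a := by
  have hA0 : 0 ≤ A := (abs_nonneg _).trans (hA x hx t ⟨by have : 0 < 1 / a := by positivity
                                                          linarith, le_rfl⟩)
  have hL : a * ((1 - x) / a) = 1 - x := by field_simp
  have hL0 : 0 ≤ (1 - x) / a := div_nonneg (by linarith [hx.2]) ha.le
  have hL1 : (1 - x) / a ≤ 1 / a := by gcongr; linarith [hx.1]
  have := S.u_formula ha (t := t) hx hL0 (by linarith) (by linarith)
  rw [hL, show x + (1 - x) = 1 by ring, S.bc1 _ (by linarith), zero_add] at this
  rw [this]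
  refine (abs_int_le (A := A) hL0 ?_).trans ?_
  · intro σ hσ
    have : a * σ ≤ 1 - x := by rw [← hL]; gcongr; exact hσ.2
    exact hA _ ⟨by nlinarith [hx.1, hσ.1], by linarith⟩ _ ⟨by linarith [hσ.2], by linarith [hσ.1]⟩
  · calc A * ((1 - x) / a) ≤ A * (1 / a) := by gcongr
      _ = A / a := by ring

/-- Zeroth order bounds for `w`. -/
lemma Sol.w_bound (S : Sol a p w wx wt wxx wxt wtt F Fx Ft) (ha : 0 < a) {x t A : ℝ}
    (hx : x ∈ Set.Icc (0:ℝ) 1) (ht : 2 / a ≤ t)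
    (hA : ∀ y ∈ Set.Icc (0:ℝ) 1, ∀ s ∈ Set.Icc (t - 2 / a) t, |F y s| ≤ A) :
    |w x t| ≤ A * ((|p| + 1 / a) / a) := by
  have h2 : 2 / a = 1 / a + 1 / a := by ring
  have h1p : 0 < 1 / a := by positivity
  have hA0 : 0 ≤ A := (abs_nonneg _).trans (hA x hx t ⟨by linarith, le_rfl⟩)
  have hL : a * (x / a) = x := by field_simp
  have hL0 : 0 ≤ x / a := div_nonneg hx.1 ha.le
  have hL1 : x / a ≤ 1 / a := by gcongr; exact hx.2
  have hu : ∀ y ∈ Set.Icc (0:ℝ) 1, ∀ s ∈ Set.Icc (t - 1 / a) t,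
      |wt y s + a * wx y s| ≤ A / a := by
    intro y hy s hs
    refine S.u_bound ha hy (by linarith [hs.1]) ?_
    intro y' hy' s' hs'
    exact hA y' hy' s' ⟨by linarith [hs.1, hs'.1], by linarith [hs.2, hs'.2]⟩
  rw [S.w_formula x t (x / a), hL, sub_self, S.bc0 _ (by linarith)]
  have e1 : |p * (wt 0 (t - x / a) + a * wx 0 (t - x / a))| ≤ |p| * (A / a) := by
    rw [abs_mul]
    gcongr
    exact hu 0 ⟨le_rfl, zero_le_one⟩ _ ⟨by linarith, by linarith⟩
  have e2 : |∫ σ in (0:ℝ)..(x / a), (wt (x - a * σ) (t - σ) + a * wx (x - a * σ) (t - σ))|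
      ≤ (A / a) * (x / a) := by
    apply abs_int_le hL0
    intro σ hσ
    have : a * σ ≤ x := by
      conv_rhs => rw [← hL]
      gcongr; exact hσ.2
    exact hu _ ⟨by linarith, by nlinarith [hx.2, hσ.1]⟩ _ ⟨by linarith [hσ.2], by linarith [hσ.1]⟩
  have e3 : (A / a) * (x / a) ≤ (A / a) * (1 / a) := by gcongr
  refine (abs_add_le _ _).trans ?_
  calc _ ≤ |p| * (A / a) + (A / a) * (1 / a) := by linarith
    _ = _ := by ring

/-- Bound for the time derivative of `u`: the smoothing effect. -/
lemma Sol.ut_bound (S : Sol a p w wx wt wxx wxt wtt F Fx Ft) (ha : 0 < a) {x t A : ℝ}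
    (hx : x ∈ Set.Icc (0:ℝ) 1) (ht : 1 / a < t)
    (hA : ∀ y ∈ Set.Icc (0:ℝ) 1, ∀ s ∈ Set.Icc (t - 1 / a) t, |F y s| ≤ A)
    (hA' : ∀ y ∈ Set.Icc (0:ℝ) 1, ∀ s ∈ Set.Icc (t - 1 / a) t, |Ft y s + a * Fx y s| ≤ A) :
    |wtt x t + a * wxt x t| ≤ A * (1 + 1 / a) := by
  have h1p : 0 < 1 / a := by positivity
  have hA0 : 0 ≤ A := (abs_nonneg _).trans (hA x hx t ⟨by linarith, le_rfl⟩)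
  set L := (1 - x) / a with hLdef
  have hL : a * L = 1 - x := by rw [hLdef]; field_simp
  have hL0 : 0 ≤ L := div_nonneg (by linarith [hx.2]) ha.le
  have hL1 : L ≤ 1 / a := by rw [hLdef]; gcongr; linarith [hx.1]
  have hd : HasDerivAt (fun s => wt x s + a * wx x s)
      (∫ σ in (0:ℝ)..L, Ft (x + a * σ) (t - σ)) t := by
    refine (param_deriv S.hF x a t L).congr_of_eventuallyEq ?_
    filter_upwards [lt_mem_nhds ht] with s hs
    have := S.u_formula ha (t := s) hx hL0 (by linarith) (by linarith)
    rw [hL, show x + (1 - x) = 1 by ring, S.bc1 _ (by linarith), zero_add] at this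
    exact this
  have heq := (S.hu.dt x t).unique hd
  rw [heq]
  have hftc := S.hF.ftc x t a L
  rw [hL, show x + (1 - x) = 1 by ring] at hftc
  have hp : Continuous (fun σ : ℝ => (x + a * σ, t - σ)) := by fun_prop
  have c1 : Continuous (fun σ => Fx (x + a * σ) (t - σ)) := S.hF.cx.comp hp
  have c2 : Continuous (fun σ => Ft (x + a * σ) (t - σ)) := S.hF.ct.comp hp
  have e : ∫ σ in (0:ℝ)..L, Ft (x + a * σ) (t - σ)
      = (1 / 2) * (∫ σ in (0:ℝ)..L, (Ft (x + a * σ) (t - σ) + a * Fx (x + a * σ) (t - σ)))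
        - (1 / 2) * (F 1 (t - L) - F x t) := by
    rw [← hftc, ← intervalIntegral.integral_const_mul, ← intervalIntegral.integral_const_mul,
      ← intervalIntegral.integral_sub]
    · congr 1; ext σ; ring
    · exact ((c2.add (c1.const_mul a)).const_mul (1 / 2)).intervalIntegrable _ _
    · exact (((c1.const_mul a).sub c2).const_mul (1 / 2)).intervalIntegrable _ _
  have b1 : |∫ σ in (0:ℝ)..L, (Ft (x + a * σ) (t - σ) + a * Fx (x + a * σ) (t - σ))| ≤ A * L := by
    apply abs_int_le hL0
    intro σ hσ
    have : a * σ ≤ 1 - x := by rw [← hL]; gcongr; exact hσ.2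
    exact hA' _ ⟨by nlinarith [hx.1, hσ.1], by linarith⟩ _ ⟨by linarith [hσ.2], by linarith [hσ.1]⟩
  have b2 := hA 1 ⟨zero_le_one, le_rfl⟩ (t - L) ⟨by linarith, by linarith⟩
  have b3 := hA x hx t ⟨by linarith, le_rfl⟩
  have b4 : A * L ≤ A * (1 / a) := by gcongr
  have b5 : 0 ≤ A * (1 / a) := by positivity
  rw [e, mul_add, mul_one, abs_le]
  rw [abs_le] at b1 b2 b3
  constructor <;> linarith

/-- First order bounds for `w`. -/
lemma Sol.grad_bound (S : Sol a p w wx wt wxx wxt wtt F Fx Ft) (ha : 0 < a) {x t A : ℝ}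
    (hx : x ∈ Set.Icc (0:ℝ) 1) (ht : 2 / a < t)
    (hA : ∀ y ∈ Set.Icc (0:ℝ) 1, ∀ s ∈ Set.Icc (t - 2 / a) t, |F y s| ≤ A)
    (hA' : ∀ y ∈ Set.Icc (0:ℝ) 1, ∀ s ∈ Set.Icc (t - 2 / a) t, |Ft y s + a * Fx y s| ≤ A) :
    |wt x t| ≤ A * (2 * |p| * (1 + 1 / a) + 3 / a) ∧
    |wx x t| ≤ A * (2 * |p| * (1 + 1 / a) + 3 / a) / a := by
  have h2 : 2 / a = 1 / a + 1 / a := by ring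
  have h1p : 0 < 1 / a := by positivity
  have hA0 : 0 ≤ A := (abs_nonneg _).trans (hA x hx t ⟨by linarith, le_rfl⟩)
  have hL : a * (x / a) = x := by field_simp
  have hL0 : 0 ≤ x / a := div_nonneg hx.1 ha.le
  have hL1 : x / a ≤ 1 / a := by gcongr; exact hx.2
  have hu : ∀ y ∈ Set.Icc (0:ℝ) 1, ∀ s ∈ Set.Icc (t - 1 / a) t,
      |wt y s + a * wx y s| ≤ A / a := by
    intro y hy s hs
    refine S.u_bound ha hy (by linarith [hs.1]) ?_
    intro y' hy' s' hs'
    exact hA y' hy' s' ⟨by linarith [hs.1, hs'.1], by linarith [hs.2, hs'.2]⟩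
  have hut : |wtt 0 (t - x / a) + a * wxt 0 (t - x / a)| ≤ A * (1 + 1 / a) := by
    refine S.ut_bound ha ⟨le_rfl, zero_le_one⟩ (by linarith) ?_ ?_
    · intro y' hy' s' hs'
      exact hA y' hy' s' ⟨by linarith [hs'.1], by linarith [hs'.2]⟩
    · intro y' hy' s' hs'
      exact hA' y' hy' s' ⟨by linarith [hs'.1], by linarith [hs'.2]⟩
  have hbc : wt 0 (t - x / a) = p * (wtt 0 (t - x / a) + a * wxt 0 (t - x / a)) := by
    have e1 := S.hw.dt 0 (t - x / a)
    have e2 := (S.hu.dt 0 (t - x / a)).const_mul p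
    refine e1.unique (e2.congr_of_eventuallyEq ?_)
    filter_upwards [lt_mem_nhds (show (0:ℝ) < t - x / a by linarith)] with s hs
    exact S.bc0 s hs.le
  have hv := S.v_formula ha (t := t) hx hL0 (by rw [hL]; simp) (by linarith)
  rw [hL, sub_self] at hv
  have e2 : |∫ σ in (0:ℝ)..(x / a), F (x - a * σ) (t - σ)| ≤ A * (x / a) := by
    apply abs_int_le hL0
    intro σ hσ
    have : a * σ ≤ x := by
      conv_rhs => rw [← hL]
      gcongr; exact hσ.2
    exact hA _ ⟨by linarith, by nlinarith [hx.2, hσ.1]⟩ _ ⟨by linarith [hσ.2], by linarith [hσ.1]⟩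
  have e3 : A * (x / a) ≤ A / a := by
    calc A * (x / a) ≤ A * (1 / a) := by gcongr
      _ = A / a := by ring
  have u1 := hu x hx t ⟨by linarith, le_rfl⟩
  have u0 := hu 0 ⟨le_rfl, zero_le_one⟩ (t - x / a) ⟨by linarith, by linarith⟩
  have w0 : |wt 0 (t - x / a)| ≤ |p| * (A * (1 + 1 / a)) := by
    rw [hbc, abs_mul]; gcongr
  have hK : A * (2 * |p| * (1 + 1 / a) + 3 / a) = 2 * (|p| * (A * (1 + 1 / a))) + 3 * (A / a) := by
    ring
  have hP : 0 ≤ |p| * (A * (1 + 1 / a)) := by positivity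
  have hQ : 0 ≤ A / a := by positivity
  have hwx : |a * wx x t| ≤ A * (2 * |p| * (1 + 1 / a) + 3 / a) := by
    rw [hK, abs_le]
    rw [abs_le] at u1 u0 w0 e2
    constructor <;> linarith
  constructor
  · rw [hK, abs_le]
    rw [abs_le] at u1 u0 w0 e2
    constructor <;> linarith
  · rw [le_div_iff₀ ha]
    rw [abs_mul, abs_of_pos ha] at hwx
    linarith

end PW
namespace PW

section indicator

/-- The indicator-truncated initial profile. -/
noncomputable def U0 (f : ℝ → ℝ) : ℝ → ℝ := Set.indicator (Set.Ico 0 1) (fun y => |f y|)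

lemma U0_nonneg (f : ℝ → ℝ) (y : ℝ) : 0 ≤ U0 f y :=
  Set.indicator_nonneg (fun _ _ => abs_nonneg _) y

lemma U0_of_mem (f : ℝ → ℝ) {y : ℝ} (h0 : 0 ≤ y) (h1 : y < 1) : U0 f y = |f y| :=
  Set.indicator_of_mem (show y ∈ Set.Ico (0:ℝ) 1 from ⟨h0, h1⟩) _

lemma U0_of_ge (f : ℝ → ℝ) {y : ℝ} (h1 : 1 ≤ y) : U0 f y = 0 :=
  Set.indicator_of_notMem (fun h => by linarith [h.2]) _

lemma U0_integrable {f : ℝ → ℝ} (hf : Continuous f) : MeasureTheory.Integrable (U0 f) := by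
  unfold U0
  rw [MeasureTheory.integrable_indicator_iff measurableSet_Ico]
  exact (hf.abs.integrableOn_Icc (a := 0) (b := 1)).mono_set Set.Ico_subset_Icc_self

lemma U0_line_integrable {f : ℝ → ℝ} (hf : Continuous f) (a b ρ : ℝ) (ha : 0 < a) :
    IntervalIntegrable (fun σ => U0 f (b - 2 * a * σ)) MeasureTheory.volume 0 ρ := by
  have h1 := (U0_integrable hf).comp_sub_left b
  have h2 := h1.comp_mul_left' (R := 2 * a) (by positivity)
  exact h2.intervalIntegrable

lemma U0_line {f : ℝ → ℝ} (hf : Continuous f) (a b ρ : ℝ) (ha : 0 < a) (hρ : 0 ≤ ρ) :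
    ∫ σ in (0:ℝ)..ρ, U0 f (b - 2 * a * σ) ≤ (∫ y in (0:ℝ)..1, |f y|) / (2 * a) := by
  rw [intervalIntegral.integral_comp_sub_mul (U0 f) (by positivity : 2 * a ≠ 0) b]
  rw [smul_eq_mul, div_eq_inv_mul]
  gcongr
  rw [intervalIntegral.integral_of_le (by nlinarith [mul_nonneg ha.le hρ])]
  refine (MeasureTheory.setIntegral_le_integral (U0_integrable hf)
    (Filter.Eventually.of_forall (U0_nonneg f))).trans (le_of_eq ?_)
  unfold U0
  rw [MeasureTheory.integral_indicator measurableSet_Ico,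
    intervalIntegral.integral_of_le zero_le_one, MeasureTheory.integral_Ico_eq_integral_Ioc]

end indicator

variable {a p : ℝ} {w wx wt wxx wxt wtt F Fx Ft : ℝ → ℝ → ℝ}

/-- The integral of `|w|` along left-moving characteristics. -/
noncomputable def II (a : ℝ) (w : ℝ → ℝ → ℝ) (x t : ℝ) : ℝ :=
  ∫ σ in (0:ℝ)..(min ((1 - x) / a) t), |w (x + a * σ) (t - σ)|

lemma Sol.u_le (S : Sol a p w wx wt wxx wxt wtt F Fx Ft) (ha : 0 < a) {ε : ℝ}
    (hF : ∀ x ∈ Set.Icc (0:ℝ) 1, ∀ t ≥ (0:ℝ), |F x t| ≤ ε * |w x t|) {x t : ℝ}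
    (hx : x ∈ Set.Icc (0:ℝ) 1) (ht : 0 ≤ t) :
    |wt x t + a * wx x t| ≤ U0 (fun y => wt y 0 + a * wx y 0) (x + a * t) + ε * II a w x t := by
  set ρ := min ((1 - x) / a) t with hρ
  have hL : a * ((1 - x) / a) = 1 - x := by field_simp
  have hL0 : 0 ≤ (1 - x) / a := div_nonneg (by linarith [hx.2]) ha.le
  have h0 : 0 ≤ ρ := le_min hL0 ht
  have h1 : x + a * ρ ≤ 1 := by
    have : a * ρ ≤ a * ((1 - x) / a) := by gcongr; exact min_le_left _ _
    linarith
  have h2 : ρ ≤ t := min_le_right _ _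
  have hform := S.u_formula ha (t := t) hx h0 h1 h2
  have hp : Continuous (fun σ : ℝ => (x + a * σ, t - σ)) := by fun_prop
  have cF : Continuous (fun σ => F (x + a * σ) (t - σ)) := S.hF.cont.comp hp
  have cw : Continuous (fun σ => w (x + a * σ) (t - σ)) := S.hw.cont.comp hp
  have hint : |∫ σ in (0:ℝ)..ρ, F (x + a * σ) (t - σ)| ≤ ε * II a w x t := by
    unfold II
    rw [← hρ, ← intervalIntegral.integral_const_mul]
    refine (intervalIntegral.abs_integral_le_integral_abs h0).trans ?_
    refine intervalIntegral.integral_mono_on h0 (cF.abs.intervalIntegrable _ _)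
      ((cw.abs.const_mul ε).intervalIntegrable _ _) ?_
    intro σ hσ
    have : a * σ ≤ a * ρ := by gcongr; exact hσ.2
    exact hF _ ⟨by nlinarith [hx.1, hσ.1], by linarith⟩ _ (by linarith [hσ.2])
  have hb : |wt (x + a * ρ) (t - ρ) + a * wx (x + a * ρ) (t - ρ)|
      ≤ U0 (fun y => wt y 0 + a * wx y 0) (x + a * t) := by
    rcases le_or_gt ((1 - x) / a) t with h | h
    · have : ρ = (1 - x) / a := min_eq_left h
      rw [this, hL, show x + (1 - x) = 1 by ring, S.bc1 _ (by linarith), abs_zero]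
      exact U0_nonneg _ _
    · have : ρ = t := min_eq_right h.le
      rw [this, sub_self, U0_of_mem _ (by nlinarith [hx.1])]
      have : a * t < a * ((1 - x) / a) := by gcongr
      linarith
  rw [hform]
  exact (abs_add_le _ _).trans (add_le_add hb hint)

lemma Sol.w_le (S : Sol a p w wx wt wxx wxt wtt F Fx Ft) (ha : 0 < a) {ε M W0 U1 τ : ℝ} (hε : 0 ≤ ε)
    (hF : ∀ x ∈ Set.Icc (0:ℝ) 1, ∀ t ≥ (0:ℝ), |F x t| ≤ ε * |w x t|)
    (hW0 : ∀ x ∈ Set.Icc (0:ℝ) 1, |w x 0| ≤ W0)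
    (hU1 : U1 = ∫ y in (0:ℝ)..1, |wt y 0 + a * wx y 0|) (hM0 : 0 ≤ M)
    (hM : ∀ x ∈ Set.Icc (0:ℝ) 1, ∀ t ∈ Set.Icc (0:ℝ) τ, II a w x t ≤ M) {x t : ℝ}
    (hx : x ∈ Set.Icc (0:ℝ) 1) (ht : t ∈ Set.Icc (0:ℝ) τ) :
    |w x t| ≤ W0 + |p| * U0 (fun y => wt y 0 + a * wx y 0) (a * t - x) + U1 / (2 * a)
      + (|p| + 1 / a) * (ε * M) := by
  set f : ℝ → ℝ := fun y => wt y 0 + a * wx y 0 with hf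
  have hfc : Continuous f := by
    have := S.hu.cont.comp (f := fun y : ℝ => (y, (0:ℝ))) (by fun_prop)
    exact this
  have hu : ∀ y ∈ Set.Icc (0:ℝ) 1, ∀ s ∈ Set.Icc (0:ℝ) τ,
      |wt y s + a * wx y s| ≤ U0 f (y + a * s) + ε * M := by
    intro y hy s hs
    refine (S.u_le ha hF hy hs.1).trans ?_
    gcongr
    exact hM y hy s hs
  set ρ := min (x / a) t with hρ
  have hL : a * (x / a) = x := by field_simp
  have hL0 : 0 ≤ x / a := div_nonneg hx.1 ha.le
  have hL1 : x / a ≤ 1 / a := by gcongr; exact hx.2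
  have h0 : 0 ≤ ρ := le_min hL0 ht.1
  have h1 : a * ρ ≤ x := by
    conv_rhs => rw [← hL]
    gcongr; exact min_le_left _ _
  have h2 : ρ ≤ t := min_le_right _ _
  have h3 : ρ ≤ 1 / a := (min_le_left _ _).trans hL1
  have hεM : 0 ≤ ε * M := by positivity
  have hW0' : 0 ≤ W0 := (abs_nonneg _).trans (hW0 x hx)
  have hp : Continuous (fun σ : ℝ => (x - a * σ, t - σ)) := by fun_prop
  have cu : Continuous (fun σ => wt (x - a * σ) (t - σ) + a * wx (x - a * σ) (t - σ)) :=
    S.hu.cont.comp hp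
  have hint : |∫ σ in (0:ℝ)..ρ, (wt (x - a * σ) (t - σ) + a * wx (x - a * σ) (t - σ))|
      ≤ U1 / (2 * a) + 1 / a * (ε * M) := by
    refine (intervalIntegral.abs_integral_le_integral_abs h0).trans ?_
    have i1 := U0_line_integrable hfc a (x + a * t) ρ ha
    calc _ ≤ ∫ σ in (0:ℝ)..ρ, (U0 f (x + a * t - 2 * a * σ) + ε * M) := by
          refine intervalIntegral.integral_mono_on h0 (cu.abs.intervalIntegrable _ _)
            (i1.add intervalIntegrable_const) ?_
          intro σ hσ
          have h4 : a * σ ≤ a * ρ := by gcongr; exact hσ.2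
          have := hu (x - a * σ) ⟨by linarith, by nlinarith [hx.2, hσ.1]⟩ (t - σ)
            ⟨by linarith [hσ.2], by linarith [hσ.1, ht.2]⟩
          rwa [show x - a * σ + a * (t - σ) = x + a * t - 2 * a * σ by ring] at this
      _ = (∫ σ in (0:ℝ)..ρ, U0 f (x + a * t - 2 * a * σ)) + ρ * (ε * M) := by
          rw [intervalIntegral.integral_add i1 intervalIntegrable_const,
            intervalIntegral.integral_const, sub_zero, smul_eq_mul]
      _ ≤ U1 / (2 * a) + 1 / a * (ε * M) := by
          rw [hU1]
          gcongr
          exact U0_line hfc a _ ρ ha h0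
  have hb : |w (x - a * ρ) (t - ρ)| ≤ W0 + |p| * U0 f (a * t - x) + |p| * (ε * M) := by
    have q1 : 0 ≤ |p| * U0 f (a * t - x) := mul_nonneg (abs_nonneg _) (U0_nonneg _ _)
    have q2 : 0 ≤ |p| * (ε * M) := by positivity
    rcases le_or_gt t (x / a) with h | h
    · have hr : ρ = t := min_eq_right h
      have := hW0 (x - a * ρ) ⟨by linarith, by nlinarith [hx.2]⟩
      rw [hr, sub_self]
      rw [hr] at this
      linarith
    · have hr : ρ = x / a := min_eq_left h.le
      rw [hr, hL, sub_self, S.bc0 _ (by linarith), abs_mul]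
      have := hu 0 ⟨le_rfl, zero_le_one⟩ (t - x / a) ⟨by linarith, by linarith [ht.2]⟩
      rw [show (0:ℝ) + a * (t - x / a) = a * t - x by rw [mul_sub, hL]; ring] at this
      have := mul_le_mul_of_nonneg_left this (abs_nonneg p)
      linarith
  rw [S.w_formula x t ρ]
  refine (abs_add_le _ _).trans ?_
  linarith

/-- Main initial bound. -/
lemma Sol.II_le (S : Sol a p w wx wt wxx wxt wtt F Fx Ft) (ha : 0 < a) {ε W0 U1 τ : ℝ} (hε : 0 ≤ ε)
    (hF : ∀ x ∈ Set.Icc (0:ℝ) 1, ∀ t ≥ (0:ℝ), |F x t| ≤ ε * |w x t|)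
    (hW0 : ∀ x ∈ Set.Icc (0:ℝ) 1, |w x 0| ≤ W0)
    (hU1 : U1 = ∫ y in (0:ℝ)..1, |wt y 0 + a * wx y 0|)
    (hsmall : ε * ((|p| + 1 / a) / a) ≤ 1 / 2) {x t : ℝ}
    (hx : x ∈ Set.Icc (0:ℝ) 1) (ht : t ∈ Set.Icc (0:ℝ) τ) :
    II a w x t ≤ 2 * ((W0 + U1 / (2 * a)) / a + |p| * (U1 / (2 * a))) := by
  have hU1' : 0 ≤ U1 := by
    rw [hU1]; exact intervalIntegral.integral_nonneg zero_le_one fun _ _ => abs_nonneg _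
  have hW0' : 0 ≤ W0 := (abs_nonneg _).trans (hW0 x hx)
  set f : ℝ → ℝ := fun y => wt y 0 + a * wx y 0 with hf
  have hfc : Continuous f := by
    have := S.hu.cont.comp (f := fun y : ℝ => (y, (0:ℝ))) (by fun_prop)
    exact this
  have geo : ∀ y ∈ Set.Icc (0:ℝ) 1, ∀ s ∈ Set.Icc (0:ℝ) τ, 0 ≤ min ((1 - y) / a) s ∧
      min ((1 - y) / a) s ≤ 1 / a ∧
      ∀ σ ∈ Set.Icc 0 (min ((1 - y) / a) s), y + a * σ ∈ Set.Icc (0:ℝ) 1 ∧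
        s - σ ∈ Set.Icc (0:ℝ) τ := by
    intro y hy s hs
    have hL : a * ((1 - y) / a) = 1 - y := by field_simp
    have hL0 : 0 ≤ (1 - y) / a := div_nonneg (by linarith [hy.2]) ha.le
    refine ⟨le_min hL0 hs.1, (min_le_left _ _).trans (by gcongr; linarith [hy.1]), ?_⟩
    intro σ hσ
    have h1 : σ ≤ (1 - y) / a := hσ.2.trans (min_le_left _ _)
    have h2 : σ ≤ s := hσ.2.trans (min_le_right _ _)
    have h3 : a * σ ≤ a * ((1 - y) / a) := by gcongr
    exact ⟨⟨by nlinarith [hy.1, hσ.1], by linarith⟩, by linarith, by linarith [hs.2, hσ.1]⟩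
  have cw : ∀ y s, Continuous (fun σ => |w (y + a * σ) (s - σ)|) := fun y s =>
    (S.hw.cont.comp (f := fun σ : ℝ => (y + a * σ, s - σ)) (by fun_prop)).abs
  obtain ⟨C, hC⟩ := (isCompact_Icc.prod isCompact_Icc).exists_bound_of_continuousOn
    (s := (Set.Icc (0:ℝ) 1) ×ˢ (Set.Icc (0:ℝ) τ)) S.hw.cont.continuousOn
  have hC0 : 0 ≤ C := (norm_nonneg _).trans (hC (x, t) ⟨hx, ht⟩)
  set Z : Set ℝ := (fun q : ℝ × ℝ => II a w q.1 q.2) '' ((Set.Icc (0:ℝ) 1) ×ˢ (Set.Icc (0:ℝ) τ))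
    with hZ
  have hbdd : BddAbove Z := by
    refine ⟨C * (1 / a), ?_⟩
    rintro _ ⟨⟨y, s⟩, ⟨hy, hs⟩, rfl⟩
    obtain ⟨g1, g2, g3⟩ := geo y hy s hs
    refine (le_abs_self _).trans ((abs_int_le (A := C) g1 ?_).trans (by gcongr))
    intro σ hσ
    rw [abs_abs]
    exact hC (y + a * σ, s - σ) ⟨(g3 σ hσ).1, (g3 σ hσ).2⟩
  have hM : ∀ y ∈ Set.Icc (0:ℝ) 1, ∀ s ∈ Set.Icc (0:ℝ) τ, II a w y s ≤ sSup Z := by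
    intro y hy s hs
    exact le_csSup hbdd ⟨(y, s), ⟨hy, hs⟩, rfl⟩
  have hIn : ∀ y ∈ Set.Icc (0:ℝ) 1, ∀ s ∈ Set.Icc (0:ℝ) τ, 0 ≤ II a w y s := by
    intro y hy s hs
    exact intervalIntegral.integral_nonneg (geo y hy s hs).1 fun _ _ => abs_nonneg _
  have hM0 : 0 ≤ sSup Z := (hIn x hx t ht).trans (hM x hx t ht)
  have hεM : 0 ≤ ε * sSup Z := by positivity
  have hle : sSup Z ≤ (W0 + U1 / (2 * a)) / a + |p| * (U1 / (2 * a))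
      + (ε * ((|p| + 1 / a) / a)) * sSup Z := by
    refine csSup_le ⟨_, ⟨(x, t), ⟨hx, ht⟩, rfl⟩⟩ ?_
    rintro _ ⟨⟨y, s⟩, ⟨hy, hs⟩, rfl⟩
    obtain ⟨g1, g2, g3⟩ := geo y hy s hs
    simp only
    unfold II
    set ρ := min ((1 - y) / a) s
    set K := W0 + U1 / (2 * a) + (|p| + 1 / a) * (ε * sSup Z) with hK
    have hK0 : 0 ≤ K := by positivity
    have i1 := U0_line_integrable hfc a (a * s - y) ρ ha
    calc _ ≤ ∫ σ in (0:ℝ)..ρ, (K + |p| * U0 f (a * s - y - 2 * a * σ)) := by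
          refine intervalIntegral.integral_mono_on g1 ((cw y s).intervalIntegrable _ _)
            (intervalIntegrable_const.add (i1.const_mul _)) ?_
          intro σ hσ
          have := S.w_le ha hε hF hW0 hU1 hM0 hM (g3 σ hσ).1 (g3 σ hσ).2
          rw [show a * (s - σ) - (y + a * σ) = a * s - y - 2 * a * σ by ring] at this
          refine this.trans (le_of_eq ?_)
          rw [hK]; ring
      _ = ρ * K + |p| * (∫ σ in (0:ℝ)..ρ, U0 f (a * s - y - 2 * a * σ)) := by
          rw [intervalIntegral.integral_add intervalIntegrable_const (i1.const_mul _),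
            intervalIntegral.integral_const_mul]
          simp
      _ ≤ 1 / a * K + |p| * (U1 / (2 * a)) := by
          rw [hU1]
          gcongr
          exact U0_line hfc a _ ρ ha g1
      _ = _ := by rw [hK]; ring
  have h5 := mul_le_mul_of_nonneg_right hsmall hM0
  have h6 := hM x hx t ht
  linarith

/-- Uniform bounds for large times in terms of the data. -/
lemma Sol.init_bound (S : Sol a p w wx wt wxx wxt wtt F Fx Ft) (ha : 0 < a) {ε W0 U1 M : ℝ}
    (hε : 0 ≤ ε)
    (hF : ∀ x ∈ Set.Icc (0:ℝ) 1, ∀ t ≥ (0:ℝ), |F x t| ≤ ε * |w x t|)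
    (hW0 : ∀ x ∈ Set.Icc (0:ℝ) 1, |w x 0| ≤ W0)
    (hU1 : U1 = ∫ y in (0:ℝ)..1, |wt y 0 + a * wx y 0|)
    (hsmall : ε * ((|p| + 1 / a) / a) ≤ 1 / 2)
    (hM : M = 2 * ((W0 + U1 / (2 * a)) / a + |p| * (U1 / (2 * a)))) :
    0 ≤ M ∧ (∀ x ∈ Set.Icc (0:ℝ) 1, ∀ t ≥ 1 / a, |wt x t + a * wx x t| ≤ ε * M) ∧
    (∀ x ∈ Set.Icc (0:ℝ) 1, ∀ t ≥ 2 / a, |w x t| ≤ (|p| + 1 / a) * (ε * M)) := by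
  have hU1' : 0 ≤ U1 := by
    rw [hU1]; exact intervalIntegral.integral_nonneg zero_le_one fun _ _ => abs_nonneg _
  have hW0' : 0 ≤ W0 := (abs_nonneg _).trans (hW0 0 ⟨le_rfl, zero_le_one⟩)
  have hM0 : 0 ≤ M := by rw [hM]; positivity
  have h1p : 0 < 1 / a := by positivity
  have hu : ∀ x ∈ Set.Icc (0:ℝ) 1, ∀ t ≥ 1 / a, |wt x t + a * wx x t| ≤ ε * M := by
    intro x hx t ht
    have h := S.u_le ha hF hx (by linarith : 0 ≤ t)
    have h2 : 1 ≤ a * t := by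
      calc 1 = a * (1 / a) := by field_simp
        _ ≤ a * t := by gcongr
    rw [U0_of_ge _ (by linarith [hx.1]), zero_add] at h
    refine h.trans ?_
    gcongr
    rw [hM]
    exact S.II_le ha (τ := t) hε hF hW0 hU1 hsmall hx ⟨by linarith, le_rfl⟩
  refine ⟨hM0, hu, ?_⟩
  intro x hx t ht
  have h2 : 2 / a = 1 / a + 1 / a := by ring
  have hL : a * (x / a) = x := by field_simp
  have hL0 : 0 ≤ x / a := div_nonneg hx.1 ha.le
  have hL1 : x / a ≤ 1 / a := by gcongr; exact hx.2
  have hεM : 0 ≤ ε * M := by positivity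
  rw [S.w_formula x t (x / a), hL, sub_self, S.bc0 _ (by linarith)]
  have e1 : |p * (wt 0 (t - x / a) + a * wx 0 (t - x / a))| ≤ |p| * (ε * M) := by
    rw [abs_mul]
    gcongr
    exact hu 0 ⟨le_rfl, zero_le_one⟩ _ (by linarith)
  have e2 : |∫ σ in (0:ℝ)..(x / a), (wt (x - a * σ) (t - σ) + a * wx (x - a * σ) (t - σ))|
      ≤ (ε * M) * (x / a) := by
    apply abs_int_le hL0
    intro σ hσ
    have : a * σ ≤ x := by
      conv_rhs => rw [← hL]
      gcongr; exact hσ.2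
    exact hu _ ⟨by linarith, by nlinarith [hx.2, hσ.1]⟩ _ (by linarith [hσ.2])
  have e3 : (ε * M) * (x / a) ≤ (ε * M) * (1 / a) := by gcongr
  refine (abs_add_le _ _).trans ?_
  linarith

end PW
namespace PW

variable {a p : ℝ} {w wx wt wxx wxt wtt F Fx Ft : ℝ → ℝ → ℝ}

lemma Sol.geom (S : Sol a p w wx wt wxx wxt wtt F Fx Ft) (ha : 0 < a) {ε B0 κ : ℝ} (hε : 0 ≤ ε)
    (hF : ∀ x ∈ Set.Icc (0:ℝ) 1, ∀ t ≥ (0:ℝ), |F x t| ≤ ε * |w x t|)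
    (hB : ∀ x ∈ Set.Icc (0:ℝ) 1, ∀ t ≥ 2 / a, |w x t| ≤ B0)
    (hκ : ε * ((|p| + 1 / a) / a) ≤ κ) (n : ℕ) :
    ∀ x ∈ Set.Icc (0:ℝ) 1, ∀ t ≥ 2 / a + n * (2 / a), |w x t| ≤ B0 * κ ^ n := by
  have h2p : 0 < 2 / a := by positivity
  have hB0 : 0 ≤ B0 := (abs_nonneg _).trans (hB 0 ⟨le_rfl, zero_le_one⟩ (2 / a) le_rfl)
  have hκ0 : 0 ≤ κ := le_trans (by positivity) hκ
  induction n with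
  | zero => intro x hx t ht; simpa using hB x hx t (by simpa using ht)
  | succ n ih =>
    intro x hx t ht
    push_cast at ht
    have hn : 0 ≤ (n : ℝ) * (2 / a) := by positivity
    have := S.w_bound (A := ε * (B0 * κ ^ n)) ha hx (t := t) (by nlinarith) ?_
    · refine this.trans ?_
      calc ε * (B0 * κ ^ n) * ((|p| + 1 / a) / a)
          = (ε * ((|p| + 1 / a) / a)) * (B0 * κ ^ n) := by ring
        _ ≤ κ * (B0 * κ ^ n) := by gcongr
        _ = _ := by ring
    · intro y hy s hs
      refine (hF y hy s (by nlinarith [hs.1])).trans ?_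
      gcongr
      exact ih y hy s (by nlinarith [hs.1])

lemma Sol.decay (S : Sol a p w wx wt wxx wxt wtt F Fx Ft) (ha : 0 < a) {ε B0 γ : ℝ} (hε : 0 ≤ ε)
    (hγ : 0 < γ)
    (hF : ∀ x ∈ Set.Icc (0:ℝ) 1, ∀ t ≥ (0:ℝ), |F x t| ≤ ε * |w x t|)
    (hB : ∀ x ∈ Set.Icc (0:ℝ) 1, ∀ t ≥ 2 / a, |w x t| ≤ B0)
    (hκ : ε * ((|p| + 1 / a) / a) ≤ Real.exp (-(γ * (2 / a)))) :
    ∀ x ∈ Set.Icc (0:ℝ) 1, ∀ t ≥ 2 / a,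
      |w x t| ≤ B0 * Real.exp (γ * (4 / a)) * Real.exp (-γ * t) := by
  intro x hx t ht
  have h2p : 0 < 2 / a := by positivity
  have hB0 : 0 ≤ B0 := (abs_nonneg _).trans (hB 0 ⟨le_rfl, zero_le_one⟩ (2 / a) le_rfl)
  set r := (t - 2 / a) / (2 / a) with hr
  have hr0 : 0 ≤ r := div_nonneg (by linarith) h2p.le
  have hrt : r * (2 / a) = t - 2 / a := by rw [hr]; field_simp
  have h1 := Nat.floor_le hr0
  have h2 := Nat.lt_floor_add_one r
  have h1' := mul_le_mul_of_nonneg_right h1 h2p.le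
  have h2' := mul_le_mul_of_nonneg_right h2.le h2p.le
  refine (S.geom ha hε hF hB hκ ⌊r⌋₊ x hx t (by linarith)).trans ?_
  rw [mul_assoc, ← Real.exp_add, ← Real.exp_nat_mul]
  gcongr
  have h3 := mul_le_mul_of_nonneg_left h2' hγ.le
  have : 4 / a = 2 / a + 2 / a := by ring
  rw [this]
  rw [hrt] at h3
  linarith

lemma exp_shift {γ s t d : ℝ} (hγ : 0 < γ) (h : t - d ≤ s) :
    Real.exp (-γ * s) ≤ Real.exp (γ * d) * Real.exp (-γ * t) := by
  rw [← Real.exp_add]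
  apply Real.exp_le_exp.2
  nlinarith

/-- Decay of `w` and `u` in sup norm. -/
lemma Sol.decay_wu (S : Sol a p w wx wt wxx wxt wtt F Fx Ft) (ha : 0 < a) {ε γ M : ℝ} (hε : 0 ≤ ε)
    (hε1 : ε ≤ 1) (hγ : 0 < γ) (hM0 : 0 ≤ M)
    (hF : ∀ x ∈ Set.Icc (0:ℝ) 1, ∀ t ≥ (0:ℝ), |F x t| ≤ ε * |w x t|)
    (hu : ∀ x ∈ Set.Icc (0:ℝ) 1, ∀ t ≥ 1 / a, |wt x t + a * wx x t| ≤ ε * M)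
    (hw : ∀ x ∈ Set.Icc (0:ℝ) 1, ∀ t ≥ 2 / a, |w x t| ≤ (|p| + 1 / a) * (ε * M))
    (hκ : ε * ((|p| + 1 / a) / a) ≤ Real.exp (-(γ * (2 / a)))) :
    ∀ x ∈ Set.Icc (0:ℝ) 1, ∀ t ≥ 2 / a,
      |w x t| ≤ M * ((|p| + 1 / a) * Real.exp (γ * (4 / a)) * (1 + Real.exp (γ * (1 / a)) / a)
        + Real.exp (γ * (3 / a))) * Real.exp (-γ * t) ∧
      |wt x t + a * wx x t| ≤ M * ((|p| + 1 / a) * Real.exp (γ * (4 / a)) *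
        (1 + Real.exp (γ * (1 / a)) / a) + Real.exp (γ * (3 / a))) * Real.exp (-γ * t) := by
  have h1p : 0 < 1 / a := by positivity
  have h2 : 2 / a = 1 / a + 1 / a := by ring
  have h3 : 3 / a = 1 / a + 1 / a + 1 / a := by ring
  have hεM : ε * M ≤ M := by nlinarith
  have hB : ∀ x ∈ Set.Icc (0:ℝ) 1, ∀ t ≥ 2 / a, |w x t| ≤ (|p| + 1 / a) * M := by
    intro x hx t ht
    refine (hw x hx t ht).trans ?_
    gcongr
  have hd := S.decay ha hε hγ hF hB hκ
  set X := (|p| + 1 / a) * Real.exp (γ * (4 / a)) with hX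
  have hX0 : 0 ≤ X := by positivity
  have hd' : ∀ x ∈ Set.Icc (0:ℝ) 1, ∀ t ≥ 2 / a, |w x t| ≤ M * X * Real.exp (-γ * t) := by
    intro x hx t ht
    refine (hd x hx t ht).trans (le_of_eq ?_)
    rw [hX]; ring
  intro x hx t ht
  have hE : 0 < Real.exp (-γ * t) := Real.exp_pos _
  have hpos1 : 0 ≤ M * X * Real.exp (-γ * t) := by positivity
  have hpos2 : 0 ≤ M * X * Real.exp (-γ * t) * (Real.exp (γ * (1 / a)) / a) := by positivity
  have hpos3 : 0 ≤ M * Real.exp (γ * (3 / a)) * Real.exp (-γ * t) := by positivity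
  constructor
  · refine (hd' x hx t ht).trans ?_
    linarith
  · rcases le_or_gt (3 / a) t with h | h
    · have := S.u_bound (A := M * X * (Real.exp (γ * (1 / a)) * Real.exp (-γ * t))) ha hx
        (t := t) (by linarith) ?_
      · refine this.trans ?_
        have e : M * X * (Real.exp (γ * (1 / a)) * Real.exp (-γ * t)) / a
          = M * X * Real.exp (-γ * t) * (Real.exp (γ * (1 / a)) / a) := by ring
        rw [e]
        linarith
      · intro y hy s hs
        refine (hF y hy s (by linarith [hs.1])).trans ?_
        calc ε * |w y s| ≤ 1 * |w y s| := by gcongr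
          _ = |w y s| := one_mul _
          _ ≤ M * X * Real.exp (-γ * s) := hd' y hy s (by linarith [hs.1])
          _ ≤ _ := by
            gcongr
            exact exp_shift hγ hs.1
    · have q := exp_shift (s := 0) (t := t) (d := 3 / a) hγ (by linarith)
      rw [mul_zero, Real.exp_zero] at q
      have q2 : M * 1 ≤ M * (Real.exp (γ * (3 / a)) * Real.exp (-γ * t)) := by gcongr
      have := hu x hx t (by linarith)
      linarith

/-- The gradient constant. -/
noncomputable def Kg (a p : ℝ) : ℝ :=
  (2 * |p| * (1 + 1 / a) + 3 / a) * (1 + 1 / a) + (1 + 1 / a)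

lemma Kg_pos (ha : 0 < a) : 0 < Kg a p := by unfold Kg; positivity

lemma Sol.grad_bound' (S : Sol a p w wx wt wxx wxt wtt F Fx Ft) (ha : 0 < a) {x t A : ℝ}
    (hx : x ∈ Set.Icc (0:ℝ) 1) (ht : 2 / a < t)
    (hA : ∀ y ∈ Set.Icc (0:ℝ) 1, ∀ s ∈ Set.Icc (t - 2 / a) t, |F y s| ≤ A)
    (hA' : ∀ y ∈ Set.Icc (0:ℝ) 1, ∀ s ∈ Set.Icc (t - 2 / a) t, |Ft y s + a * Fx y s| ≤ A) :
    |wt x t| ≤ A * Kg a p ∧ |wx x t| ≤ A * Kg a p ∧ |wtt x t + a * wxt x t| ≤ A * Kg a p := by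
  have h2 : 2 / a = 1 / a + 1 / a := by ring
  have h1p : 0 < 1 / a := by positivity
  have hA0 : 0 ≤ A := (abs_nonneg _).trans (hA x hx t ⟨by linarith, le_rfl⟩)
  obtain ⟨g1, g2⟩ := S.grad_bound ha hx ht hA hA'
  have g3 := S.ut_bound (A := A) ha hx (by linarith)
    (fun y hy s hs => hA y hy s ⟨by linarith [hs.1], hs.2⟩)
    (fun y hy s hs => hA' y hy s ⟨by linarith [hs.1], hs.2⟩)
  have hQ : 0 ≤ A * (2 * |p| * (1 + 1 / a) + 3 / a) := by positivity
  have hK : A * Kg a p = A * (2 * |p| * (1 + 1 / a) + 3 / a)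
      + A * (2 * |p| * (1 + 1 / a) + 3 / a) / a + A * (1 + 1 / a) := by unfold Kg; ring
  have hQ2 : 0 ≤ A * (2 * |p| * (1 + 1 / a) + 3 / a) / a := by positivity
  have hQ3 : 0 ≤ A * (1 + 1 / a) := by positivity
  rw [hK]
  exact ⟨by linarith, by linarith, by linarith⟩

lemma diff_le {f f' : ℝ → ℝ} {s h C : ℝ} (hh : 0 ≤ h) (hd : ∀ r, HasDerivAt f (f' r) r)
    (hC : ∀ r ≥ s, |f' r| ≤ C) : |f (s + h) - f s| ≤ C * h := by
  have := (convex_Ici s).norm_image_sub_le_of_norm_hasDerivWithin_le (f := f) (f' := f')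
    (C := C) (fun r _ => (hd r).hasDerivWithinAt) (fun r hr => hC r hr)
    (Set.mem_Ici.2 le_rfl) (Set.mem_Ici.2 (by linarith : s ≤ s + h))
  simpa [abs_of_nonneg hh] using this

lemma deriv_le {f : ℝ → ℝ} {f' t C : ℝ} (hd : HasDerivAt f f' t)
    (hC : ∀ h > 0, |f (t + h) - f t| ≤ C * h) : |f'| ≤ C := by
  have h1 := (hasDerivAt_iff_tendsto_slope_zero.1 hd).mono_left
    (nhdsWithin_mono (0:ℝ) (fun x (hx : x ∈ Set.Ioi (0:ℝ)) => (ne_of_gt hx : x ≠ 0)))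
  refine le_of_tendsto h1.abs ?_
  filter_upwards [self_mem_nhdsWithin] with h hh
  have hh' : 0 < h := hh
  rw [smul_eq_mul, abs_mul, abs_inv, abs_of_pos hh', inv_mul_le_iff₀ hh', mul_comm]
  exact hC h hh

variable {c cx ct cxx cxt ctt : ℝ → ℝ → ℝ}

/-- First order decay. -/
lemma Sol.first (S : Sol a p w wx wt wxx wxt wtt (fun x t => -1 * (c x t * w x t))
      (fun x t => -1 * (cx x t * w x t + c x t * wx x t))
      (fun x t => -1 * (ct x t * w x t + c x t * wt x t))) (ha : 0 < a) {γ N : ℝ} (hγ : 0 < γ)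
    (hb : ∀ x t, |c x t| ≤ 1 ∧ |cx x t| ≤ 1 ∧ |ct x t| ≤ 1)
    (hN : ∀ x ∈ Set.Icc (0:ℝ) 1, ∀ t ≥ 2 / a, |w x t| ≤ N * Real.exp (-γ * t) ∧
      |wt x t + a * wx x t| ≤ N * Real.exp (-γ * t)) :
    ∀ x ∈ Set.Icc (0:ℝ) 1, ∀ t ≥ 4 / a,
      |wt x t| ≤ (N * ((2 + a) * Real.exp (γ * (2 / a)) * Kg a p)) * Real.exp (-γ * t) ∧
      |wx x t| ≤ (N * ((2 + a) * Real.exp (γ * (2 / a)) * Kg a p)) * Real.exp (-γ * t) ∧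
      |wtt x t + a * wxt x t| ≤
        (N * ((2 + a) * Real.exp (γ * (2 / a)) * Kg a p)) * Real.exp (-γ * t) := by
  intro x hx t ht
  have h2p : 0 < 2 / a := by positivity
  have h4 : 4 / a = 2 / a + 2 / a := by ring
  have hN0 : 0 ≤ N := by
    have := (abs_nonneg _).trans (hN x hx t (by linarith)).1
    exact nonneg_of_mul_nonneg_left this (Real.exp_pos _)
  have hR : ∀ s ∈ Set.Icc (t - 2 / a) t, N * Real.exp (-γ * s) ≤
      N * (Real.exp (γ * (2 / a)) * Real.exp (-γ * t)) := by
    intro s hs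
    gcongr
    exact exp_shift hγ hs.1
  set R := N * (Real.exp (γ * (2 / a)) * Real.exp (-γ * t)) with hRdef
  have hR0 : 0 ≤ R := by positivity
  have haR : 0 ≤ a * R := by positivity
  have := S.grad_bound' (A := (2 + a) * R) ha hx (t := t) (by linarith) ?_ ?_
  · have e : (N * ((2 + a) * Real.exp (γ * (2 / a)) * Kg a p)) * Real.exp (-γ * t)
      = (2 + a) * R * Kg a p := by rw [hRdef]; ring
    rw [e]
    exact this
  · intro y hy s hs
    have b1 := ((hN y hy s (by linarith [hs.1])).1).trans (hR s hs)
    obtain ⟨c1, c2, c3⟩ := hb y s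
    have : |c y s| * |w y s| ≤ 1 * R := by gcongr
    rw [neg_one_mul, abs_neg, abs_mul]
    linarith
  · intro y hy s hs
    have b1 := ((hN y hy s (by linarith [hs.1])).1).trans (hR s hs)
    have b2 := ((hN y hy s (by linarith [hs.1])).2).trans (hR s hs)
    obtain ⟨c1, c2, c3⟩ := hb y s
    have e : -1 * (ct y s * w y s + c y s * wt y s) + a * (-1 * (cx y s * w y s + c y s * wx y s))
      = -(ct y s * w y s + a * (cx y s * w y s) + c y s * (wt y s + a * wx y s)) := by ring
    rw [e, abs_neg]
    have m1 : |ct y s * w y s| ≤ 1 * R := by rw [abs_mul]; gcongr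
    have m2 : |a * (cx y s * w y s)| ≤ a * (1 * R) := by
      rw [abs_mul, abs_mul, abs_of_pos ha]; gcongr
    have m3 : |c y s * (wt y s + a * wx y s)| ≤ 1 * R := by rw [abs_mul]; gcongr
    refine (abs_add_le _ _).trans ((add_le_add ((abs_add_le _ _).trans (add_le_add m1 m2)) m3).trans ?_)
    linarith

lemma Sol.diff (S : Sol a p w wx wt wxx wxt wtt F Fx Ft) {h : ℝ} (hh : 0 ≤ h) :
    Sol a p (fun x t => w x (t + h) - w x t) (fun x t => wx x (t + h) - wx x t)
      (fun x t => wt x (t + h) - wt x t) (fun x t => wxx x (t + h) - wxx x t)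
      (fun x t => wxt x (t + h) - wxt x t) (fun x t => wtt x (t + h) - wtt x t)
      (fun x t => F x (t + h) - F x t) (fun x t => Fx x (t + h) - Fx x t)
      (fun x t => Ft x (t + h) - Ft x t) where
  hw := (S.hw.shift h).sub S.hw
  hwx := (S.hwx.shift h).sub S.hwx
  hwt := (S.hwt.shift h).sub S.hwt
  hF := (S.hF.shift h).sub S.hF
  pde x hx t ht := by
    have h1 := S.pde x hx t ht
    have h2 := S.pde x hx (t + h) (by linarith)
    rw [← h1, ← h2]; ring
  bc0 t ht := by
    have h1 := S.bc0 t ht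
    have h2 := S.bc0 (t + h) (by linarith)
    rw [h1, h2]; ring
  bc1 t ht := by
    have h1 := S.bc1 t ht
    have h2 := S.bc1 (t + h) (by linarith)
    linarith

/-- Second order decay. -/
lemma Sol.second (S : Sol a p w wx wt wxx wxt wtt (fun x t => -1 * (c x t * w x t))
      (fun x t => -1 * (cx x t * w x t + c x t * wx x t))
      (fun x t => -1 * (ct x t * w x t + c x t * wt x t))) (ha : 0 < a) {γ N : ℝ} (hγ : 0 < γ)
    (hc : C1 c cx ct) (hcx : C1 cx cxx cxt) (hct : C1 ct cxt ctt)
    (hb : ∀ x t, |c x t| ≤ 1 ∧ |cx x t| ≤ 1 ∧ |ct x t| ≤ 1 ∧ |cxt x t| ≤ 1 ∧ |ctt x t| ≤ 1)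
    (hN : ∀ x ∈ Set.Icc (0:ℝ) 1, ∀ t ≥ 4 / a, |w x t| ≤ N * Real.exp (-γ * t) ∧
      |wt x t + a * wx x t| ≤ N * Real.exp (-γ * t) ∧ |wt x t| ≤ N * Real.exp (-γ * t) ∧
      |wtt x t + a * wxt x t| ≤ N * Real.exp (-γ * t)) :
    ∀ x ∈ Set.Icc (0:ℝ) 1, ∀ t ≥ 6 / a,
      |wtt x t| ≤ (N * ((4 + 2 * a) * Real.exp (γ * (2 / a)) * Kg a p)) * Real.exp (-γ * t) ∧
      |wxt x t| ≤ (N * ((4 + 2 * a) * Real.exp (γ * (2 / a)) * Kg a p)) * Real.exp (-γ * t) := by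
  intro x hx t ht
  have h2p : 0 < 2 / a := by positivity
  have h6 : 6 / a = 2 / a + 4 / a := by ring
  have h4 : 4 / a = 2 / a + 2 / a := by ring
  have hN0 : 0 ≤ N := by
    have := (abs_nonneg _).trans (hN x hx t (by linarith)).1
    exact nonneg_of_mul_nonneg_left this (Real.exp_pos _)
  have hR : ∀ s ≥ t - 2 / a, N * Real.exp (-γ * s) ≤
      N * (Real.exp (γ * (2 / a)) * Real.exp (-γ * t)) := by
    intro s hs
    gcongr
    exact exp_shift hγ hs
  set R := N * (Real.exp (γ * (2 / a)) * Real.exp (-γ * t)) with hRdef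
  have hR0 : 0 ≤ R := by positivity
  have haR : 0 ≤ a * R := by positivity
  have HFt := (((hct.mul S.hw).add (hc.mul S.hwt)).smul (-1))
  have HFx := (((hcx.mul S.hw).add (hc.mul S.hwx)).smul (-1))
  have HG := HFt.add (HFx.smul a)
  have key : ∀ h > 0, |wt x (t + h) - wt x t| ≤ ((4 + 2 * a) * R * Kg a p) * h ∧
      |wx x (t + h) - wx x t| ≤ ((4 + 2 * a) * R * Kg a p) * h := by
    intro h hh
    have := (S.diff hh.le).grad_bound' (A := (4 + 2 * a) * R * h) ha hx (t := t) (by linarith) ?_ ?_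
    · obtain ⟨q1, q2, -⟩ := this
      rw [show (4 + 2 * a) * R * Kg a p * h = (4 + 2 * a) * R * h * Kg a p by ring]
      exact ⟨q1, q2⟩
    · intro y hy s hs
      refine diff_le hh.le (S.hF.dt y) ?_
      intro r hr
      have hrs : r ≥ t - 2 / a := by linarith [hs.1]
      obtain ⟨b1, b2, b3, b4⟩ := hN y hy r (by linarith)
      have r0 := hR r hrs
      replace b1 := b1.trans r0
      replace b3 := b3.trans r0
      obtain ⟨c1, c2, c3, c4, c5⟩ := hb y r
      have m1 : |ct y r * w y r| ≤ 1 * R := by rw [abs_mul]; gcongr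
      have m2 : |c y r * wt y r| ≤ 1 * R := by rw [abs_mul]; gcongr
      rw [neg_one_mul, abs_neg]
      refine (abs_add_le _ _).trans ?_
      linarith
    · intro y hy s hs
      have hd := diff_le (s := s) (C := (4 + 2 * a) * R) hh.le (HG.dt y) ?_
      · refine le_trans (le_of_eq ?_) hd
        congr 1
        ring
      · intro r hr
        have hrs : r ≥ t - 2 / a := by linarith [hs.1]
        obtain ⟨b1, b2, b3, b4⟩ := hN y hy r (by linarith)
        have r0 := hR r hrs
        replace b1 := b1.trans r0
        replace b2 := b2.trans r0
        replace b3 := b3.trans r0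
        replace b4 := b4.trans r0
        obtain ⟨c1, c2, c3, c4, c5⟩ := hb y r
        have m1 : |ctt y r * w y r| ≤ 1 * R := by rw [abs_mul]; gcongr
        have m2 : |a * (cxt y r * w y r)| ≤ a * (1 * R) := by
          rw [abs_mul, abs_mul, abs_of_pos ha]; gcongr
        have m3 : |ct y r * wt y r| ≤ 1 * R := by rw [abs_mul]; gcongr
        have m4 : |a * (cx y r * wt y r)| ≤ a * (1 * R) := by
          rw [abs_mul, abs_mul, abs_of_pos ha]; gcongr
        have m5 : |ct y r * (wt y r + a * wx y r)| ≤ 1 * R := by rw [abs_mul]; gcongr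
        have m6 : |c y r * (wtt y r + a * wxt y r)| ≤ 1 * R := by rw [abs_mul]; gcongr
        rw [abs_le] at m1 m2 m3 m4 m5 m6 ⊢
        constructor <;> linarith
  have e : (N * ((4 + 2 * a) * Real.exp (γ * (2 / a)) * Kg a p)) * Real.exp (-γ * t)
      = (4 + 2 * a) * R * Kg a p := by rw [hRdef]; ring
  rw [e]
  exact ⟨deriv_le (S.hwt.dt x t) fun h hh => (key h hh).1,
    deriv_le (S.hwx.dt x t) fun h hh => (key h hh).2⟩

end PW
namespace PW

lemma L1_le_L2 {f : ℝ → ℝ} (hf : Continuous f) :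
    ∫ x in (0:ℝ)..1, |f x| ≤ Real.sqrt (∫ x in (0:ℝ)..1, (f x) ^ 2) := by
  apply Real.le_sqrt_of_sq_le
  set m := ∫ x in (0:ℝ)..1, |f x| with hm
  have h0 : 0 ≤ ∫ x in (0:ℝ)..1, (|f x| - m) ^ 2 :=
    intervalIntegral.integral_nonneg zero_le_one fun _ _ => sq_nonneg _
  have e : ∫ x in (0:ℝ)..1, (|f x| - m) ^ 2
      = (∫ x in (0:ℝ)..1, (f x) ^ 2) - (2 * m) * m + m ^ 2 := by
    have i1 : IntervalIntegrable (fun x => (f x) ^ 2) MeasureTheory.volume 0 1 :=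
      (hf.pow 2).intervalIntegrable _ _
    have i2 : IntervalIntegrable (fun x => (2 * m) * |f x|) MeasureTheory.volume 0 1 :=
      (hf.abs.const_mul _).intervalIntegrable _ _
    have : ∀ x, (|f x| - m) ^ 2 = (f x) ^ 2 - (2 * m) * |f x| + m ^ 2 := by
      intro x; rw [sub_sq, sq_abs]; ring
    simp_rw [this]
    rw [intervalIntegral.integral_add (i1.sub i2) intervalIntegrable_const,
      intervalIntegral.integral_sub i1 i2, intervalIntegral.integral_const_mul, ← hm]
    simp
  nlinarith

lemma sup_le_W11 {f f' : ℝ → ℝ} (hd : ∀ x, HasDerivAt f (f' x) x) (hf' : Continuous f') {x : ℝ}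
    (hx : x ∈ Set.Icc (0:ℝ) 1) :
    |f x| ≤ (∫ y in (0:ℝ)..1, |f y|) + ∫ y in (0:ℝ)..1, |f' y| := by
  have hf : Continuous f := continuous_iff_continuousAt.2 fun x => (hd x).continuousAt
  set J := ∫ y in (0:ℝ)..1, |f' y| with hJ
  have key : ∀ y ∈ Set.Icc (0:ℝ) 1, |f x| ≤ |f y| + J := by
    intro y hy
    have h1 : f x - f y = ∫ s in y..x, f' s :=
      (intervalIntegral.integral_eq_sub_of_hasDerivAt (fun s _ => hd s)
        (hf'.intervalIntegrable _ _)).symm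
    have h2 : |f x - f y| ≤ J := by
      rw [h1, hJ]
      have h4 := intervalIntegral.norm_integral_le_integral_norm_uIoc (f := f') (a := y) (b := x)
        (μ := MeasureTheory.volume)
      simp only [Real.norm_eq_abs] at h4
      refine le_trans h4 ?_
      rw [intervalIntegral.integral_of_le zero_le_one]
      refine MeasureTheory.setIntegral_mono_set
        ((hf'.abs.integrableOn_Icc (a := 0) (b := 1)).mono_set Set.Ioc_subset_Icc_self)
        (Filter.Eventually.of_forall fun _ => abs_nonneg _) ?_
      refine Filter.Eventually.of_forall ?_
      intro z hz
      exact ⟨lt_of_le_of_lt (le_min hy.1 hx.1) hz.1, hz.2.trans (max_le hy.2 hx.2)⟩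
    have h3 := abs_sub_abs_le_abs_sub (f x) (f y)
    linarith
  have hm := intervalIntegral.integral_mono_on (μ := MeasureTheory.volume) (zero_le_one' ℝ)
    (f := fun _ => |f x|) (g := fun y => |f y| + J) intervalIntegrable_const
    ((hf.abs.add continuous_const).intervalIntegrable _ _) key
  rw [intervalIntegral.integral_add (hf.abs.intervalIntegrable _ _) intervalIntegrable_const] at hm
  simpa using hm

lemma mk_Sol {a p : ℝ} {w wx wt wxx wxt wtt c cx ct : ℝ → ℝ → ℝ}
    (hw : C1 w wx wt) (hwx : C1 wx wxx wxt) (hwt : C1 wt wxt wtt) (hc : C1 c cx ct)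
    (pde : ∀ x ∈ Set.Ioo (0:ℝ) 1, ∀ t > (0:ℝ),
          deriv (deriv (w x)) t
            - a ^ 2 * deriv (fun y => deriv (fun z => w z t) y) x
            + c x t * w x t = 0)
    (bc0 : ∀ t > (0:ℝ), w 0 t = p * (deriv (w 0) t + a * deriv (fun y => w y t) 0))
    (bc1 : ∀ t > (0:ℝ), deriv (w 1) t + a * deriv (fun y => w y t) 1 = 0) :
    Sol a p w wx wt wxx wxt wtt (fun x t => -1 * (c x t * w x t))
      (fun x t => -1 * (cx x t * w x t + c x t * wx x t))
      (fun x t => -1 * (ct x t * w x t + c x t * wt x t)) where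
  hw := hw
  hwx := hwx
  hwt := hwt
  hF := (hc.mul hw).smul (-1)
  pde := by
    have hcl : IsClosed {q : ℝ × ℝ | wtt q.1 q.2 - a ^ 2 * wxx q.1 q.2
        = -1 * (c q.1 q.2 * w q.1 q.2)} :=
      isClosed_eq (hwt.ct.sub (hwx.cx.const_mul _)) ((hc.cont.mul hw.cont).const_mul _)
    have hsub : (Set.Ioo (0:ℝ) 1) ×ˢ (Set.Ioi (0:ℝ)) ⊆ {q : ℝ × ℝ |
        wtt q.1 q.2 - a ^ 2 * wxx q.1 q.2 = -1 * (c q.1 q.2 * w q.1 q.2)} := by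
      rintro ⟨x, t⟩ ⟨hx, ht⟩
      have h := pde x hx t ht
      have e1 : deriv (w x) = wt x := funext fun s => (hw.dt x s).deriv
      have e2 : (fun y => deriv (fun z => w z t) y) = fun y => wx y t :=
        funext fun y => (hw.dx y t).deriv
      rw [e1, e2, (hwt.dt x t).deriv, (hwx.dx x t).deriv] at h
      show wtt x t - a ^ 2 * wxx x t = -1 * (c x t * w x t)
      linarith
    have := closure_minimal hsub hcl
    rw [closure_prod_eq, closure_Ioo (by norm_num), closure_Ioi] at this
    intro x hx t ht
    exact this (show (x, t) ∈ _ from ⟨hx, ht⟩)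
  bc0 := by
    have pc : Continuous (fun t : ℝ => ((0:ℝ), t)) := by fun_prop
    have hcl : IsClosed {t : ℝ | w 0 t = p * (wt 0 t + a * wx 0 t)} :=
      isClosed_eq (hw.cont.comp pc)
        (((hw.ct.comp pc).add ((hw.cx.comp pc).const_mul a)).const_mul p)
    have hsub : Set.Ioi (0:ℝ) ⊆ {t : ℝ | w 0 t = p * (wt 0 t + a * wx 0 t)} := by
      intro t ht
      have h := bc0 t ht
      rwa [(hw.dt 0 t).deriv, (hw.dx 0 t).deriv] at h
    have := closure_minimal hsub hcl
    rw [closure_Ioi] at this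
    exact fun t ht => this ht
  bc1 := by
    have pc : Continuous (fun t : ℝ => ((1:ℝ), t)) := by fun_prop
    have hcl : IsClosed {t : ℝ | wt 1 t + a * wx 1 t = 0} :=
      isClosed_eq ((hw.ct.comp pc).add ((hw.cx.comp pc).const_mul a)) continuous_const
    have hsub : Set.Ioi (0:ℝ) ⊆ {t : ℝ | wt 1 t + a * wx 1 t = 0} := by
      intro t ht
      have h := bc1 t ht
      rwa [(hw.dt 1 t).deriv, (hw.dx 1 t).deriv] at h
    have := closure_minimal hsub hcl
    rw [closure_Ioi] at this
    exact fun t ht => this ht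

end PW

set_option maxHeartbeats 2000000 in
/-- Corollary 1 of the paper, for classical solutions.
Let `a > 0`, `p ∈ ℝ` and `T = 6/a`. For every `γ > 0` there exist `ε > 0` and `M₂ > 0`
such that for every `C²` coefficient `c` with all partial derivatives up to order 2
bounded by `ε`, and every `C²` solution `w` of the perturbed wave problem, for all
`α + β ≤ 2` and `t > T`,
`sup_x |∂ₓ^α ∂ₜ^β w(x,t)| ≤ M₂ e^{−γt} max(‖w(·,0)‖_{H¹}, ‖wₜ(·,0)‖_{L²})`. -/
theorem perturbed_wave_C2_exponential_decay
    (a p : ℝ) (ha : 0 < a) (T : ℝ) (hT : T = 6 / a) :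
    ∀ γ > (0:ℝ), ∃ ε > (0:ℝ), ∃ M₂ > (0:ℝ),
      ∀ c : ℝ → ℝ → ℝ,
        ContDiff ℝ 2 (fun q : ℝ × ℝ => c q.1 q.2) →
        (∀ k : ℕ, k ≤ 2 → ∀ q : ℝ × ℝ,
          ‖iteratedFDeriv ℝ k (fun q : ℝ × ℝ => c q.1 q.2) q‖ ≤ ε) →
      ∀ w : ℝ → ℝ → ℝ,
        ContDiff ℝ 2 (fun q : ℝ × ℝ => w q.1 q.2) →
        -- the perturbed wave equation ∂ₜ²w − a²∂ₓ²w + c·w = 0 on (0,1)×(0,∞)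
        (∀ x ∈ Set.Ioo (0:ℝ) 1, ∀ t > (0:ℝ),
          deriv (deriv (w x)) t
            - a ^ 2 * deriv (fun y => deriv (fun z => w z t) y) x
            + c x t * w x t = 0) →
        -- boundary condition at x = 0 : w(0,t) = p (wₜ + a wₓ)(0,t)
        (∀ t > (0:ℝ),
          w 0 t = p * (deriv (w 0) t + a * deriv (fun y => w y t) 0)) →
        -- boundary condition at x = 1 : (wₜ + a wₓ)(1,t) = 0
        (∀ t > (0:ℝ),
          deriv (w 1) t + a * deriv (fun y => w y t) 1 = 0) →
      ∀ α β : ℕ, α + β ≤ 2 → ∀ t > T, ∀ x ∈ Set.Icc (0:ℝ) 1,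
        |pdxt w α β x t| ≤
          M₂ * Real.exp (-γ * t) *
            max (Real.sqrt (∫ x in (0:ℝ)..1,
                  ((w x 0) ^ 2 + (deriv (fun y => w y 0) x) ^ 2)))
                (Real.sqrt (∫ x in (0:ℝ)..1, (deriv (w x) 0) ^ 2)) := by
  intro γ hγ
  have h1p : 0 < 1 / a := by positivity
  have hC2 : 0 < (|p| + 1 / a) / a := by positivity
  set C2 := (|p| + 1 / a) / a with hC2def
  set E := Real.exp (-(γ * (2 / a))) with hE
  have hE0 : 0 < E := Real.exp_pos _
  set kM := 2 * ((2 + (1 + a) / (2 * a)) / a + |p| * ((1 + a) / (2 * a))) with hkM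
  set k1 := (|p| + 1 / a) * Real.exp (γ * (4 / a)) * (1 + Real.exp (γ * (1 / a)) / a)
        + Real.exp (γ * (3 / a)) with hk1
  have hKg : 0 < PW.Kg a p := PW.Kg_pos ha
  set k2 := (2 + a) * Real.exp (γ * (2 / a)) * PW.Kg a p with hk2
  set k3 := (4 + 2 * a) * Real.exp (γ * (2 / a)) * PW.Kg a p with hk3
  have hkM0 : 0 < kM := by positivity
  have hk10 : 0 < k1 := by positivity
  have hk20 : 0 < k2 := by positivity
  have hk30 : 0 < k3 := by positivity
  clear_value kM k1 k2 k3
  refine ⟨min 1 (min (1 / 2) E / C2), by positivity,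
    (kM * k1) * (1 + k2 + (1 + k2) * k3 + ((1 + k2) * k3 + 1) / a ^ 2), by positivity, ?_⟩
  intro c hc hcb w hw pde bc0 bc1
  set ε := min 1 (min (1 / 2) E / C2) with hε
  have hε0 : 0 ≤ ε := by positivity
  have hε1 : ε ≤ 1 := min_le_left _ _
  have hεC : ε * C2 ≤ min (1 / 2) E := by
    have : ε ≤ min (1 / 2) E / C2 := min_le_right _ _
    rwa [le_div_iff₀ hC2] at this
  have hsmall : ε * C2 ≤ 1 / 2 := hεC.trans (min_le_left _ _)
  have hκ : ε * C2 ≤ E := hεC.trans (min_le_right _ _)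
  obtain ⟨cx, ct, cxx, cxt, ctt, hc0, hcx, hct, hcbd⟩ := PW.C2_data c hc
  replace hcbd := hcbd ε hcb
  obtain ⟨wx, wt, wxx, wxt, wtt, hw0, hwx, hwt, -⟩ := PW.C2_data w hw
  have S := PW.mk_Sol hw0 hwx hwt hc0 pde bc0 bc1
  have ew : ∀ x t, deriv (w x) t = wt x t := fun x t => (hw0.dt x t).deriv
  have ex : ∀ x t, deriv (fun y => w y t) x = wx x t := fun x t => (hw0.dx x t).deriv
  simp only [ew, ex]
  set D := max (Real.sqrt (∫ x in (0:ℝ)..1, ((w x 0) ^ 2 + (wx x 0) ^ 2)))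
    (Real.sqrt (∫ x in (0:ℝ)..1, (wt x 0) ^ 2)) with hD
  have hD0 : 0 ≤ D := le_max_of_le_left (Real.sqrt_nonneg _)
  have pc : Continuous (fun x : ℝ => (x, (0:ℝ))) := by fun_prop
  have cw : Continuous (fun x => w x 0) := hw0.cont.comp pc
  have cwx : Continuous (fun x => wx x 0) := hw0.cx.comp pc
  have cwt : Continuous (fun x => wt x 0) := hw0.ct.comp pc
  have d1 : ∫ x in (0:ℝ)..1, |w x 0| ≤ D := by
    refine (PW.L1_le_L2 cw).trans (le_trans (Real.sqrt_le_sqrt ?_) (le_max_left _ _))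
    exact intervalIntegral.integral_mono_on zero_le_one ((cw.pow 2).intervalIntegrable _ _)
      (((cw.pow 2).add (cwx.pow 2)).intervalIntegrable _ _)
      (fun x _ => le_add_of_nonneg_right (sq_nonneg _))
  have d2 : ∫ x in (0:ℝ)..1, |wx x 0| ≤ D := by
    refine (PW.L1_le_L2 cwx).trans (le_trans (Real.sqrt_le_sqrt ?_) (le_max_left _ _))
    exact intervalIntegral.integral_mono_on zero_le_one ((cwx.pow 2).intervalIntegrable _ _)
      (((cw.pow 2).add (cwx.pow 2)).intervalIntegrable _ _)
      (fun x _ => le_add_of_nonneg_left (sq_nonneg _))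
  have d3 : ∫ x in (0:ℝ)..1, |wt x 0| ≤ D := (PW.L1_le_L2 cwt).trans (le_max_right _ _)
  have hW0 : ∀ x ∈ Set.Icc (0:ℝ) 1, |w x 0| ≤ 2 * D := by
    intro x hx
    have := PW.sup_le_W11 (f := fun y => w y 0) (fun y => hw0.dx y 0) cwx hx
    linarith
  obtain ⟨U1, hU1⟩ : ∃ U1, U1 = ∫ y in (0:ℝ)..1, |wt y 0 + a * wx y 0| := ⟨_, rfl⟩
  have hU1le : U1 ≤ (1 + a) * D := by
    have : U1 ≤ ∫ y in (0:ℝ)..1, (|wt y 0| + a * |wx y 0|) := by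
      rw [hU1]
      refine intervalIntegral.integral_mono_on zero_le_one
        ((cwt.add (cwx.const_mul a)).abs.intervalIntegrable _ _)
        ((cwt.abs.add (cwx.abs.const_mul a)).intervalIntegrable _ _) ?_
      intro y _
      refine (abs_add_le _ _).trans ?_
      rw [abs_mul, abs_of_pos ha]
    rw [intervalIntegral.integral_add (cwt.abs.intervalIntegrable _ _)
      ((cwx.abs.const_mul a).intervalIntegrable _ _), intervalIntegral.integral_const_mul] at this
    have h5 := mul_le_mul_of_nonneg_left d2 ha.le
    linarith
  have hF : ∀ x ∈ Set.Icc (0:ℝ) 1, ∀ t ≥ (0:ℝ), |-1 * (c x t * w x t)| ≤ ε * |w x t| := by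
    intro x _ t _
    rw [neg_one_mul, abs_neg, abs_mul]
    gcongr
    exact (hcbd x t).1
  obtain ⟨M, hM⟩ : ∃ M, M = 2 * ((2 * D + U1 / (2 * a)) / a + |p| * (U1 / (2 * a))) := ⟨_, rfl⟩
  obtain ⟨hM0, hMu, hMw⟩ := S.init_bound ha hε0 hF hW0 hU1 hsmall hM
  have hMle : M ≤ kM * D := by
    have e : kM * D = 2 * ((2 * D + ((1 + a) * D) / (2 * a)) / a
        + |p| * (((1 + a) * D) / (2 * a))) := by rw [hkM]; ring
    rw [hM, e]
    gcongr
  have hdec := S.decay_wu ha hε0 hε1 hγ hM0 hF hMu hMw hκ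
  rw [← hk1] at hdec
  obtain ⟨N, hN⟩ : ∃ N, N = M * k1 := ⟨_, rfl⟩
  rw [← hN] at hdec
  have hN0 : 0 ≤ N := by rw [hN]; positivity
  have hNle : N ≤ kM * k1 * D := by
    rw [hN]
    calc M * k1 ≤ (kM * D) * k1 := by gcongr
      _ = _ := by ring
  have hfirst := S.first ha hγ (fun x t => ⟨(hcbd x t).1.trans hε1, (hcbd x t).2.1.trans hε1,
    (hcbd x t).2.2.1.trans hε1⟩) hdec
  rw [← hk2] at hfirst
  have h24 : 2 / a ≤ 4 / a := by gcongr; norm_num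
  have h46 : 4 / a ≤ 6 / a := by gcongr; norm_num
  have hsecond := S.second (N := N * (1 + k2)) ha hγ hc0 hcx hct
    (fun x t => ⟨(hcbd x t).1.trans hε1, (hcbd x t).2.1.trans hε1,
    (hcbd x t).2.2.1.trans hε1, (hcbd x t).2.2.2.2.1.trans hε1, (hcbd x t).2.2.2.2.2.trans hε1⟩)
    (by
      intro x hx t ht
      obtain ⟨b1, b2⟩ := hdec x hx t (h24.trans ht)
      obtain ⟨b3, b4, b5⟩ := hfirst x hx t ht
      have q1 : N * Real.exp (-γ * t) ≤ N * (1 + k2) * Real.exp (-γ * t) := by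
        gcongr
        exact le_mul_of_one_le_right hN0 (by linarith)
      have q2 : N * k2 * Real.exp (-γ * t) ≤ N * (1 + k2) * Real.exp (-γ * t) := by
        gcongr
        linarith
      exact ⟨b1.trans q1, b2.trans q1, b3.trans q2, b5.trans q2⟩)
  rw [← hk3] at hsecond
  intro α β hαβ t ht x hx
  rw [hT] at ht
  obtain ⟨b1, -⟩ := hdec x hx t (by linarith)
  obtain ⟨b3, b4, -⟩ := hfirst x hx t (by linarith)
  obtain ⟨b5, b6⟩ := hsecond x hx t (by linarith)
  have b7 : |wxx x t| ≤ N * (((1 + k2) * k3 + 1) / a ^ 2) * Real.exp (-γ * t) := by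
    have h1 := S.pde x hx t (le_trans (by positivity) ht.le)
    have h2 : a ^ 2 * wxx x t = wtt x t + c x t * w x t := by linarith
    have h3 : |c x t * w x t| ≤ 1 * (N * Real.exp (-γ * t)) := by
      rw [abs_mul]
      gcongr
      exact (hcbd x t).1.trans hε1
    have h4 : |a ^ 2 * wxx x t| ≤ _ := h2 ▸ (abs_add_le _ _).trans (add_le_add b5 h3)
    rw [abs_mul, abs_of_pos (by positivity : 0 < a ^ 2)] at h4
    rw [show N * (((1 + k2) * k3 + 1) / a ^ 2) * Real.exp (-γ * t)
      = (N * (1 + k2) * k3 * Real.exp (-γ * t) + 1 * (N * Real.exp (-γ * t))) / a ^ 2 by ring,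
      le_div_iff₀ (by positivity)]
    linarith
  have hEt : 0 < Real.exp (-γ * t) := Real.exp_pos _
  have fin : ∀ (v q : ℝ), 0 ≤ q → q ≤ 1 + k2 + (1 + k2) * k3 + ((1 + k2) * k3 + 1) / a ^ 2 →
      |v| ≤ N * q * Real.exp (-γ * t) →
      |v| ≤ (kM * k1) * (1 + k2 + (1 + k2) * k3 + ((1 + k2) * k3 + 1) / a ^ 2)
        * Real.exp (-γ * t) * D := by
    intro v q hq0 hq hv
    refine hv.trans ?_
    calc N * q * Real.exp (-γ * t)
        ≤ (kM * k1 * D) * (1 + k2 + (1 + k2) * k3 + ((1 + k2) * k3 + 1) / a ^ 2)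
          * Real.exp (-γ * t) := by gcongr
      _ = _ := by ring
  have p1 : 0 ≤ (1 + k2) * k3 := by positivity
  have p2 : 0 ≤ ((1 + k2) * k3 + 1) / a ^ 2 := by positivity
  have ewf : ∀ x, deriv (w x) = wt x := fun x => funext (ew x)
  have exf : (fun y => deriv (fun z => w z t) y) = fun y => wx y t := funext fun y => ex y t
  have hcases : (α = 0 ∧ β = 0) ∨ (α = 1 ∧ β = 0) ∨ (α = 0 ∧ β = 1) ∨ (α = 2 ∧ β = 0) ∨
      (α = 1 ∧ β = 1) ∨ (α = 0 ∧ β = 2) := by omega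
  rcases hcases with ⟨rfl, rfl⟩ | ⟨rfl, rfl⟩ | ⟨rfl, rfl⟩ | ⟨rfl, rfl⟩ | ⟨rfl, rfl⟩ | ⟨rfl, rfl⟩
  · refine fin _ 1 zero_le_one (by linarith) ?_
    simpa [pdxt] using b1
  · refine fin _ k2 hk20.le (by linarith) ?_
    have : pdxt w 1 0 x t = wx x t := by
      simp only [pdxt, iteratedDeriv_zero, iteratedDeriv_one]
      exact ex x t
    rw [this]; exact b4
  · refine fin _ k2 hk20.le (by linarith) ?_
    have : pdxt w 0 1 x t = wt x t := by
      simp only [pdxt, iteratedDeriv_zero, iteratedDeriv_one]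
      exact ew x t
    rw [this]; exact b3
  · refine fin _ _ p2 (by linarith) ?_
    have : pdxt w 2 0 x t = wxx x t := by
      simp only [pdxt, iteratedDeriv_zero, iteratedDeriv_succ]
      have : deriv (fun y => w y t) = fun y => wx y t := funext fun y => ex y t
      rw [this]
      exact (hwx.dx x t).deriv
    rw [this]; exact b7
  · refine fin _ _ p1 (by linarith) ?_
    have : pdxt w 1 1 x t = wxt x t := by
      simp only [pdxt, iteratedDeriv_one, ew]
      exact (hwt.dx x t).deriv
    rw [this, ← mul_assoc]; exact b6
  · refine fin _ _ p1 (by linarith) ?_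
    have : pdxt w 0 2 x t = wtt x t := by
      simp only [pdxt, iteratedDeriv_zero, iteratedDeriv_succ, ewf]
      exact (hwt.dt x t).deriv
    rw [this, ← mul_assoc]; exact b5
end

section
/- Let a > 0 and q ∈ ℝ be fixed. For every γ > 0 there exist ε > 0 and M > 0 such that the following holds: for every continuous function c : [0,1]×[0,∞) → ℝ with |c(x,t)| < ε for all (x,t), and every twice continuously differentiable function w : [0,1]×[0,∞) → ℝ satisfying ∂²_t w − a² ∂²_x w + c·w = 0 on (0,1)×(0,∞), together with the boundary conditions w(1,t) = q·(∂_t w − a ∂_x w)(1,t) and (∂_t w − a ∂_x w)(0,t) = 0 for all t > 0, one has for all t > 0: (∫_0^1 w(x,t)² dx)^{1/2} ≤ M e^{−γ t} · max{ (∫_0^1 [w(x,0)² + (∂_x w(x,0))²] dx)^{1/2}, (∫_0^1 (∂_t w(x,0))² dx)^{1/2} }. -/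
open Set Filter Topology MeasureTheory in
lemma pw_param (F F' : ℝ → ℝ → ℝ) (hF : Continuous (fun s : ℝ × ℝ => F s.1 s.2))
    (hF' : Continuous (fun s : ℝ × ℝ => F' s.1 s.2))
    (h : ∀ x t, HasDerivAt (F x) (F' x t) t) (t : ℝ) :
    HasDerivAt (fun t => ∫ x in (0:ℝ)..1, F x t) (∫ x in (0:ℝ)..1, F' x t) t := by
  obtain ⟨C, hC⟩ := (isCompact_Icc (a := (0:ℝ)) (b := 1)).prod
    (isCompact_Icc (a := t - 1) (b := t + 1)) |>.exists_bound_of_continuousOn hF'.continuousOn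
  have c1 : ∀ t, Continuous (fun x => F x t) := fun t =>
    hF.comp (continuous_id.prodMk continuous_const)
  have c2 : ∀ t, Continuous (fun x => F' x t) := fun t =>
    hF'.comp (continuous_id.prodMk continuous_const)
  refine (intervalIntegral.hasDerivAt_integral_of_dominated_loc_of_deriv_le
    (F := fun t x => F x t) (F' := fun t x => F' x t) (bound := fun _ => C)
    (s := Icc (t - 1) (t + 1)) (Icc_mem_nhds (by linarith) (by linarith)) ?_ ?_ ?_ ?_ ?_ ?_).2
  · exact Eventually.of_forall fun t => (c1 t).aestronglyMeasurable
  · exact (c1 t).intervalIntegrable _ _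
  · exact (c2 t).aestronglyMeasurable
  · refine Eventually.of_forall fun x hx s hs => hC (x, s) ⟨?_, hs⟩
    rw [uIoc_of_le zero_le_one] at hx
    exact ⟨hx.1.le, hx.2⟩
  · exact intervalIntegrable_const
  · exact Eventually.of_forall fun x _ s _ => h x s

lemma pw_slice (f : ℝ × ℝ → ℝ) (hf : Differentiable ℝ f) (x t : ℝ) :
    HasDerivAt (fun y => f (y, t)) (fderiv ℝ f (x, t) (1, 0)) x ∧
    HasDerivAt (fun s => f (x, s)) (fderiv ℝ f (x, t) (0, 1)) t := by
  constructor
  · exact (hf (x, t)).hasFDerivAt.comp_hasDerivAt (f := fun y : ℝ => (y, t)) x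
      ((hasDerivAt_id x).prodMk (hasDerivAt_const x t))
  · exact (hf (x, t)).hasFDerivAt.comp_hasDerivAt (f := fun s : ℝ => (x, s)) t
      ((hasDerivAt_const t x).prodMk (hasDerivAt_id t))

lemma pw_reg (w : ℝ → ℝ → ℝ) (hw : ContDiff ℝ 2 (fun s : ℝ × ℝ => w s.1 s.2)) :
    ∃ p r l m n : ℝ → ℝ → ℝ,
      (∀ x t, HasDerivAt (fun y => w y t) (p x t) x) ∧ (∀ x t, HasDerivAt (w x) (r x t) t) ∧
      (∀ x t, HasDerivAt (fun y => p y t) (l x t) x) ∧ (∀ x t, HasDerivAt (p x) (m x t) t) ∧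
      (∀ x t, HasDerivAt (fun y => r y t) (m x t) x) ∧ (∀ x t, HasDerivAt (r x) (n x t) t) ∧
      Continuous (fun s : ℝ × ℝ => p s.1 s.2) ∧ Continuous (fun s : ℝ × ℝ => r s.1 s.2) ∧
      Continuous (fun s : ℝ × ℝ => l s.1 s.2) ∧ Continuous (fun s : ℝ × ℝ => m s.1 s.2) ∧
      Continuous (fun s : ℝ × ℝ => n s.1 s.2) := by
  set W : ℝ × ℝ → ℝ := fun s => w s.1 s.2 with hW
  have hd : ContDiff ℝ 1 (fderiv ℝ W) := hw.fderiv_right (by norm_num)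
  have hv : ∀ v, ContDiff ℝ 1 (fun s => fderiv ℝ W s v) := fun v => hd.clm_apply contDiff_const
  have hdd : ∀ v s u, fderiv ℝ (fun s => fderiv ℝ W s v) s u
      = fderiv ℝ (fderiv ℝ W) s u v := by
    intro v s u
    have h1 : HasFDerivAt (fderiv ℝ W) (fderiv ℝ (fderiv ℝ W) s) s :=
      (hd.differentiable (by norm_num) s).hasFDerivAt
    have := h1.clm_apply (hasFDerivAt_const v s)
    rw [this.fderiv]; simp
  have hc : ∀ v u, Continuous (fun s : ℝ × ℝ => fderiv ℝ (fun s => fderiv ℝ W s v) s u) :=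
    fun v u => ((hv v).continuous_fderiv (by norm_num)).clm_apply continuous_const
  have hWd := hw.differentiable (by norm_num)
  have hvd : ∀ v, Differentiable ℝ (fun s => fderiv ℝ W s v) :=
    fun v => (hv v).differentiable (by norm_num)
  have hsym : ∀ s, fderiv ℝ (fun s => fderiv ℝ W s (1, 0)) s (0, 1)
      = fderiv ℝ (fun s => fderiv ℝ W s (0, 1)) s (1, 0) := by
    intro s
    rw [hdd, hdd]
    exact (hw.contDiffAt.isSymmSndFDerivAt (by simp)) _ _
  refine ⟨fun x t => fderiv ℝ W (x, t) (1, 0), fun x t => fderiv ℝ W (x, t) (0, 1),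
    fun x t => fderiv ℝ (fun s => fderiv ℝ W s (1, 0)) (x, t) (1, 0),
    fun x t => fderiv ℝ (fun s => fderiv ℝ W s (1, 0)) (x, t) (0, 1),
    fun x t => fderiv ℝ (fun s => fderiv ℝ W s (0, 1)) (x, t) (0, 1),
    fun x t => (pw_slice W hWd x t).1, fun x t => (pw_slice W hWd x t).2,
    fun x t => (pw_slice _ (hvd (1, 0)) x t).1, fun x t => (pw_slice _ (hvd (1, 0)) x t).2,
    fun x t => ?_, fun x t => (pw_slice _ (hvd (0, 1)) x t).2,
    (hv _).continuous, (hv _).continuous, hc _ _, hc _ _, hc _ _⟩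
  simp only [hsym]
  exact (pw_slice _ (hvd (0, 1)) x t).1

lemma pw_ineq (a γ L K E E' c u w ux wx : ℝ) (hL : a * L = 2 * γ + 2)
    (hE : 0 ≤ E) (hEE : E ≤ E') (hEK : E' ≤ K * E) (hK : 1 ≤ K) (hc : |c| * K ≤ 1) :
    K * E * (2 * u * (-a * ux - c * w)) + E' * (2 * w * (a * wx + u)) ≤
      (-(a * K) * (-L * E * u ^ 2 + E * (2 * u * ux))
        + a * (L * E' * w ^ 2 + E' * (2 * w * wx)))
      - 2 * γ * (K * E * u ^ 2 + E' * w ^ 2) := by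
  have hE' : 0 ≤ E' := hE.trans hEE
  have h1 : E' * (2 * u * w) ≤ E' * w ^ 2 + K * E * u ^ 2 := by
    have := mul_le_mul_of_nonneg_right hEK (sq_nonneg u)
    nlinarith [mul_nonneg hE' (sq_nonneg (u - w))]
  have h2 : -(c * K) * (2 * u * w) ≤ u ^ 2 + w ^ 2 := by
    have h3 : |c * K| ≤ 1 := by rwa [abs_mul, abs_of_nonneg (by linarith : (0:ℝ) ≤ K)]
    obtain ⟨h4, h5⟩ := abs_le.1 h3
    nlinarith [mul_nonneg (sub_nonneg.2 h5) (sq_nonneg (u - w)),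
      mul_nonneg (by linarith : 0 ≤ 1 + c * K) (sq_nonneg (u + w)),
      sq_nonneg (u - w), sq_nonneg (u + w)]
  have h6 : E * (-(c * K) * (2 * u * w)) ≤ K * E * u ^ 2 + E' * w ^ 2 := by
    have := mul_le_mul_of_nonneg_left h2 hE
    have h7 := mul_le_mul_of_nonneg_right hEE (sq_nonneg w)
    have h8 := mul_le_mul_of_nonneg_right hK (mul_nonneg hE (sq_nonneg u))
    nlinarith
  have e : K * E * (2 * u * (-a * ux - c * w)) + E' * (2 * w * (a * wx + u))
      - ((-(a * K) * (-L * E * u ^ 2 + E * (2 * u * ux))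
        + a * (L * E' * w ^ 2 + E' * (2 * w * wx))))
      = E * (-(c * K) * (2 * u * w)) + E' * (2 * u * w)
        - (a * L) * (K * E * u ^ 2 + E' * w ^ 2) := by ring
  rw [hL] at e
  linarith

set_option maxHeartbeats 2000000 in

/-- Theorem 1 for the mirror boundary conditions (5), for classical
solutions. Let `a > 0` and `q ∈ ℝ`. For every `γ > 0` there exist `ε > 0` and `M > 0`
such that: for every continuous `c` with `|c| < ε` and every `C²` solution `w` of
`∂ₜ²w − a²∂ₓ²w + c·w = 0` with boundary conditions `w(1,t) = q·(wₜ − a wₓ)(1,t)` and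
`(wₜ − a wₓ)(0,t) = 0`, one has, for all `t > 0`,
`‖w(·,t)‖_{L²} ≤ M e^{−γt} max(‖w(·,0)‖_{H¹}, ‖wₜ(·,0)‖_{L²})`. -/
theorem perturbed_wave_mirror_L2_exponential_stability
    (a q : ℝ) (ha : 0 < a) :
    ∀ γ > (0:ℝ), ∃ ε > (0:ℝ), ∃ M > (0:ℝ),
      ∀ c : ℝ → ℝ → ℝ,
        Continuous (fun s : ℝ × ℝ => c s.1 s.2) →
        (∀ x ∈ Set.Icc (0:ℝ) 1, ∀ t ≥ (0:ℝ), |c x t| < ε) →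
      ∀ w : ℝ → ℝ → ℝ,
        ContDiff ℝ 2 (fun s : ℝ × ℝ => w s.1 s.2) →
        -- the perturbed wave equation ∂ₜ²w − a²∂ₓ²w + c·w = 0 on (0,1)×(0,∞)
        (∀ x ∈ Set.Ioo (0:ℝ) 1, ∀ t > (0:ℝ),
          deriv (deriv (w x)) t
            - a ^ 2 * deriv (fun y => deriv (fun z => w z t) y) x
            + c x t * w x t = 0) →
        -- boundary condition at x = 1 : w(1,t) = q (wₜ − a wₓ)(1,t)
        (∀ t > (0:ℝ),
          w 1 t = q * (deriv (w 1) t - a * deriv (fun y => w y t) 1)) →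
        -- boundary condition at x = 0 : (wₜ − a wₓ)(0,t) = 0
        (∀ t > (0:ℝ),
          deriv (w 0) t - a * deriv (fun y => w y t) 0 = 0) →
      ∀ t > (0:ℝ),
        Real.sqrt (∫ x in (0:ℝ)..1, (w x t) ^ 2) ≤
          M * Real.exp (-γ * t) *
            max (Real.sqrt (∫ x in (0:ℝ)..1,
                  ((w x 0) ^ 2 + (deriv (fun y => w y 0) x) ^ 2)))
                (Real.sqrt (∫ x in (0:ℝ)..1, (deriv (w x) 0) ^ 2)) := by
  intro γ hγ
  obtain ⟨L, hL⟩ : ∃ L : ℝ, a * L = 2 * γ + 2 := ⟨(2 * γ + 2) / a, by field_simp⟩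
  have hL0 : 0 < L := by
    by_contra h
    nlinarith [mul_nonneg ha.le (by linarith : 0 ≤ -L)]
  obtain ⟨K, hKdef⟩ : ∃ K : ℝ, K = (q ^ 2 + 1) * Real.exp (2 * L) := ⟨_, rfl⟩
  have hexp1 : 1 ≤ Real.exp (2 * L) := Real.one_le_exp (by linarith)
  have hK1 : 1 ≤ K := by rw [hKdef]; nlinarith [sq_nonneg q]
  have hKe : Real.exp (2 * L) ≤ K := by rw [hKdef]; nlinarith [sq_nonneg q]
  have hKq : q ^ 2 * Real.exp (2 * L) ≤ K := by rw [hKdef]; nlinarith [sq_nonneg q]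
  have hK0 : 0 < K := by linarith
  obtain ⟨C, hC⟩ : ∃ C : ℝ, C = 2 * (2 * K * (1 + a ^ 2) + Real.exp L) := ⟨_, rfl⟩
  have hC0 : 0 < C := by rw [hC]; positivity
  refine ⟨1 / K, by positivity, Real.sqrt C, Real.sqrt_pos.2 hC0, ?_⟩
  intro c _ hcε w hw hpde hb1 hb0 t ht
  obtain ⟨p, r, l, m, n, hp, hr, hl, hm, hm', hn, cp, cr, cl, cm, cn⟩ := pw_reg w hw
  have cw : Continuous (fun s : ℝ × ℝ => w s.1 s.2) := hw.continuous
  have dp : ∀ t, (fun y => deriv (fun z => w z t) y) = fun y => p y t :=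
    fun t => funext fun y => (hp y t).deriv
  have dr : ∀ x, deriv (w x) = r x := fun x => funext fun t => (hr x t).deriv
  simp only [dp, dr, (hn _ _).deriv, (hl _ _).deriv, (hp _ _).deriv] at hpde hb1 hb0 ⊢
  -- the density and flux
  set F : ℝ → ℝ → ℝ := fun x t =>
    K * Real.exp (-L * x) * (r x t - a * p x t) ^ 2 + Real.exp (L * x) * (w x t) ^ 2 with hF
  set F' : ℝ → ℝ → ℝ := fun x t =>
    K * Real.exp (-L * x) * (2 * (r x t - a * p x t) * (n x t - a * m x t))
      + Real.exp (L * x) * (2 * w x t * r x t) with hF'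
  set G : ℝ → ℝ → ℝ := fun x t =>
    -(a * K) * (Real.exp (-L * x) * (r x t - a * p x t) ^ 2)
      + a * (Real.exp (L * x) * (w x t) ^ 2) with hG
  set G' : ℝ → ℝ → ℝ := fun x t =>
    -(a * K) * (-L * Real.exp (-L * x) * (r x t - a * p x t) ^ 2
        + Real.exp (-L * x) * (2 * (r x t - a * p x t) * (m x t - a * l x t)))
      + a * (L * Real.exp (L * x) * (w x t) ^ 2
        + Real.exp (L * x) * (2 * w x t * p x t)) with hG'
  have cF : Continuous (fun s : ℝ × ℝ => F s.1 s.2) := by simp only [hF]; fun_prop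
  have cF' : Continuous (fun s : ℝ × ℝ => F' s.1 s.2) := by simp only [hF']; fun_prop
  have cG' : Continuous (fun s : ℝ × ℝ => G' s.1 s.2) := by simp only [hG']; fun_prop
  have slice : ∀ {f : ℝ → ℝ → ℝ}, Continuous (fun s : ℝ × ℝ => f s.1 s.2) →
      ∀ t, Continuous (fun x => f x t) := fun h t =>
    h.comp (continuous_id.prodMk continuous_const)
  have dF : ∀ x t, HasDerivAt (F x) (F' x t) t := by
    intro x t
    have h1 := (((hn x t).sub ((hm x t).const_mul a)).pow 2).const_mul (K * Real.exp (-L * x))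
    have h2 := ((hr x t).pow 2).const_mul (Real.exp (L * x))
    refine (h1.add h2).congr_deriv ?_
    simp [hF']
  have dG : ∀ t x, HasDerivAt (fun y => G y t) (G' x t) x := by
    intro t x
    have e1 : HasDerivAt (fun y => Real.exp (-L * y)) (Real.exp (-L * x) * (-L * 1)) x :=
      ((hasDerivAt_id x).const_mul (-L)).exp
    have e2 : HasDerivAt (fun y => Real.exp (L * y)) (Real.exp (L * x) * (L * 1)) x :=
      ((hasDerivAt_id x).const_mul L).exp
    have h1 := (e1.mul (((hm' x t).sub ((hl x t).const_mul a)).pow 2)).const_mul (-(a * K))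
    have h2 := (e2.mul ((hp x t).pow 2)).const_mul a
    refine (h1.add h2).congr_deriv ?_
    simp [hG']
    ring
  set V : ℝ → ℝ := fun t => ∫ x in (0:ℝ)..1, F x t with hV
  have dV : ∀ t, HasDerivAt V (∫ x in (0:ℝ)..1, F' x t) t := pw_param F F' cF cF' dF
  have key : ∀ t > 0, (∫ x in (0:ℝ)..1, F' x t) ≤ -(2 * γ) * V t := by
    intro t ht
    have i1 : (∫ x in (0:ℝ)..1, G' x t) = G 1 t - G 0 t :=
      intervalIntegral.integral_eq_sub_of_hasDerivAt (fun x _ => dG t x)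
        ((slice cG' t).intervalIntegrable _ _)
    have i2 : G 1 t - G 0 t ≤ 0 := by
      have b1 := hb1 t ht
      have b0 := hb0 t ht
      simp only [hG, b0, b1]
      have e3 : Real.exp L = Real.exp (2 * L) * Real.exp (-L) := by
        rw [← Real.exp_add]; congr 1; ring
      have := mul_le_mul_of_nonneg_right hKq
        (mul_nonneg (mul_nonneg ha.le (Real.exp_pos (-L)).le)
          (sq_nonneg (r 1 t - a * p 1 t)))
      have h9 : 0 ≤ a * (w 0 t) ^ 2 := by positivity
      simp only [mul_one, mul_zero, Real.exp_zero]
      rw [e3]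
      nlinarith
    have i3 : (∫ x in (0:ℝ)..1, F' x t) ≤ ∫ x in (0:ℝ)..1, (G' x t - 2 * γ * F x t) := by
      refine intervalIntegral.integral_mono_on_of_le_Ioo zero_le_one
        ((slice cF' t).intervalIntegrable _ _)
        (((slice cG' t).sub ((slice cF t).const_mul _)).intervalIntegrable _ _) ?_
      intro x hx
      have hq := hpde x hx t ht
      have hcc := hcε x ⟨hx.1.le, hx.2.le⟩ t ht.le
      have hEK : Real.exp (L * x) ≤ K * Real.exp (-L * x) := by
        have e4 : Real.exp (L * x) = Real.exp (2 * L * x) * Real.exp (-L * x) := by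
          rw [← Real.exp_add]; congr 1; ring
        rw [e4]
        refine mul_le_mul_of_nonneg_right (le_trans ?_ hKe) (Real.exp_pos _).le
        exact Real.exp_le_exp.2 (by nlinarith [hx.2])
      have := pw_ineq a γ L K (Real.exp (-L * x)) (Real.exp (L * x)) (c x t)
        (r x t - a * p x t) (w x t) (m x t - a * l x t) (p x t) hL (Real.exp_pos _).le
        (Real.exp_le_exp.2 (by nlinarith [hx.1])) hEK hK1 ((lt_div_iff₀ hK0).1 hcc).le
      have e5 : n x t - a * m x t = -a * (m x t - a * l x t) - c x t * w x t := by
        linear_combination hq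
      simp only [hF', hG', hF]
      rw [e5]
      have e6 : a * p x t + (r x t - a * p x t) = r x t := by ring
      rw [e6] at this
      exact this
    rw [intervalIntegral.integral_sub ((slice cG' t).intervalIntegrable _ _)
      (((slice cF t).const_mul _).intervalIntegrable _ _),
      intervalIntegral.integral_const_mul, i1] at i3
    simp only [hV]
    linarith
  have decay : V t ≤ Real.exp (-(2 * γ) * t) * V 0 := by
    have dH : ∀ t, HasDerivAt (fun t => Real.exp (2 * γ * t) * V t)
        (Real.exp (2 * γ * t) * (2 * γ * 1) * V t
          + Real.exp (2 * γ * t) * ∫ x in (0:ℝ)..1, F' x t) t := fun t =>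
      (((hasDerivAt_id t).const_mul (2 * γ)).exp).mul (dV t)
    have anti : AntitoneOn (fun t => Real.exp (2 * γ * t) * V t) (Set.Ici 0) := by
      refine antitoneOn_of_deriv_nonpos (convex_Ici 0)
        (fun t _ => (dH t).continuousAt.continuousWithinAt)
        (fun t _ => (dH t).differentiableAt.differentiableWithinAt) ?_
      intro s hs
      rw [interior_Ici] at hs
      rw [(dH s).deriv]
      have := mul_le_mul_of_nonneg_left (key s hs) (Real.exp_pos (2 * γ * s)).le
      linarith
    have h1 := anti (Set.mem_Ici.2 le_rfl) (Set.mem_Ici.2 ht.le) ht.le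
    simp only [mul_zero, Real.exp_zero, one_mul] at h1
    have h2 := mul_le_mul_of_nonneg_left h1 (Real.exp_pos (-(2 * γ) * t)).le
    rw [← mul_assoc, ← Real.exp_add] at h2
    simpa using h2
  have cw2 : ∀ t, Continuous (fun x => (w x t) ^ 2) := fun t => (slice cw t).pow 2
  have lower : (∫ x in (0:ℝ)..1, (w x t) ^ 2) ≤ V t := by
    refine intervalIntegral.integral_mono_on zero_le_one ((cw2 t).intervalIntegrable _ _)
      ((slice cF t).intervalIntegrable _ _) ?_
    intro x hx
    have h1 : 1 ≤ Real.exp (L * x) := Real.one_le_exp (mul_nonneg hL0.le hx.1)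
    have h2 : 0 ≤ K * Real.exp (-L * x) * (r x t - a * p x t) ^ 2 := by positivity
    simp only [hF]
    nlinarith [sq_nonneg (w x t)]
  set I := ∫ x in (0:ℝ)..1, ((w x 0) ^ 2 + (p x 0) ^ 2) with hI
  set J := ∫ x in (0:ℝ)..1, (r x 0) ^ 2 with hJ
  have cI : Continuous (fun x => (w x 0) ^ 2 + (p x 0) ^ 2) :=
    (cw2 0).add ((slice cp 0).pow 2)
  have cJ : Continuous (fun x => (r x 0) ^ 2) := (slice cr 0).pow 2
  have upper : V 0 ≤ C / 2 * (I + J) := by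
    rw [hI, hJ, ← intervalIntegral.integral_add (cI.intervalIntegrable _ _)
      (cJ.intervalIntegrable _ _), ← intervalIntegral.integral_const_mul]
    refine intervalIntegral.integral_mono_on zero_le_one
      ((slice cF 0).intervalIntegrable _ _)
      (((cI.add cJ).const_mul _).intervalIntegrable _ _) ?_
    intro x hx
    have h1 : Real.exp (L * x) ≤ Real.exp L := Real.exp_le_exp.2 (by nlinarith [hx.2])
    have h2 : Real.exp (-L * x) ≤ 1 := Real.exp_le_one_iff.2 (by nlinarith [hx.1])
    have h3 : (r x 0 - a * p x 0) ^ 2 ≤ 2 * (1 + a ^ 2) * ((p x 0) ^ 2 + (r x 0) ^ 2) := by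
      nlinarith [sq_nonneg (r x 0 + a * p x 0), sq_nonneg (a * r x 0), sq_nonneg (p x 0)]
    have h4 : K * Real.exp (-L * x) * (r x 0 - a * p x 0) ^ 2
        ≤ K * 1 * (2 * (1 + a ^ 2) * ((p x 0) ^ 2 + (r x 0) ^ 2)) := by gcongr
    have h5 : Real.exp (L * x) * (w x 0) ^ 2 ≤ Real.exp L * (w x 0) ^ 2 := by gcongr
    have h6 : 0 ≤ Real.exp L * ((p x 0) ^ 2 + (r x 0) ^ 2) := by positivity
    have h7 : 0 ≤ K * (1 + a ^ 2) * (w x 0) ^ 2 := by positivity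
    simp only [hF, hC]
    nlinarith
  have hI0 : 0 ≤ I := intervalIntegral.integral_nonneg zero_le_one fun x _ => by positivity
  have hJ0 : 0 ≤ J := intervalIntegral.integral_nonneg zero_le_one fun x _ => by positivity
  set m0 := max (Real.sqrt I) (Real.sqrt J) with hm0
  have hm00 : 0 ≤ m0 := le_max_of_le_left (Real.sqrt_nonneg _)
  have hI2 : I ≤ m0 ^ 2 := (Real.sqrt_le_left hm00).1 (le_max_left _ _)
  have hJ2 : J ≤ m0 ^ 2 := (Real.sqrt_le_left hm00).1 (le_max_right _ _)
  refine Real.sqrt_le_iff.2 ⟨by positivity, ?_⟩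
  have hexp : Real.exp (-γ * t) ^ 2 = Real.exp (-(2 * γ) * t) := by
    rw [← Real.exp_nat_mul]; congr 1; push_cast; ring
  rw [mul_pow, mul_pow, Real.sq_sqrt hC0.le, hexp]
  have hfin : V 0 ≤ C * m0 ^ 2 := by nlinarith
  calc _ ≤ V t := lower
    _ ≤ _ := decay
    _ ≤ Real.exp (-(2 * γ) * t) * (C * m0 ^ 2) := by gcongr
    _ = _ := by ring
end
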